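/- For every r > 0 there exists a constant C = C(r) > 0, independent of f, x, n and d, with the following property. Let d ≥ 3 be an integer, x ∈ S^d, δ > 0, and f ∈ C(S^d) be such that ‖f‖ := ‖f‖_∞ + min_{P ∈ Π_r^d} max_{y ∈ B(x,δ)} |f(y)−P(y)|/|x−y|_{d+1}^r < ∞. Let n be an integer with nd ≥ (d+r+1)² and δ_n := √(16 r (log n)/n) ≤ δ, and let ν ∈ MZQ(d; 2(d+2)n). Then | f(x) − ∫_{B(x,δ_n)} Φ_{d;n,r}(x·y) f(y) dν(y) | ≤ C · d^{1/6} · dim(Π_{2(d+2)n}^d)^{−r/d} · ‖f‖ · |||ν|||_{d;2(d+2)n}; that is, f(x) is approximated with this accuracy using only the values of f on the spherical cap B(x, δ_n). -/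

import Mathlib

noncomputable section

open MeasureTheory Real Set
open scoped RealInnerProductSpace

/-- Value at `x` of the orthonormalized Jacobi polynomial `p_n^{(α,β)}`. -/
def jacobiP (α β : ℝ) (n : ℕ) (x : ℝ) : ℝ :=
  Real.sqrt ((2 * (n : ℝ) + α + β + 1) / 2 ^ (α + β + 1) *
      (Real.Gamma ((n : ℝ) + α + β + 1) * (n.factorial : ℝ) /
        (Real.Gamma ((n : ℝ) + α + 1) * Real.Gamma ((n : ℝ) + β + 1)))) *
    (Real.Gamma (α + n + 1) / ((n.factorial : ℝ) * Real.Gamma (α + β + n + 1))) *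
    ∑ m ∈ Finset.range (n + 1),
      (n.choose m : ℝ) * (Real.Gamma (α + β + n + m + 1) / Real.Gamma (α + m + 1)) *
        ((x - 1) / 2) ^ m

/-- The kernel `K_n^{(α,β)}(x) = Σ_{ℓ<n} p_ℓ^{(α,β)}(1) p_ℓ^{(α,β)}(x)`. -/
def jacobiK (α β : ℝ) (n : ℕ) (x : ℝ) : ℝ :=
  ∑ ℓ ∈ Finset.range n, jacobiP α β ℓ 1 * jacobiP α β ℓ x

/-- The unit sphere `S^d ⊂ ℝ^{d+1}`. -/
abbrev Sph (d : ℕ) := Metric.sphere (0 : EuclideanSpace ℝ (Fin (d + 1))) 1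

/-- The rotation invariant Riemannian volume probability measure `μ_d^*` on `S^d`. -/
def sphMeasure (d : ℕ) : Measure (Sph d) :=
  ((volume : Measure (EuclideanSpace ℝ (Fin (d + 1)))).toSphere Set.univ)⁻¹ •
    (volume : Measure (EuclideanSpace ℝ (Fin (d + 1)))).toSphere

/-- `f : S^d → ℝ` is the restriction to the sphere of an algebraic polynomial in `d+1`
variables of total degree `< n`, i.e. `f ∈ Π_n^d`. -/
def IsSphPoly (d : ℕ) (n : ℝ) (f : Sph d → ℝ) : Prop :=
  ∃ p : MvPolynomial (Fin (d + 1)) ℝ, (p.totalDegree : ℝ) < n ∧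
    ∀ y : Sph d, f y = MvPolynomial.eval (fun i => (y : EuclideanSpace ℝ (Fin (d + 1))) i) p

/-- Integral of `f` with respect to a signed measure (via the Jordan decomposition). -/
def sInt {X : Type*} [MeasurableSpace X] (ν : SignedMeasure X) (f : X → ℝ) : ℝ :=
  (∫ x, f x ∂ν.toJordanDecomposition.posPart) - ∫ x, f x ∂ν.toJordanDecomposition.negPart

/-- Integral of `f` over a set `s` with respect to a signed measure. -/
def sIntOn {X : Type*} [MeasurableSpace X] (ν : SignedMeasure X) (s : Set X) (f : X → ℝ) : ℝ :=
  (∫ x in s, f x ∂ν.toJordanDecomposition.posPart) -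
    ∫ x in s, f x ∂ν.toJordanDecomposition.negPart

/-- `ν` is a quadrature measure of order `n` on `S^d`. -/
def IsQuadrature (d : ℕ) (n : ℝ) (ν : SignedMeasure (Sph d)) : Prop :=
  ∀ f : Sph d → ℝ, IsSphPoly d n f → sInt ν f = ∫ y, f y ∂sphMeasure d

/-- `ν` satisfies the Marcinkiewicz-Zygmund inequality of order `n` with constant `c`;
`ν ∈ MZ(d;n)` means this holds for some `c`, and `|||ν|||_{d;n}` is the least such `c`. -/
def IsMZ (d : ℕ) (n : ℝ) (ν : SignedMeasure (Sph d)) (c : ℝ) : Prop :=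
  ∀ f : Sph d → ℝ, IsSphPoly d (n / 2) f →
    (∫ y, (f y) ^ 2 ∂ν.totalVariation) ≤ c * ∫ y, (f y) ^ 2 ∂sphMeasure d

/-- `ω_d`, the volume of `S^d`. -/
def omegaS (d : ℕ) : ℝ := 2 * Real.pi ^ (((d : ℝ) + 1) / 2) / Real.Gamma (((d : ℝ) + 1) / 2)

/-- The reproducing kernel `K_{d;n}` of `Π_n^d`. -/
def sphK (d n : ℕ) (x : ℝ) : ℝ :=
  (omegaS d / omegaS (d - 1)) * jacobiK ((d : ℝ) / 2 - 1) ((d : ℝ) / 2 - 1) n x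

/-- The kernel `Φ̃_{d;n,r}`. -/
def PhiTilde (d n : ℕ) (r : ℝ) (x : ℝ) : ℝ :=
  sphK d ((d + 2) * n) x *
    (jacobiP ((d : ℝ) / 2 + r) ((d : ℝ) / 2 - 2) (d * n) x /
      jacobiP ((d : ℝ) / 2 + r) ((d : ℝ) / 2 - 2) (d * n) 1)

/-- The kernel `Φ_{d;n,r}`. -/
def Phi (d n : ℕ) (r : ℝ) (x : ℝ) : ℝ := PhiTilde d n r x * ((1 + x) / 2) ^ n

/-- The inner product `x·y` of two points of `S^d`. -/
def ip {d : ℕ} (x y : Sph d) : ℝ :=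
  ⟪(x : EuclideanSpace ℝ (Fin (d + 1))), (y : EuclideanSpace ℝ (Fin (d + 1)))⟫

/-- The operator `σ_{d;n,r}(ν, f)`. -/
def sigmaOp (d n : ℕ) (r : ℝ) (ν : SignedMeasure (Sph d)) (f : Sph d → ℝ) (x : Sph d) : ℝ :=
  sInt ν (fun y => f y * Phi d n r (ip x y))

/-- The operator `σ̃_{d;n,r}(ν, f)`. -/
def sigmaTildeOp (d n : ℕ) (r : ℝ) (ν : SignedMeasure (Sph d)) (f : Sph d → ℝ) (x : Sph d) : ℝ :=
  sInt ν (fun y => f y * PhiTilde d n r (ip x y))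

/-- The uniform (supremum) norm `‖f‖_∞`. -/
def supNorm {X : Type*} (f : X → ℝ) : ℝ := sSup (Set.range fun x => |f x|)

/-- `E_{d;n}(f)`, the degree of approximation of `f` from `Π_n^d` in the uniform norm. -/
def bestApprox (d : ℕ) (n : ℝ) (f : Sph d → ℝ) : ℝ :=
  sInf {t | ∃ g, IsSphPoly d n g ∧ ∀ y, |f y - g y| ≤ t}

/-- `dim Π_n^d = (2n+d−2)·Γ(n+d−1)/(Γ(n)·Γ(d+1))` (for `n ≥ 2`). -/
def dimPi (d n : ℕ) : ℝ :=
  (2 * (n : ℝ) + d - 2) * Real.Gamma ((n : ℝ) + d - 1) /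
    (Real.Gamma n * Real.Gamma ((d : ℝ) + 1))

/-!
Apart from the reproducing factor `K`, the kernel `Φ(x · y)` is a polynomial in `y` with value `1`
at `y = x`, whose degree leaves room for a polynomial `P` of degree `< r`. Hence `∫ P Φ dν = P(x)`,
and the error is the sum of `∫ (f - P) Φ dν` over the cap and `∫ P Φ dν` over its complement.

On the cap `|f - P| ≤ L |x - y|^r`, and everything comes down to the localized moment
`∫ |x - y|^r |Φ̃| d|ν| ≲ n^(-r)`. By Cauchy–Schwarz and the Marcinkiewicz–Zygmund inequality it is
bounded by `L²(μ)` norms; with `u = (1 - x · y) / 2`, the fractional part `s` of `r` is handled by a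
polynomial majorant of `u^(s/2)`, and for integer powers of `u` the orthogonality of Jacobi
polynomials evaluates the norms of the two factors of `Φ̃` exactly.

Off the cap, the factor `((1 + x · y) / 2)^n ≤ exp (-n u) ≤ n^(-4r)` beats the growth of `P`, which
is controlled by a Remez-type inequality on great circles with a constant free of the dimension.
Finally `dim Π_{2(d+2)n} ≤ (24 n)^d` turns `n^(-r)` into the stated bound.
-/

open Polynomial
open scoped Nat

/-! ### Alternating binomial sums and ratios of Gamma functions -/

/-- The alternating binomial sum `∑ i ≤ n, (-1) ^ i * n.choose i * g i` as a linear functional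
of the sequence `g`; up to the sign `(-1) ^ n` it is the `n`-th forward difference of `g` at `0`. -/
def altBinomSum (n : ℕ) : (ℕ → ℝ) →ₗ[ℝ] ℝ :=
  ∑ i ∈ Finset.range (n + 1), ((-1) ^ i * (n.choose i : ℝ)) • LinearMap.proj i

lemma altBinomSum_apply (n : ℕ) (g : ℕ → ℝ) :
    altBinomSum n g = ∑ i ∈ Finset.range (n + 1), (-1) ^ i * (n.choose i : ℝ) * g i := by
  simp [altBinomSum]

lemma altBinomSum_eq_fwdDiff_iter (n : ℕ) (g : ℝ → ℝ) (y : ℝ) :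
    altBinomSum n (fun i ↦ g (y + i)) = (-1) ^ n * (fwdDiff (1 : ℝ))^[n] g y := by
  rw [altBinomSum_apply, fwdDiff_iter_eq_sum_shift, Finset.mul_sum]
  refine Finset.sum_congr rfl fun i hi ↦ ?_
  obtain ⟨k, rfl⟩ := Nat.exists_eq_add_of_le (Nat.lt_succ_iff.1 (Finset.mem_range.1 hi))
  have hsign : (-1 : ℝ) ^ (i + k) * (-1) ^ k = (-1) ^ i := by
    rw [pow_add, mul_assoc, ← mul_pow]; simp
  simp only [zsmul_eq_mul, nsmul_eq_mul, mul_one, Nat.add_sub_cancel_left, ← hsign]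
  push_cast
  ring

lemma altBinomSum_eval_eq_zero {n : ℕ} {P : ℝ[X]} (hP : P.natDegree < n) :
    altBinomSum n (fun i ↦ P.eval (i : ℝ)) = 0 := by
  have h := altBinomSum_eq_fwdDiff_iter n P.eval 0
  simpa [fwdDiff_iter_eq_zero_of_degree_lt hP] using h

lemma fwdDiff_iter_inv (n : ℕ) {z : ℝ} (hz : 0 < z) :
    (fwdDiff (1 : ℝ))^[n] (fun x ↦ x⁻¹) z = (-1) ^ n * n ! * Gamma z / Gamma (z + n + 1) := by
  induction n generalizing z with
  | zero => simp [Gamma_add_one hz.ne', (Gamma_pos_of_pos hz).ne', div_mul_cancel_right₀]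
  | succ n ih =>
    have hzn : 0 < z + n + 1 := by positivity
    have hΓ := (Gamma_pos_of_pos hzn).ne'
    rw [Function.iterate_succ_apply', fwdDiff, ih hz, ih (z := z + 1) (by positivity),
      show z + 1 + n + 1 = z + n + 1 + 1 by ring,
      show z + ((n + 1 : ℕ) : ℝ) + 1 = z + n + 1 + 1 by push_cast; ring,
      Gamma_add_one hz.ne', Gamma_add_one hzn.ne', Nat.factorial_succ]
    push_cast
    field_simp
    ring

lemma altBinomSum_inv_add (n : ℕ) {z : ℝ} (hz : 0 < z) :
    altBinomSum n (fun i ↦ (z + i)⁻¹) = n ! * Gamma z / Gamma (z + n + 1) := by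
  rw [altBinomSum_eq_fwdDiff_iter n (fun x ↦ x⁻¹), fwdDiff_iter_inv n hz, mul_div_assoc, mul_assoc,
    ← mul_assoc, ← mul_pow]
  simp [mul_div_assoc]

lemma eval_eq_eval_add_mul_divByMonic (P : ℝ[X]) (a t : ℝ) :
    P.eval t = P.eval a + (t - a) * (P /ₘ (X - C a)).eval t := by
  conv_lhs => rw [← modByMonic_add_div P (X - C a), modByMonic_X_sub_C_eq_C_eval]
  simp

lemma natDegree_divByMonic_X_sub_C (P : ℝ[X]) (a : ℝ) :
    (P /ₘ (X - C a)).natDegree = P.natDegree - 1 := by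
  rw [natDegree_divByMonic _ (monic_X_sub_C a), natDegree_X_sub_C]

/-- Partial fractions with one pole: the quotient `(P t - P (-z)) / (t + z)` is a polynomial of
degree less than `n`, hence contributes nothing. -/
lemma altBinomSum_eval_div_add {n : ℕ} {z : ℝ} (hz : 0 < z) {P : ℝ[X]} (hP : P.natDegree ≤ n) :
    altBinomSum n (fun i ↦ P.eval (i : ℝ) / (z + i)) =
      P.eval (-z) * (n ! * Gamma z / Gamma (z + n + 1)) := by
  set S := P /ₘ (X - C (-z)) with hS
  have hsplit : (fun i : ℕ ↦ P.eval (i : ℝ) / (z + i)) =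
      P.eval (-z) • (fun i : ℕ ↦ (z + i)⁻¹) + fun i : ℕ ↦ S.eval (i : ℝ) := by
    funext i
    have : z + (i : ℝ) ≠ 0 := by positivity
    rw [eval_eq_eval_add_mul_divByMonic P (-z) i]
    simp only [Pi.add_apply, Pi.smul_apply, smul_eq_mul, ← hS]
    field_simp
    ring
  have hS0 : altBinomSum n (fun i ↦ S.eval (i : ℝ)) = 0 := by
    rcases P.natDegree.eq_zero_or_pos with h0 | hpos
    · rw [hS, eq_C_of_natDegree_eq_zero h0, (divByMonic_eq_zero_iff (monic_X_sub_C _)).2]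
      · simp [altBinomSum_apply]
      · rw [degree_X_sub_C]
        exact degree_C_le.trans_lt zero_lt_one
    · exact altBinomSum_eval_eq_zero (by rw [hS, natDegree_divByMonic_X_sub_C]; lia)
  rw [hsplit, map_add, map_smul, altBinomSum_inv_add n hz, hS0, add_zero, smul_eq_mul]

lemma altBinomSum_eval_div_add_mul_add {n : ℕ} {z : ℝ} (hz : 1 < z) {P : ℝ[X]}
    (hP : P.natDegree ≤ n + 1) :
    altBinomSum n (fun i ↦ P.eval (i : ℝ) / ((z + i) * (z - 1 + i))) =
      P.eval (1 - z) * (n ! * Gamma (z - 1) / Gamma (z + n)) -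
        P.eval (-z) * (n ! * Gamma z / Gamma (z + n + 1)) := by
  set S := P /ₘ (X - C (-z)) with hS
  have hSdeg : S.natDegree ≤ n := by rw [hS, natDegree_divByMonic_X_sub_C]; lia
  have hsplit : (fun i : ℕ ↦ P.eval (i : ℝ) / ((z + i) * (z - 1 + i))) =
      P.eval (-z) • ((fun i : ℕ ↦ (z - 1 + i)⁻¹) - fun i : ℕ ↦ (z + i)⁻¹) +
        fun i : ℕ ↦ S.eval (i : ℝ) / (z - 1 + i) := by
    funext i
    have h1 : z + (i : ℝ) ≠ 0 := by positivity
    have h2 : z - 1 + (i : ℝ) ≠ 0 := (add_pos_of_pos_of_nonneg (sub_pos.2 hz) i.cast_nonneg).ne'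
    rw [eval_eq_eval_add_mul_divByMonic P (-z) i]
    simp only [Pi.add_apply, Pi.smul_apply, Pi.sub_apply, smul_eq_mul, ← hS]
    field_simp
    ring
  rw [hsplit, map_add, map_smul, map_sub, altBinomSum_inv_add n (by linarith : 0 < z),
    altBinomSum_inv_add n (sub_pos.2 hz), altBinomSum_eval_div_add (sub_pos.2 hz) hSdeg,
    eval_eq_eval_add_mul_divByMonic P (-z) (1 - z), ← hS, neg_sub,
    show z - 1 + n + 1 = z + n by ring, smul_eq_mul]
  ring

lemma Gamma_add_natCast {x : ℝ} (hx : 0 < x) (k : ℕ) :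
    Gamma (x + k) = (ascPochhammer ℝ k).eval x * Gamma x := by
  induction k with
  | zero => simp
  | succ k ih =>
    rw [Nat.cast_succ, ← add_assoc, Gamma_add_one (by positivity), ih, ascPochhammer_succ_eval]
    ring

lemma eval_ascPochhammer_comp_X_add_C {c t : ℝ} (h : 0 < t + c) (k : ℕ) :
    ((ascPochhammer ℝ k).comp (X + C c)).eval t = Gamma (t + c + k) / Gamma (t + c) := by
  rw [eq_div_iff (Gamma_pos_of_pos h).ne', Gamma_add_natCast h]
  simp

lemma natDegree_ascPochhammer_comp_X_add_C (c : ℝ) (k : ℕ) :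
    ((ascPochhammer ℝ k).comp (X + C c)).natDegree = k := by
  rw [natDegree_comp, natDegree_X_add_C, mul_one, ascPochhammer_natDegree]

lemma Gamma_add_le_rpow_mul_Gamma {x r : ℝ} (hx : 0 < x) (hr : 0 < r) :
    Gamma (x + r) ≤ (x + r) ^ r * Gamma x := by
  have hxr : 0 < x + r := by positivity
  have hslope := convexOn_log_Gamma.slope_mono_adjacent (x := x) (y := x + r) (z := x + r + 1)
    hx (mem_Ioi.2 (by linarith)) (by linarith) (by linarith)
  have hΓx := Gamma_pos_of_pos hx
  have hΓxr := Gamma_pos_of_pos hxr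
  rw [← log_le_log_iff hΓxr (by positivity), log_mul (by positivity) hΓx.ne', log_rpow hxr]
  simp only [Function.comp, Gamma_add_one hxr.ne', log_mul hxr.ne' hΓxr.ne', add_sub_cancel_left,
    div_one, add_sub_cancel_right, div_le_iff₀ hr] at hslope
  linarith

lemma rpow_mul_Gamma_le_Gamma_add {x r : ℝ} (hx : 1 < x) (hr : 0 < r) :
    (x - 1) ^ r * Gamma x ≤ Gamma (x + r) := by
  have hx1 : 0 < x - 1 := sub_pos.2 hx
  have hslope := convexOn_log_Gamma.slope_mono_adjacent (x := x - 1) (y := x) (z := x + r)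
    hx1 (mem_Ioi.2 (by linarith)) (by linarith) (by linarith)
  have hΓ1 := Gamma_pos_of_pos hx1
  have hΓ : Gamma x = (x - 1) * Gamma (x - 1) := by
    rw [← Gamma_add_one hx1.ne', sub_add_cancel]
  rw [← log_le_log_iff (mul_pos (by positivity) (Gamma_pos_of_pos (by linarith)))
    (Gamma_pos_of_pos (by linarith)), log_mul (by positivity) (Gamma_pos_of_pos (by linarith)).ne',
    log_rpow hx1]
  simp only [Function.comp, hΓ, log_mul hx1.ne' hΓ1.ne', add_sub_cancel_left, sub_sub_cancel,
    div_one, add_sub_cancel_right, le_div_iff₀ hr] at hslope ⊢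
  linarith

/-! ### Jacobi polynomials in the variable `u = (1 - t) / 2` -/

/-- The integral `∫ p(u) u ^ a (1 - u) ^ b du` of a polynomial over `(0, 1)` against a Jacobi
weight. The substitution `u = (1 - t) / 2` turns the usual Jacobi weight `(1 - t) ^ a (1 + t) ^ b`
on `(-1, 1)` into this one, up to a constant. -/
def jacobiIntegral (a b : ℝ) (p : ℝ[X]) : ℝ :=
  ∫ u in Ioo (0 : ℝ) 1, p.eval u * (u ^ a * (1 - u) ^ b)

lemma ofReal_jacobiWeight (a b : ℝ) {u : ℝ} (hu : u ∈ Ioo (0 : ℝ) 1) :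
    (u : ℂ) ^ (((a + 1 : ℝ) : ℂ) - 1) * (1 - (u : ℂ)) ^ (((b + 1 : ℝ) : ℂ) - 1) =
      ((u ^ a * (1 - u) ^ b : ℝ) : ℂ) := by
  have hu' : (0 : ℝ) ≤ 1 - u := sub_nonneg.2 hu.2.le
  rw [Complex.ofReal_mul, Complex.ofReal_cpow hu.1.le, Complex.ofReal_cpow hu']
  simp

section Integral

variable {a b : ℝ}

lemma integrableOn_jacobiWeight (ha : -1 < a) (hb : -1 < b) :
    IntegrableOn (fun u : ℝ ↦ u ^ a * (1 - u) ^ b) (Ioo (0 : ℝ) 1) := by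
  have h := Complex.betaIntegral_convergent (u := ((a + 1 : ℝ) : ℂ)) (v := ((b + 1 : ℝ) : ℂ))
    (by simpa using by linarith) (by simpa using by linarith)
  rw [intervalIntegrable_iff_integrableOn_Ioo_of_le zero_le_one] at h
  refine h.re.congr (ae_restrict_of_forall_mem measurableSet_Ioo fun u hu ↦ ?_)
  simp only [ofReal_jacobiWeight a b hu, RCLike.re_to_complex,
    Complex.ofReal_re]

lemma integrableOn_eval_mul_jacobiWeight (ha : -1 < a) (hb : -1 < b) (p : ℝ[X]) :
    IntegrableOn (fun u : ℝ ↦ p.eval u * (u ^ a * (1 - u) ^ b)) (Ioo (0 : ℝ) 1) := by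
  have h := integrableOn_jacobiWeight ha hb
  rw [← integrableOn_Icc_iff_integrableOn_Ioo] at h ⊢
  exact h.continuousOn_mul p.continuousOn isCompact_Icc

lemma jacobiIntegral_add (ha : -1 < a) (hb : -1 < b) (p q : ℝ[X]) :
    jacobiIntegral a b (p + q) = jacobiIntegral a b p + jacobiIntegral a b q := by
  simp only [jacobiIntegral, eval_add, add_mul]
  exact integral_add (integrableOn_eval_mul_jacobiWeight ha hb p)
    (integrableOn_eval_mul_jacobiWeight ha hb q)

lemma jacobiIntegral_C_mul (c : ℝ) (p : ℝ[X]) :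
    jacobiIntegral a b (C c * p) = c * jacobiIntegral a b p := by
  simp only [jacobiIntegral, eval_mul, eval_C, mul_assoc, integral_const_mul]

lemma jacobiIntegral_sum (ha : -1 < a) (hb : -1 < b) {ι : Type*} (s : Finset ι) (p : ι → ℝ[X]) :
    jacobiIntegral a b (∑ i ∈ s, p i) = ∑ i ∈ s, jacobiIntegral a b (p i) := by
  simp only [jacobiIntegral, eval_finsetSum, Finset.sum_mul]
  exact integral_finsetSum _ fun i _ ↦ integrableOn_eval_mul_jacobiWeight ha hb (p i)

lemma jacobiIntegral_X_pow_mul (k : ℕ) (p : ℝ[X]) :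
    jacobiIntegral a b (X ^ k * p) = jacobiIntegral (a + k) b p := by
  refine setIntegral_congr_fun measurableSet_Ioo fun u hu ↦ ?_
  simp only [eval_mul, eval_pow, eval_X, rpow_add hu.1, rpow_natCast]
  ring

lemma jacobiIntegral_one (ha : -1 < a) (hb : -1 < b) :
    jacobiIntegral a b 1 = Gamma (a + 1) * Gamma (b + 1) / Gamma (a + b + 2) := by
  have h := ProbabilityTheory.beta_eq_betaIntegralReal (a + 1) (b + 1) (by linarith) (by linarith)
  rw [ProbabilityTheory.beta, Complex.betaIntegral,
    intervalIntegral.integral_of_le zero_le_one, integral_Ioc_eq_integral_Ioo,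
    setIntegral_congr_fun measurableSet_Ioo fun _ hu ↦ ofReal_jacobiWeight a b hu,
    integral_complex_ofReal, Complex.ofReal_re, show a + 1 + (b + 1) = a + b + 2 by ring] at h
  simp only [jacobiIntegral, eval_one, one_mul, h]

lemma jacobiIntegral_X_pow (ha : -1 < a) (hb : -1 < b) (k : ℕ) :
    jacobiIntegral a b (X ^ k) =
      Gamma (a + k + 1) * Gamma (b + 1) / Gamma (a + k + b + 2) := by
  have hk : -1 < a + k := by linarith [(k.cast_nonneg : (0 : ℝ) ≤ k)]
  rw [← mul_one (X ^ k), jacobiIntegral_X_pow_mul, jacobiIntegral_one hk hb]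

lemma jacobiIntegral_nonneg {p : ℝ[X]} (hp : ∀ u ∈ Ioo (0 : ℝ) 1, 0 ≤ p.eval u) :
    0 ≤ jacobiIntegral a b p :=
  setIntegral_nonneg measurableSet_Ioo fun u hu ↦ mul_nonneg (hp u hu)
    (mul_nonneg (rpow_nonneg hu.1.le a) (rpow_nonneg (sub_nonneg.2 hu.2.le) b))

end Integral

/-- The Jacobi polynomial of degree `n` with parameters `α, β`, up to normalization, in the
variable `u = (1 - t) / 2`; it is orthogonal to lower degrees for the weight
`u ^ α (1 - u) ^ β`. -/
def shiftedJacobi (α β : ℝ) (n : ℕ) : ℝ[X] :=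
  ∑ m ∈ Finset.range (n + 1), C ((-1) ^ m * (n.choose m : ℝ) *
    (Gamma (α + β + n + m + 1) / Gamma (α + m + 1))) * X ^ m

lemma natDegree_shiftedJacobi_le (α β : ℝ) (n : ℕ) : (shiftedJacobi α β n).natDegree ≤ n :=
  natDegree_sum_le_of_forall_le _ _ fun _ hm ↦ (natDegree_C_mul_X_pow_le _ _).trans
    (Nat.lt_succ_iff.1 (Finset.mem_range.1 hm))

lemma coeff_shiftedJacobi (α β : ℝ) (n m : ℕ) : (shiftedJacobi α β n).coeff m =
    (-1) ^ m * (n.choose m : ℝ) * (Gamma (α + β + n + m + 1) / Gamma (α + m + 1)) := by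
  simp only [shiftedJacobi, finsetSum_coeff, coeff_C_mul, coeff_X_pow, mul_ite, mul_one, mul_zero,
    Finset.sum_ite_eq, Finset.mem_range]
  split_ifs with h
  · rfl
  · simp [Nat.choose_eq_zero_of_lt (by lia : n < m)]

lemma eval_shiftedJacobi_zero (α β : ℝ) (n : ℕ) :
    (shiftedJacobi α β n).eval 0 = Gamma (α + β + n + 1) / Gamma (α + 1) := by
  simp [← coeff_zero_eq_eval_zero, coeff_shiftedJacobi]

lemma jacobiIntegral_shiftedJacobi (α : ℝ) {β c : ℝ} (n : ℕ) (hc : -1 < c) (hβ : -1 < β) :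
    jacobiIntegral c β (shiftedJacobi α β n) = Gamma (β + 1) * altBinomSum n (fun m ↦
      Gamma (α + β + n + m + 1) / Gamma (c + m + β + 2) *
        (Gamma (c + m + 1) / Gamma (α + m + 1))) := by
  rw [shiftedJacobi, jacobiIntegral_sum hc hβ, altBinomSum_apply, Finset.mul_sum]
  refine Finset.sum_congr rfl fun m _ ↦ ?_
  rw [jacobiIntegral_C_mul, jacobiIntegral_X_pow hc hβ]
  ring

section Orthogonality

variable {α β : ℝ}

lemma eval_shiftedJacobi_zero_pos (n : ℕ) (hα : -1 < α) (hαβ : 0 < α + β + 1) :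
    0 < (shiftedJacobi α β n).eval 0 := by
  have : (0 : ℝ) ≤ n := n.cast_nonneg
  rw [eval_shiftedJacobi_zero]
  exact div_pos (Gamma_pos_of_pos (by linarith)) (Gamma_pos_of_pos (by linarith))

/-- The integral is the `n`-th finite difference of a polynomial of degree `n - 1`. -/
lemma jacobiIntegral_add_natCast_shiftedJacobi {n k : ℕ} (hα : -1 < α) (hβ : -1 < β) (hk : k < n) :
    jacobiIntegral (α + k) β (shiftedJacobi α β n) = 0 := by
  have : (0 : ℝ) ≤ k := k.cast_nonneg
  obtain ⟨l, rfl⟩ := Nat.exists_eq_add_of_lt hk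
  have hdeg : ((ascPochhammer ℝ l).comp (X + C (α + β + k + 2)) *
      (ascPochhammer ℝ k).comp (X + C (α + 1))).natDegree < k + l + 1 := by
    refine natDegree_mul_le.trans_lt ?_
    simp only [natDegree_ascPochhammer_comp_X_add_C]
    lia
  rw [jacobiIntegral_shiftedJacobi α _ (by linarith) hβ, mul_eq_zero]
  refine Or.inr (Eq.trans ?_ (altBinomSum_eval_eq_zero hdeg))
  congr 1 with m
  have : (0 : ℝ) ≤ m := m.cast_nonneg
  rw [eval_mul, eval_ascPochhammer_comp_X_add_C (by linarith),
    eval_ascPochhammer_comp_X_add_C (by linarith)]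
  push_cast
  ring_nf

lemma jacobiIntegral_sub_one_shiftedJacobi (n : ℕ) (hα : 0 < α) (hβ : -1 < β) :
    jacobiIntegral (α - 1) β (shiftedJacobi α β n) =
      Gamma (β + n + 1) * n ! * Gamma α / Gamma (α + n + 1) := by
  have hΓβ := (Gamma_pos_of_pos (by linarith : 0 < β + 1)).ne'
  have hsum := altBinomSum_eval_div_add hα (natDegree_ascPochhammer_comp_X_add_C (α + β + 1) n).le
  rw [eval_ascPochhammer_comp_X_add_C (by linarith), show -α + (α + β + 1) = β + 1 by ring] at hsum
  have hterm : (fun m : ℕ ↦ Gamma (α + β + n + m + 1) / Gamma (α - 1 + m + β + 2) *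
      (Gamma (α - 1 + m + 1) / Gamma (α + m + 1))) = fun m : ℕ ↦
        ((ascPochhammer ℝ n).comp (X + C (α + β + 1))).eval (m : ℝ) / (α + m) := by
    funext m
    have : (0 : ℝ) ≤ m := m.cast_nonneg
    have hαm : 0 < α + m := by positivity
    have hΓ := (Gamma_pos_of_pos hαm).ne'
    rw [eval_ascPochhammer_comp_X_add_C (by linarith), Gamma_add_one hαm.ne',
      show α - 1 + m + 1 = α + m by ring, show α - 1 + m + β + 2 = m + (α + β + 1) by ring,
      show α + β + n + m + 1 = m + (α + β + 1) + n by ring]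
    field_simp
  rw [jacobiIntegral_shiftedJacobi α n (by linarith) hβ, hterm, hsum,
    show β + 1 + n = β + n + 1 by ring]
  field_simp

lemma eval_ascPochhammer_comp_neg (n : ℕ) (hβ : -1 < β) :
    ((ascPochhammer ℝ (n + 1)).comp (X + C (α + β))).eval (-α) =
      β * (Gamma (β + n + 1) / Gamma (β + 1)) := by
  rw [show β + n + 1 = β + 1 + n by ring, Gamma_add_natCast (by linarith : 0 < β + 1),
    mul_div_cancel_right₀ _ (Gamma_pos_of_pos (by linarith : 0 < β + 1)).ne',
    ascPochhammer_succ_left]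
  simp

lemma jacobiIntegral_sub_two_shiftedJacobi (n : ℕ) (hα : 1 < α) (hβ : -1 < β) (hαβ : 0 < α + β) :
    jacobiIntegral (α - 2) β (shiftedJacobi α β n) =
      (n + 1) * (α + β + n) / (α - 1) * jacobiIntegral (α - 1) β (shiftedJacobi α β n) := by
  have hα1 : 0 < α - 1 := sub_pos.2 hα
  have : (0 : ℝ) ≤ n := n.cast_nonneg
  have hΓβ := (Gamma_pos_of_pos (by linarith : 0 < β + 1)).ne'
  have hΓα := (Gamma_pos_of_pos (by linarith : 0 < α + n)).ne'
  have hsum := altBinomSum_eval_div_add_mul_add hα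
    (natDegree_ascPochhammer_comp_X_add_C (α + β) (n + 1)).le
  rw [eval_ascPochhammer_comp_X_add_C (by linarith), eval_ascPochhammer_comp_neg n hβ,
    show 1 - α + (α + β) = β + 1 by ring] at hsum
  have hterm : (fun m : ℕ ↦ Gamma (α + β + n + m + 1) / Gamma (α - 2 + m + β + 2) *
      (Gamma (α - 2 + m + 1) / Gamma (α + m + 1))) = fun m : ℕ ↦
        ((ascPochhammer ℝ (n + 1)).comp (X + C (α + β))).eval (m : ℝ) /
          ((α + m) * (α - 1 + m)) := by
    funext m
    have : (0 : ℝ) ≤ m := m.cast_nonneg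
    have hαm : 0 < α - 1 + m := by positivity
    have hΓ := (Gamma_pos_of_pos hαm).ne'
    rw [eval_ascPochhammer_comp_X_add_C (by linarith),
      show α - 2 + m + β + 2 = m + (α + β) by ring, show α - 2 + m + 1 = α - 1 + m by ring,
      show α + β + n + m + 1 = m + (α + β) + ((n + 1 : ℕ) : ℝ) by push_cast; ring,
      Gamma_add_one (by linarith : α + m ≠ 0), show α + m = α - 1 + m + 1 by ring,
      Gamma_add_one hαm.ne']
    field_simp
  have hΓstep : Gamma α = (α - 1) * Gamma (α - 1) := by
    rw [← Gamma_add_one hα1.ne', sub_add_cancel]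
  rw [jacobiIntegral_sub_one_shiftedJacobi n (by linarith) hβ,
    jacobiIntegral_shiftedJacobi α n (by linarith) hβ, hterm, hsum, hΓstep,
    show β + 1 + ((n + 1 : ℕ) : ℝ) = β + n + 1 + 1 by push_cast; ring,
    Gamma_add_one (by linarith : β + n + 1 ≠ 0), Gamma_add_one (by linarith : α + n ≠ 0)]
  field_simp
  ring

lemma jacobiIntegral_shiftedJacobi_mul {n : ℕ} (hα : -1 < α) (hβ : -1 < β) {q : ℝ[X]}
    (hq : q.natDegree < n) : jacobiIntegral α β (shiftedJacobi α β n * q) = 0 := by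
  have hexp : shiftedJacobi α β n * q =
      ∑ i ∈ Finset.range n, C (q.coeff i) * (X ^ i * shiftedJacobi α β n) := by
    conv_lhs => rw [q.as_sum_range_C_mul_X_pow' hq, Finset.mul_sum]
    exact Finset.sum_congr rfl fun i _ ↦ by ring
  rw [hexp, jacobiIntegral_sum hα hβ]
  refine Finset.sum_eq_zero fun i hi ↦ ?_
  rw [jacobiIntegral_C_mul, jacobiIntegral_X_pow_mul,
    jacobiIntegral_add_natCast_shiftedJacobi hα hβ (Finset.mem_range.1 hi), mul_zero]

lemma jacobiIntegral_mul_eq_add_divX {a : ℝ} (ha : -1 < a) (hβ : -1 < β) (p q : ℝ[X]) :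
    jacobiIntegral a β (p * q) =
      q.eval 0 * jacobiIntegral a β p + jacobiIntegral (a + 1) β (p * q.divX) := by
  have hexp : p * q = C (q.eval 0) * p + X ^ 1 * (p * q.divX) := by
    conv_lhs => rw [← q.divX_mul_X_add, coeff_zero_eq_eval_zero]
    ring
  rw [hexp, jacobiIntegral_add ha hβ, jacobiIntegral_C_mul, jacobiIntegral_X_pow_mul, Nat.cast_one]

lemma jacobiIntegral_sub_one_shiftedJacobi_mul {n : ℕ} (hα : 0 < α) (hβ : -1 < β) {q : ℝ[X]}
    (hq : q.natDegree ≤ n) : jacobiIntegral (α - 1) β (shiftedJacobi α β n * q) =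
      q.eval 0 * jacobiIntegral (α - 1) β (shiftedJacobi α β n) := by
  rw [jacobiIntegral_mul_eq_add_divX (by linarith) hβ, sub_add_cancel, add_eq_left]
  rcases q.natDegree.eq_zero_or_pos with h0 | hpos
  · rw [eq_C_of_natDegree_eq_zero h0, divX_C]
    simp [jacobiIntegral]
  · refine jacobiIntegral_shiftedJacobi_mul (by linarith) hβ ?_
    rw [natDegree_divX_eq_natDegree_tsub_one]
    lia

lemma jacobiIntegral_sub_two_shiftedJacobi_mul {n : ℕ} (hα : 1 < α) (hβ : -1 < β)
    (hαβ : 0 < α + β) {q : ℝ[X]} (hq : q.natDegree ≤ n) :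
    jacobiIntegral (α - 2) β (shiftedJacobi α β n * q) =
      (q.eval 0 * ((n + 1) * (α + β + n) / (α - 1)) + q.coeff 1) *
        jacobiIntegral (α - 1) β (shiftedJacobi α β n) := by
  have hdivX : q.divX.natDegree ≤ n := by
    rw [natDegree_divX_eq_natDegree_tsub_one]
    lia
  rw [jacobiIntegral_mul_eq_add_divX (by linarith) hβ,
    jacobiIntegral_sub_two_shiftedJacobi n hα hβ hαβ, show α - 2 + 1 = α - 1 by ring,
    jacobiIntegral_sub_one_shiftedJacobi_mul (by linarith) hβ hdivX,
    ← coeff_zero_eq_eval_zero q.divX, coeff_divX]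
  ring

lemma jacobiIntegral_sub_one_shiftedJacobi_sq (n : ℕ) (hα : 0 < α) (hβ : -1 < β) :
    jacobiIntegral (α - 1) β (shiftedJacobi α β n ^ 2) = (shiftedJacobi α β n).eval 0 *
      (Gamma (β + n + 1) * n ! * Gamma α / Gamma (α + n + 1)) := by
  rw [sq, jacobiIntegral_sub_one_shiftedJacobi_mul hα hβ (natDegree_shiftedJacobi_le α β n),
    jacobiIntegral_sub_one_shiftedJacobi n hα hβ]

lemma jacobiIntegral_sub_two_shiftedJacobi_sq (n : ℕ) (hα : 1 < α) (hβ : -1 < β)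
    (hαβ : 0 < α + β) :
    jacobiIntegral (α - 2) β (shiftedJacobi α β n ^ 2) =
      (2 * n * (α + β + n + 1) / ((α - 1) * (α + 1)) + (α + β) / (α - 1)) *
        jacobiIntegral (α - 1) β (shiftedJacobi α β n ^ 2) := by
  have : (0 : ℝ) ≤ n := n.cast_nonneg
  have hα1 : α - 1 ≠ 0 := by linarith
  have hαβn : 0 < α + β + n + 1 := by linarith
  have hΓ := (Gamma_pos_of_pos (by linarith : 0 < α + 1)).ne'
  have hdeg := natDegree_shiftedJacobi_le α β n
  rw [sq, jacobiIntegral_sub_one_shiftedJacobi_mul (by linarith) hβ hdeg,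
    jacobiIntegral_sub_two_shiftedJacobi_mul hα hβ hαβ hdeg, eval_shiftedJacobi_zero,
    coeff_shiftedJacobi, Nat.cast_one, Gamma_add_one hαβn.ne',
    Gamma_add_one (by linarith : α + 1 ≠ 0)]
  simp only [pow_one, Nat.choose_one_right]
  field_simp
  ring

end Orthogonality

/-! ### The orthonormal Jacobi polynomials and their kernels -/

/-- The factor relating `jacobiP α β n` to `shiftedJacobi α β n`. -/
def jacobiScale (α β : ℝ) (n : ℕ) : ℝ :=
  √((2 * (n : ℝ) + α + β + 1) / 2 ^ (α + β + 1) *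
      (Gamma ((n : ℝ) + α + β + 1) * (n ! : ℝ) /
        (Gamma ((n : ℝ) + α + 1) * Gamma ((n : ℝ) + β + 1)))) *
    (Gamma (α + n + 1) / ((n ! : ℝ) * Gamma (α + β + n + 1)))

lemma jacobiP_eq_scale_mul_eval (α β : ℝ) (n : ℕ) (t : ℝ) :
    jacobiP α β n t = jacobiScale α β n * (shiftedJacobi α β n).eval ((1 - t) / 2) := by
  rw [jacobiP, jacobiScale, shiftedJacobi, eval_finsetSum]
  congr 1
  refine Finset.sum_congr rfl fun m _ ↦ ?_
  rw [show (t - 1) / 2 = -1 * ((1 - t) / 2) by ring, mul_pow]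
  simp only [eval_mul, eval_C, eval_pow, eval_X]
  ring

section Kernel

variable {α β : ℝ}

lemma jacobiScale_pos (hα : -1 < α) (hβ : -1 < β) (hαβ : 0 < α + β + 1) (n : ℕ) :
    0 < jacobiScale α β n := by
  have : (0 : ℝ) ≤ n := n.cast_nonneg
  have h0 : 0 < 2 * (n : ℝ) + α + β + 1 := by linarith
  have h1 := Gamma_pos_of_pos (by linarith : 0 < (n : ℝ) + α + β + 1)
  have h2 := Gamma_pos_of_pos (by linarith : 0 < (n : ℝ) + α + 1)
  have h3 := Gamma_pos_of_pos (by linarith : 0 < (n : ℝ) + β + 1)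
  rw [jacobiScale, show α + n + 1 = n + α + 1 by ring, show α + β + n + 1 = n + α + β + 1 by ring]
  positivity

lemma jacobiP_div_jacobiP_one (hα : -1 < α) (hβ : -1 < β) (hαβ : 0 < α + β + 1) (n : ℕ) (t : ℝ) :
    jacobiP α β n t / jacobiP α β n 1 =
      (shiftedJacobi α β n).eval ((1 - t) / 2) / (shiftedJacobi α β n).eval 0 := by
  rw [jacobiP_eq_scale_mul_eval, jacobiP_eq_scale_mul_eval, sub_self, zero_div,
    mul_div_mul_left _ _ (jacobiScale_pos hα hβ hαβ n).ne']

lemma jacobiP_one_mul_jacobiP (hα : -1 < α) (hβ : -1 < β) (hαβ : 0 < α + β + 1) (n : ℕ) (t : ℝ) :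
    jacobiP α β n 1 * jacobiP α β n t =
      (2 * n + α + β + 1) * Gamma (n + α + 1) /
        (2 ^ (α + β + 1) * Gamma (α + 1) * Gamma (n + β + 1) * n !) *
        (shiftedJacobi α β n).eval ((1 - t) / 2) := by
  have : (0 : ℝ) ≤ n := n.cast_nonneg
  have h0 : 0 < 2 * (n : ℝ) + α + β + 1 := by linarith
  have h1 := Gamma_pos_of_pos (by linarith : 0 < (n : ℝ) + α + β + 1)
  have h2 := Gamma_pos_of_pos (by linarith : 0 < (n : ℝ) + α + 1)
  have h3 := Gamma_pos_of_pos (by linarith : 0 < (n : ℝ) + β + 1)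
  have hsq : jacobiScale α β n ^ 2 = (2 * (n : ℝ) + α + β + 1) / 2 ^ (α + β + 1) *
      (Gamma (n + α + 1) / (Gamma (n + β + 1) * Gamma (n + α + β + 1) * n !)) := by
    rw [jacobiScale, show α + n + 1 = n + α + 1 by ring,
      show α + β + n + 1 = n + α + β + 1 by ring, mul_pow, sq_sqrt (by positivity)]
    field_simp
  rw [jacobiP_eq_scale_mul_eval, jacobiP_eq_scale_mul_eval, mul_mul_mul_comm, ← sq, hsq, sub_self,
    zero_div, eval_shiftedJacobi_zero, show α + β + n + 1 = n + α + β + 1 by ring]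
  field_simp

/-- The coefficientwise form of the Christoffel–Darboux formula at the endpoint `1`. -/
lemma sum_christoffelDarboux_coeff (hα : -1 < α) (hβ : -1 < β) (hαβ : 0 < α + β + 1) (m M : ℕ) :
    ∑ ℓ ∈ Finset.range (M + 1), (2 * (ℓ : ℝ) + α + β + 1) * Gamma (ℓ + α + 1) /
        (Gamma (ℓ + β + 1) * ℓ !) * (ℓ.choose m * Gamma (α + β + ℓ + m + 1)) =
      Gamma (M + α + 2) / (Gamma (M + β + 1) * M !) *
        (M.choose m * Gamma (α + β + M + m + 2)) / (α + m + 1) := by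
  have hαm : α + m + 1 ≠ 0 := by linarith [(m.cast_nonneg : (0 : ℝ) ≤ m)]
  induction M with
  | zero =>
    rcases m.eq_zero_or_pos with rfl | hm
    · have hα1 : α + 1 ≠ 0 := by linarith
      simp [show α + 2 = α + 1 + 1 by ring, show α + β + 2 = α + β + 1 + 1 by ring,
        Gamma_add_one hα1, Gamma_add_one hαβ.ne']
      field_simp
    · simp [Nat.choose_eq_zero_of_lt hm]
  | succ M ih =>
    have : (0 : ℝ) ≤ M := M.cast_nonneg
    have : (0 : ℝ) ≤ m := m.cast_nonneg
    rw [Finset.sum_range_succ, ih]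
    rcases le_or_gt m (M + 1) with hmM | hmM
    · have hchoose : (M.choose m : ℝ) = (M + 1).choose m * (M + 1 - m) / (M + 1) := by
        have h := congrArg (Nat.cast (R := ℝ)) (Nat.choose_mul_succ_eq M m)
        push_cast [Nat.cast_sub hmM] at h
        rwa [eq_div_iff (by positivity)]
      have hΓβ := (Gamma_pos_of_pos (by linarith : 0 < M + β + 1)).ne'
      have hMβ : M + β + 1 ≠ 0 := by linarith
      rw [hchoose, Nat.factorial_succ]
      push_cast
      rw [show M + 1 + α + 1 = M + α + 2 by ring, show M + 1 + α + 2 = M + α + 2 + 1 by ring,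
        show M + 1 + β + 1 = M + β + 1 + 1 by ring,
        show α + β + (M + 1) + m + 1 = α + β + M + m + 2 by ring,
        show α + β + (M + 1) + m + 2 = α + β + M + m + 2 + 1 by ring,
        Gamma_add_one hMβ, Gamma_add_one (by linarith : M + α + 2 ≠ 0),
        Gamma_add_one (by linarith : α + β + M + m + 2 ≠ 0)]
      field_simp
      ring
    · simp [Nat.choose_eq_zero_of_lt hmM, Nat.choose_eq_zero_of_lt (by lia : M < m)]

lemma jacobiK_succ (hα : -1 < α) (hβ : -1 < β) (hαβ : 0 < α + β + 1) (M : ℕ) (t : ℝ) :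
    jacobiK α β (M + 1) t =
      Gamma (M + α + 2) / (2 ^ (α + β + 1) * Gamma (α + 1) * Gamma (M + β + 1) * M !) *
        (shiftedJacobi (α + 1) β M).eval ((1 - t) / 2) := by
  set u := (1 - t) / 2
  have hterm : ∀ ℓ ∈ Finset.range (M + 1), jacobiP α β ℓ 1 * jacobiP α β ℓ t =
      ∑ m ∈ Finset.range (M + 1),
        (-u) ^ m / (2 ^ (α + β + 1) * Gamma (α + 1) * Gamma (α + m + 1)) *
          ((2 * (ℓ : ℝ) + α + β + 1) * Gamma (ℓ + α + 1) / (Gamma (ℓ + β + 1) * ℓ !) *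
            (ℓ.choose m * Gamma (α + β + ℓ + m + 1))) := by
    intro ℓ hℓ
    have hdeg : (shiftedJacobi α β ℓ).natDegree < M + 1 :=
      (natDegree_shiftedJacobi_le α β ℓ).trans_lt (Finset.mem_range.1 hℓ)
    rw [jacobiP_one_mul_jacobiP hα hβ hαβ, eval_eq_sum_range' hdeg, Finset.mul_sum]
    refine Finset.sum_congr rfl fun m _ ↦ ?_
    rw [coeff_shiftedJacobi, neg_pow u m]
    ring
  rw [jacobiK, Finset.sum_congr rfl hterm, Finset.sum_comm,
    eval_eq_sum_range' ((natDegree_shiftedJacobi_le (α + 1) β M).trans_lt M.lt_succ_self),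
    Finset.mul_sum]
  refine Finset.sum_congr rfl fun m _ ↦ ?_
  have hαm : α + m + 1 ≠ 0 := by linarith [(m.cast_nonneg : (0 : ℝ) ≤ m)]
  rw [← Finset.mul_sum, sum_christoffelDarboux_coeff hα hβ hαβ, coeff_shiftedJacobi, neg_pow u m,
    show α + 1 + β + M + m + 1 = α + β + M + m + 2 by ring,
    show α + 1 + m + 1 = α + m + 1 + 1 by ring, Gamma_add_one hαm]
  field_simp

end Kernel

/-! ### Moments of the sphere -/

/-- The power `k` is absorbed by the radial part of the measure: this is integration in polar
coordinates against a Gaussian weight. -/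
lemma integral_mul_exp_neg_norm_sq_of_homogeneous {E : Type*} [NormedAddCommGroup E]
    [NormedSpace ℝ E] [FiniteDimensional ℝ E] [Nontrivial E] [MeasurableSpace E] [BorelSpace E]
    (μ : Measure E) [μ.IsAddHaarMeasure] {f : E → ℝ} {k : ℕ}
    (hf : ∀ (t : ℝ) (y : E), 0 < t → f (t • y) = t ^ k * f y) :
    ∫ y, f y * exp (-‖y‖ ^ 2) ∂μ =
      (∫ y : Metric.sphere (0 : E) 1, f y ∂μ.toSphere) *
        (Gamma ((k + Module.finrank ℝ E) / 2) / 2) := by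
  have hdim : ((Module.finrank ℝ E - 1 : ℕ) : ℝ) = Module.finrank ℝ E - 1 := by
    rw [Nat.cast_sub Module.finrank_pos, Nat.cast_one]
  have : (1 : ℝ) ≤ Module.finrank ℝ E := by
    exact_mod_cast Module.finrank_pos (R := ℝ) (M := E)
  set d := Module.finrank ℝ E - 1
  calc ∫ y, f y * exp (-‖y‖ ^ 2) ∂μ
    _ = ∫ x : ({(0)}ᶜ : Set E), f x.1 * exp (-‖x.1‖ ^ 2) ∂(μ.comap (↑)) := by
      rw [integral_subtype_comap (measurableSet_singleton _).compl
        fun y : E ↦ f y * exp (-‖y‖ ^ 2), restrict_compl_singleton]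
    _ = ∫ z, f z.1 * (z.2.1 ^ k * exp (-z.2.1 ^ 2)) ∂μ.toSphere.prod (.volumeIoiPow d) := by
      rw [← μ.measurePreserving_homeomorphUnitSphereProd.integral_comp
        (Homeomorph.measurableEmbedding _)]
      refine integral_congr_ae (.of_forall fun x ↦ ?_)
      have hx : 0 < ‖x.1‖ := norm_pos_iff.2 x.2
      simp only [homeomorphUnitSphereProd_apply_fst_coe, homeomorphUnitSphereProd_apply_snd_coe]
      rw [hf _ _ (inv_pos.2 hx), inv_pow]
      field_simp
    _ = (∫ y : Metric.sphere (0 : E) 1, f y ∂μ.toSphere) *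
          ∫ t : Ioi (0 : ℝ), t.1 ^ k * exp (-t.1 ^ 2) ∂(.volumeIoiPow d) :=
      integral_prod_mul (fun y : Metric.sphere (0 : E) 1 ↦ f y)
        fun t : Ioi (0 : ℝ) ↦ t.1 ^ k * exp (-t.1 ^ 2)
    _ = (∫ y : Metric.sphere (0 : E) 1, f y ∂μ.toSphere) *
          ∫ t in Ioi (0 : ℝ), t ^ ((k : ℝ) + d) * exp (-t ^ (2 : ℝ)) := by
      congr 1
      simp only [Measure.volumeIoiPow, ENNReal.ofReal]
      rw [integral_withDensity_eq_integral_smul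
          (measurable_subtype_coe.pow_const _).real_toNNReal,
        integral_subtype_comap measurableSet_Ioi
          fun t : ℝ ↦ Real.toNNReal (t ^ d) • (t ^ k * exp (-t ^ 2))]
      refine setIntegral_congr_fun measurableSet_Ioi fun t ht ↦ ?_
      simp only [NNReal.smul_def, Real.coe_toNNReal _ (pow_nonneg ht.out.le _), smul_eq_mul,
        rpow_add ht.out, rpow_natCast, rpow_two]
      ring
    _ = _ := by
      have : (0 : ℝ) ≤ k := k.cast_nonneg
      rw [integral_rpow_mul_exp_neg_rpow (by norm_num) (by linarith), hdim]
      ring_nf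

/-- The `k`-th moment `∫ t ^ k * exp (-t ^ 2)` of the Gaussian weight on the line. -/
def gaussMoment (k : ℕ) : ℝ := ∫ t : ℝ, t ^ k * exp (-t ^ 2)

lemma gaussMoment_of_odd {k : ℕ} (hk : Odd k) : gaussMoment k = 0 := by
  have h := integral_neg_eq_self (fun t : ℝ ↦ t ^ k * exp (-t ^ 2)) volume
  simp only [hk.neg_pow, neg_sq, neg_mul, integral_neg] at h
  rw [gaussMoment]
  linarith

lemma gaussMoment_of_even {k : ℕ} (hk : Even k) : gaussMoment k = Gamma ((k + 1) / 2) := by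
  have habs : (fun t : ℝ ↦ t ^ k * exp (-t ^ 2)) = fun t ↦ |t| ^ k * exp (-|t| ^ 2) := by
    ext t
    rw [sq_abs, hk.pow_abs]
  rw [gaussMoment, habs, integral_comp_abs (f := fun s : ℝ ↦ s ^ k * exp (-s ^ 2))]
  have h := integral_rpow_mul_exp_neg_rpow (p := 2) (q := k) (by norm_num)
    (by linarith [(k.cast_nonneg : (0 : ℝ) ≤ k)])
  simp only [rpow_natCast, rpow_two] at h
  rw [h]
  ring

lemma gaussMoment_add_two (k : ℕ) : gaussMoment (k + 2) = (k + 1) / 2 * gaussMoment k := by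
  rcases k.even_or_odd with hk | hk
  · rw [gaussMoment_of_even hk, gaussMoment_of_even (hk.add even_two),
      ← Gamma_add_one (by positivity)]
    congr 1
    push_cast
    ring
  · rw [gaussMoment_of_odd hk, gaussMoment_of_odd (hk.add_even even_two), mul_zero]

lemma integral_prod_inner_pow_mul_exp_neg_norm_sq {ι E : Type*} [Fintype ι] [NormedAddCommGroup E]
    [InnerProductSpace ℝ E] [FiniteDimensional ℝ E] [MeasurableSpace E] [BorelSpace E]
    (b : OrthonormalBasis ι ℝ E) (s : ι → ℕ) :
    ∫ y, (∏ i, ⟪b i, y⟫ ^ s i) * exp (-‖y‖ ^ 2) = ∏ i, gaussMoment (s i) := by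
  have hrepr := b.measurePreserving_repr.integral_comp b.repr.toHomeomorph.measurableEmbedding
    fun z : EuclideanSpace ℝ ι ↦ (∏ i, z i ^ s i) * exp (-‖z‖ ^ 2)
  have hLp := (EuclideanSpace.volume_preserving_symm_measurableEquiv_toLp ι).integral_comp'
    fun z : ι → ℝ ↦ ∏ i, (z i ^ s i * exp (-z i ^ 2))
  have hprod := integral_fintype_prod_volume_eq_prod
    fun (i : ι) (t : ℝ) ↦ t ^ s i * exp (-t ^ 2)
  simp only [OrthonormalBasis.repr_apply_apply, LinearIsometryEquiv.norm_map] at hrepr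
  simp only [gaussMoment]
  rw [hrepr, ← hprod, ← hLp]
  refine integral_congr_ae (.of_forall fun z ↦ ?_)
  simp [Finset.prod_mul_distrib, ← exp_sum, EuclideanSpace.norm_sq_eq]

instance neZero_toSphere {E : Type*} [NormedAddCommGroup E] [NormedSpace ℝ E]
    [FiniteDimensional ℝ E] [Nontrivial E] [MeasurableSpace E] [BorelSpace E] (μ : Measure E)
    [μ.IsAddHaarMeasure] : NeZero μ.toSphere :=
  ⟨μ.toSphere_ne_zero⟩

instance isProbabilityMeasure_sphMeasure (d : ℕ) : IsProbabilityMeasure (sphMeasure d) :=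
  isProbabilityMeasureSMul

section SphereMoments

variable {d : ℕ}

lemma integral_sphMeasure_mul_Gamma {f : EuclideanSpace ℝ (Fin (d + 1)) → ℝ} {k : ℕ}
    (hf : ∀ (t : ℝ) (y : EuclideanSpace ℝ (Fin (d + 1))), 0 < t → f (t • y) = t ^ k * f y) :
    (∫ y : Sph d, f y ∂sphMeasure d) * Gamma ((k + d + 1) / 2) =
      Gamma ((d + 1) / 2) * (∫ y, f y * exp (-‖y‖ ^ 2)) /
        ∫ y : EuclideanSpace ℝ (Fin (d + 1)), exp (-‖y‖ ^ 2) := by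
  have := Gamma_pos_of_pos (by positivity : (0 : ℝ) < (d + 1) / 2)
  have hone := integral_mul_exp_neg_norm_sq_of_homogeneous
    (volume : Measure (EuclideanSpace ℝ (Fin (d + 1)))) (f := fun _ ↦ 1) (k := 0) (by simp)
  simp only [one_mul, integral_const, smul_eq_mul, mul_one, finrank_euclideanSpace,
    Fintype.card_fin, Nat.cast_zero, zero_add, Nat.cast_add, Nat.cast_one] at hone
  rw [hone, integral_mul_exp_neg_norm_sq_of_homogeneous volume hf, sphMeasure,
    integral_smul_measure, ENNReal.toReal_inv, ← Measure.real]
  have huniv := measureReal_univ_pos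
    (μ := (volume : Measure (EuclideanSpace ℝ (Fin (d + 1)))).toSphere)
  simp only [finrank_euclideanSpace, Fintype.card_fin, Nat.cast_add, Nat.cast_one, smul_eq_mul,
    ← add_assoc]
  field_simp

lemma integral_prod_inner_pow_mul_Gamma
    (b : OrthonormalBasis (Fin (d + 1)) ℝ (EuclideanSpace ℝ (Fin (d + 1)))) (s : Fin (d + 1) → ℕ) :
    (∫ y : Sph d, ∏ i, ⟪b i, (y : EuclideanSpace ℝ (Fin (d + 1)))⟫ ^ s i ∂sphMeasure d) *
        Gamma (((∑ i, s i : ℕ) + d + 1) / 2) =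
      Gamma ((d + 1) / 2) * (∏ i, gaussMoment (s i)) /
        ∫ y : EuclideanSpace ℝ (Fin (d + 1)), exp (-‖y‖ ^ 2) := by
  rw [integral_sphMeasure_mul_Gamma (f := fun y ↦ ∏ i, ⟪b i, y⟫ ^ s i),
    integral_prod_inner_pow_mul_exp_neg_norm_sq]
  intro t y _
  simp only [inner_smul_right, mul_pow, Finset.prod_mul_distrib, Finset.prod_pow_eq_pow_sum]

end SphereMoments

lemma jacobiIntegral_derivative_eq_zero {a b : ℝ} (ha : -1 < a) (hb : -1 < b) (p : ℝ[X]) :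
    jacobiIntegral a b (X * (1 - X) * derivative p + (C (a + 1) * (1 - X) - C (b + 1) * X) * p) =
      0 := by
  induction p using Polynomial.induction_on' with
  | add p q hp hq =>
    rw [← add_zero (0 : ℝ)]
    nth_rw 1 [← hp]
    rw [← hq, ← jacobiIntegral_add ha hb, derivative_add]
    ring_nf
  | monomial k c =>
    have hk : (0 : ℝ) ≤ k := k.cast_nonneg
    have hp : X * (1 - X) * derivative (monomial k c) +
          (C (a + 1) * (1 - X) - C (b + 1) * X) * monomial k c =
        C (c * (a + k + 1)) * X ^ k + C (-c * (a + k + b + 2)) * X ^ (k + 1) := by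
      rw [← C_mul_X_pow_eq_monomial, derivative_C_mul_X_pow]
      rcases k with _ | k
      · simp [map_ofNat C 2]
        ring
      · simp [map_ofNat C 2]
        ring
    have h1 : a + k + 1 ≠ 0 := by linarith
    have h2 : a + k + b + 2 ≠ 0 := by linarith
    have hΓ := (Gamma_pos_of_pos (by linarith : 0 < a + k + b + 2)).ne'
    rw [hp, jacobiIntegral_add ha hb, jacobiIntegral_C_mul, jacobiIntegral_C_mul,
      jacobiIntegral_X_pow ha hb, jacobiIntegral_X_pow ha hb]
    push_cast
    rw [show a + (k + 1) + 1 = a + k + 1 + 1 by ring,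
      show a + (k + 1) + b + 2 = a + k + b + 2 + 1 by ring, Gamma_add_one h1, Gamma_add_one h2]
    field_simp
    ring

section Symmetric

variable {β : ℝ}

lemma jacobiIntegral_sub_one_one_pos (hβ : 0 < β) : 0 < jacobiIntegral (β - 1) (β - 1) 1 := by
  rw [jacobiIntegral_one (by linarith) (by linarith), sub_add_cancel]
  exact div_pos (mul_pos (Gamma_pos_of_pos hβ) (Gamma_pos_of_pos hβ))
    (Gamma_pos_of_pos (by linarith))

lemma jacobiIntegral_one_sub_two_X (hβ : 0 < β) :
    jacobiIntegral (β - 1) (β - 1) (1 - 2 * X) = 0 := by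
  have h := jacobiIntegral_derivative_eq_zero (a := β - 1) (b := β - 1) (by linarith)
    (by linarith) 1
  have hp : X * (1 - X) * derivative 1 + (C (β - 1 + 1) * (1 - X) - C (β - 1 + 1) * X) * 1 =
      C β * (1 - 2 * X) := by
    rw [derivative_one, sub_add_cancel]
    ring
  rw [hp, jacobiIntegral_C_mul] at h
  exact (mul_eq_zero.1 h).resolve_left hβ.ne'

lemma jacobiIntegral_one_sub_two_X_pow_add_two (hβ : 0 < β) (k : ℕ) :
    ((k + 1) / 2 + β) * jacobiIntegral (β - 1) (β - 1) ((1 - 2 * X) ^ (k + 2)) =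
      (k + 1) / 2 * jacobiIntegral (β - 1) (β - 1) ((1 - 2 * X) ^ k) := by
  have h := jacobiIntegral_derivative_eq_zero (a := β - 1) (b := β - 1) (by linarith)
    (by linarith) ((1 - 2 * X) ^ (k + 1))
  have hp : X * (1 - X) * derivative ((1 - 2 * X) ^ (k + 1)) +
        (C (β - 1 + 1) * (1 - X) - C (β - 1 + 1) * X) * (1 - 2 * X) ^ (k + 1) =
      C ((k + 1) / 2 + β) * (1 - 2 * X) ^ (k + 2) + C (-(((k : ℝ) + 1) / 2)) * (1 - 2 * X) ^ k := by
    refine Polynomial.funext fun t ↦ ?_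
    simp [derivative_pow]
    ring
  rw [hp, jacobiIntegral_add (by linarith) (by linarith), jacobiIntegral_C_mul,
    jacobiIntegral_C_mul] at h
  linarith

end Symmetric

lemma integrable_of_continuous {α : Type*} [TopologicalSpace α] [CompactSpace α]
    [MeasurableSpace α] [OpensMeasurableSpace α] {μ : Measure α} [IsFiniteMeasure μ] {f : α → ℝ}
    (hf : Continuous f) : Integrable f μ :=
  hf.integrable_of_hasCompactSupport (HasCompactSupport.of_compactSpace f)

section Moments

variable {d : ℕ} (b : OrthonormalBasis (Fin (d + 1)) ℝ (EuclideanSpace ℝ (Fin (d + 1))))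
  (s : Fin d → ℕ) {β : ℝ}

lemma integral_prod_inner_succ_pow_of_odd {i : Fin d} (hi : Odd (s i)) :
    ∫ y : Sph d, ∏ i, ⟪b i.succ, y.1⟫ ^ s i ∂sphMeasure d = 0 := by
  have h := integral_prod_inner_pow_mul_Gamma b (Fin.cons 0 s)
  rw [Finset.prod_eq_zero (Finset.mem_univ i.succ) (by simpa using gaussMoment_of_odd hi), mul_zero,
    zero_div, mul_eq_zero] at h
  simpa [Fin.prod_univ_succ] using h.resolve_right (Gamma_pos_of_pos (by positivity)).ne'

lemma integral_inner_mul_prod :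
    ∫ y : Sph d, ⟪b 0, y.1⟫ *
      ∏ i, ⟪b i.succ, y.1⟫ ^ s i ∂sphMeasure d = 0 := by
  have h := integral_prod_inner_pow_mul_Gamma b (Fin.cons 1 s)
  rw [Finset.prod_eq_zero (Finset.mem_univ 0) (by simpa using gaussMoment_of_odd odd_one), mul_zero,
    zero_div, mul_eq_zero] at h
  simpa [Fin.prod_univ_succ] using h.resolve_right (Gamma_pos_of_pos (by positivity)).ne'

lemma integral_inner_pow_add_two_mul_prod (hβ : ((d + ∑ i, s i : ℕ) : ℝ) = 2 * β) (k : ℕ) :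
    ((k + 1) / 2 + β) *
        ∫ y : Sph d, ⟪b 0, y.1⟫ ^ (k + 2) * ∏ i, ⟪b i.succ, y.1⟫ ^ s i ∂sphMeasure d =
      (k + 1) / 2 * ∫ y : Sph d, ⟪b 0, y.1⟫ ^ k * ∏ i, ⟪b i.succ, y.1⟫ ^ s i ∂sphMeasure d := by
  have h₀ := integral_prod_inner_pow_mul_Gamma b (Fin.cons k s)
  have h₂ := integral_prod_inner_pow_mul_Gamma b (Fin.cons (k + 2) s)
  simp only [Fin.prod_univ_succ, Fin.sum_univ_succ, Fin.cons_zero, Fin.cons_succ] at h₀ h₂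
  have hpos : 0 < ((k : ℝ) + 1) / 2 + β := by
    have : (0 : ℝ) ≤ (d + ∑ i, s i : ℕ) := Nat.cast_nonneg _
    have : (0 : ℝ) ≤ k := k.cast_nonneg
    linarith
  push_cast at hβ h₀ h₂
  rw [show ((k : ℝ) + ∑ i, (s i : ℝ) + d + 1) / 2 = (k + 1) / 2 + β by linarith] at h₀
  rw [show ((k : ℝ) + 2 + ∑ i, (s i : ℝ) + d + 1) / 2 = (k + 1) / 2 + β + 1 by linarith,
    Gamma_add_one hpos.ne', gaussMoment_add_two] at h₂
  refine mul_right_cancel₀ (Gamma_pos_of_pos hpos).ne' ?_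
  linear_combination h₂ - (k + 1) / 2 * h₀

lemma integral_inner_pow_mul_prod_mul_jacobiIntegral (hβ : ((d + ∑ i, s i : ℕ) : ℝ) = 2 * β)
    (hβ₀ : 0 < β) (k : ℕ) :
    (∫ y : Sph d, ⟪b 0, y.1⟫ ^ k * ∏ i, ⟪b i.succ, y.1⟫ ^ s i ∂sphMeasure d) *
        jacobiIntegral (β - 1) (β - 1) 1 =
      (∫ y : Sph d, ∏ i, ⟪b i.succ, y.1⟫ ^ s i ∂sphMeasure d) *
        jacobiIntegral (β - 1) (β - 1) ((1 - 2 * X) ^ k) := by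
  induction k using Nat.twoStepInduction with
  | zero => simp
  | one => simp only [pow_one, integral_inner_mul_prod, jacobiIntegral_one_sub_two_X hβ₀, zero_mul,
      mul_zero]
  | more k ih _ =>
    have hsph := integral_inner_pow_add_two_mul_prod b s hβ k
    have hjac := jacobiIntegral_one_sub_two_X_pow_add_two hβ₀ k
    refine mul_left_cancel₀ (by positivity : ((k : ℝ) + 1) / 2 + β ≠ 0) ?_
    rw [← mul_assoc, hsph, mul_left_comm _ (∫ _, _ ∂_), hjac]
    linear_combination ((k : ℝ) + 1) / 2 * ih

lemma integral_eval_inner_mul_prod_mul_jacobiIntegral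
    (hβ : ((d + ∑ i, s i : ℕ) : ℝ) = 2 * β) (hβ₀ : 0 < β) (p : ℝ[X]) :
    (∫ y : Sph d, p.eval ⟪b 0, y.1⟫ * ∏ i, ⟪b i.succ, y.1⟫ ^ s i ∂sphMeasure d) *
        jacobiIntegral (β - 1) (β - 1) 1 =
      (∫ y : Sph d, ∏ i, ⟪b i.succ, y.1⟫ ^ s i ∂sphMeasure d) *
        jacobiIntegral (β - 1) (β - 1) (p.comp (1 - 2 * X)) := by
  rw [comp, eval₂_eq_sum_range, jacobiIntegral_sum (by linarith) (by linarith)]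
  simp only [eval_eq_sum_range, Finset.sum_mul, mul_assoc]
  rw [integral_finsetSum _ fun k _ ↦ integrable_of_continuous (by fun_prop), Finset.sum_mul,
    Finset.mul_sum]
  refine Finset.sum_congr rfl fun k _ ↦ ?_
  rw [integral_const_mul, jacobiIntegral_C_mul, mul_assoc,
    integral_inner_pow_mul_prod_mul_jacobiIntegral b s hβ hβ₀, mul_left_comm]

end Moments

/-! ### Zonal integrals and the reproducing kernel -/

/-- `f` is the restriction to the sphere of a polynomial of total degree at most `k` in the
coordinates attached to the orthonormal basis `b`. The basis is a parameter so that the integrals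
against a zonal function of pole `x` can be computed in coordinates adapted to `x`; see
`IsCoordPoly.change_basis`. -/
def IsCoordPoly {d : ℕ} (b : OrthonormalBasis (Fin (d + 1)) ℝ (EuclideanSpace ℝ (Fin (d + 1))))
    (k : ℕ) (f : Sph d → ℝ) : Prop :=
  ∃ p : MvPolynomial (Fin (d + 1)) ℝ, p.totalDegree ≤ k ∧
    ∀ y : Sph d, f y = MvPolynomial.eval (fun i ↦ ⟪b i, y.1⟫) p

namespace IsCoordPoly

variable {d : ℕ} {b : OrthonormalBasis (Fin (d + 1)) ℝ (EuclideanSpace ℝ (Fin (d + 1)))}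
  {k l : ℕ} {f g : Sph d → ℝ}

lemma mono (hf : IsCoordPoly b k f) (hkl : k ≤ l) : IsCoordPoly b l f :=
  let ⟨p, hp, hfp⟩ := hf
  ⟨p, hp.trans hkl, hfp⟩

variable (b) in
lemma const (c : ℝ) : IsCoordPoly b 0 fun _ ↦ c :=
  ⟨MvPolynomial.C c, by simp, by simp⟩

lemma add (hf : IsCoordPoly b k f) (hg : IsCoordPoly b k g) :
    IsCoordPoly b k fun y ↦ f y + g y := by
  obtain ⟨p, hp, hfp⟩ := hf
  obtain ⟨q, hq, hgq⟩ := hg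
  exact ⟨p + q, (MvPolynomial.totalDegree_add p q).trans (max_le hp hq), by simp [hfp, hgq]⟩

lemma mul (hf : IsCoordPoly b k f) (hg : IsCoordPoly b l g) :
    IsCoordPoly b (k + l) fun y ↦ f y * g y := by
  obtain ⟨p, hp, hfp⟩ := hf
  obtain ⟨q, hq, hgq⟩ := hg
  exact ⟨p * q, (MvPolynomial.totalDegree_mul p q).trans (add_le_add hp hq), by simp [hfp, hgq]⟩

lemma const_mul (c : ℝ) (hf : IsCoordPoly b k f) : IsCoordPoly b k fun y ↦ c * f y := by
  simpa using (const b c).mul hf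

lemma pow (hf : IsCoordPoly b k f) (m : ℕ) : IsCoordPoly b (m * k) fun y ↦ f y ^ m := by
  induction m with
  | zero => simpa using const b 1
  | succ m ih => simpa [pow_succ, add_mul] using ih.mul hf

lemma sum {ι : Type*} {s : Finset ι} {F : ι → Sph d → ℝ} (hF : ∀ i ∈ s, IsCoordPoly b k (F i)) :
    IsCoordPoly b k fun y ↦ ∑ i ∈ s, F i y := by
  classical
  induction s using Finset.induction_on with
  | empty => simpa using (const b 0).mono k.zero_le
  | insert i s hi ih =>
    simp only [Finset.sum_insert hi]
    exact (hF i (Finset.mem_insert_self i s)).add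
      (ih fun j hj ↦ hF j (Finset.mem_insert_of_mem hj))

lemma prod {ι : Type*} {s : Finset ι} {m : ι → ℕ} {F : ι → Sph d → ℝ}
    (hF : ∀ i ∈ s, IsCoordPoly b (m i) (F i)) :
    IsCoordPoly b (∑ i ∈ s, m i) fun y ↦ ∏ i ∈ s, F i y := by
  classical
  induction s using Finset.induction_on with
  | empty => simpa using const b 1
  | insert i s hi ih =>
    simp only [Finset.prod_insert hi, Finset.sum_insert hi]
    exact (hF i (Finset.mem_insert_self i s)).mul
      (ih fun j hj ↦ hF j (Finset.mem_insert_of_mem hj))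

variable (b) in
lemma inner_left (v : EuclideanSpace ℝ (Fin (d + 1))) :
    IsCoordPoly b 1 fun y ↦ ⟪v, y.1⟫ := by
  rw [show (fun y : Sph d ↦ ⟪v, y.1⟫) = fun y ↦ ∑ i, ⟪v, b i⟫ * ⟪b i, y.1⟫ from
    funext fun y ↦ (b.sum_inner_mul_inner v y.1).symm]
  exact sum fun i _ ↦ const_mul _ ⟨MvPolynomial.X i, by simp, by simp⟩

lemma eval (hf : IsCoordPoly b k f) (q : ℝ[X]) :
    IsCoordPoly b (q.natDegree * k) fun y ↦ q.eval (f y) := by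
  simp only [eval_eq_sum_range]
  exact sum fun i hi ↦ const_mul _ ((hf.pow i).mono
    (Nat.mul_le_mul_right k (Nat.lt_succ_iff.1 (Finset.mem_range.1 hi))))

lemma exists_eq_sum_monomial (hf : IsCoordPoly b k f) :
    ∃ p : MvPolynomial (Fin (d + 1)) ℝ, (∀ s ∈ p.support, ∑ i, s i ≤ k) ∧
      ∀ y, f y = ∑ s ∈ p.support, p.coeff s * ∏ i, ⟪b i, y.1⟫ ^ s i := by
  obtain ⟨p, hp, hfp⟩ := hf
  refine ⟨p, fun s hs ↦ ?_, fun y ↦ by rw [hfp, MvPolynomial.eval_eq']⟩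
  rw [← s.sum_fintype (fun _ m ↦ m) fun _ ↦ rfl]
  exact (MvPolynomial.le_totalDegree hs).trans hp

lemma change_basis (b' : OrthonormalBasis (Fin (d + 1)) ℝ (EuclideanSpace ℝ (Fin (d + 1))))
    (hf : IsCoordPoly b k f) : IsCoordPoly b' k f := by
  obtain ⟨p, hp, hfp⟩ := hf.exists_eq_sum_monomial
  rw [funext hfp]
  refine sum fun s hs ↦ const_mul _ ?_
  exact (prod fun i _ ↦ (inner_left b' (b i)).pow (s i)).mono (by simpa using hp s hs)

lemma continuous (hf : IsCoordPoly b k f) : Continuous f := by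
  obtain ⟨p, -, hfp⟩ := hf.exists_eq_sum_monomial
  rw [funext hfp]
  fun_prop

lemma isSphPoly (hf : IsCoordPoly b k f) {n : ℝ} (hn : (k : ℝ) < n) : IsSphPoly d n f := by
  obtain ⟨p, hp, hfp⟩ := hf.change_basis (EuclideanSpace.basisFun (Fin (d + 1)) ℝ)
  refine ⟨p, (Nat.cast_le.2 hp).trans_lt hn, fun y ↦ ?_⟩
  simpa [EuclideanSpace.inner_single_left] using hfp y

end IsCoordPoly

lemma exists_isCoordPoly_of_isSphPoly {d : ℕ} {n : ℝ} {f : Sph d → ℝ} (hf : IsSphPoly d n f) :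
    ∃ k : ℕ, (k : ℝ) < n ∧ IsCoordPoly (EuclideanSpace.basisFun (Fin (d + 1)) ℝ) k f := by
  obtain ⟨p, hp, hfp⟩ := hf
  exact ⟨p.totalDegree, hp, p, le_rfl, fun y ↦ by simp [hfp, EuclideanSpace.inner_single_left]⟩

lemma exists_orthonormalBasis_zero_eq {d : ℕ} (x : Sph d) :
    ∃ b : OrthonormalBasis (Fin (d + 1)) ℝ (EuclideanSpace ℝ (Fin (d + 1))), b 0 = x := by
  have hx : Orthonormal ℝ (({0} : Set (Fin (d + 1))).domRestrict fun _ ↦ x.1) :=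
    ⟨fun _ ↦ norm_eq_of_mem_sphere x, fun i j hij ↦ absurd (Subsingleton.elim i j) hij⟩
  obtain ⟨b, hb⟩ := hx.exists_orthonormalBasis_extension_of_card_eq (by simp)
  exact ⟨b, hb 0 rfl⟩

/-- The haversine `(1 - cos θ) / 2 = sin² (θ / 2)` of the angle `θ` between two points of the
sphere. All zonal functions below are polynomials in it. -/
def haversine {d : ℕ} (x y : Sph d) : ℝ := (1 - ip x y) / 2

section Haversine

variable {d : ℕ} (x y : Sph d)

lemma ip_self : ip x x = 1 := by
  simp [ip]

lemma haversine_self : haversine x x = 0 := by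
  simp [haversine, ip_self]

lemma dist_sq_eq_four_mul_haversine : dist x y ^ 2 = 4 * haversine x y := by
  rw [Subtype.dist_eq, dist_eq_norm, norm_sub_sq_real, norm_eq_of_mem_sphere,
    norm_eq_of_mem_sphere, haversine, ip]
  ring

lemma haversine_mem_Icc : haversine x y ∈ Icc (0 : ℝ) 1 := by
  have h := abs_le.1 (abs_real_inner_le_norm x.1 y.1)
  rw [norm_eq_of_mem_sphere, norm_eq_of_mem_sphere, mul_one] at h
  constructor <;> rw [haversine, ip] <;> linarith

lemma dist_eq_two_mul_sqrt_haversine : dist x y = 2 * √(haversine x y) := by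
  rw [← sqrt_sq (dist_nonneg (x := x) (y := y)), dist_sq_eq_four_mul_haversine,
    sqrt_mul zero_le_four, show (4 : ℝ) = 2 ^ 2 by norm_num, sqrt_sq zero_le_two]

lemma isCoordPoly_haversine
    (b : OrthonormalBasis (Fin (d + 1)) ℝ (EuclideanSpace ℝ (Fin (d + 1)))) :
    IsCoordPoly b 1 (haversine x) := by
  have h := ((IsCoordPoly.const b (1 / 2)).mono zero_le_one).add
    ((IsCoordPoly.inner_left b x).const_mul (-1 / 2))
  convert h using 2 with y
  rw [haversine, ip]
  ring

lemma isCoordPoly_eval_haversine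
    (b : OrthonormalBasis (Fin (d + 1)) ℝ (EuclideanSpace ℝ (Fin (d + 1)))) (p : ℝ[X]) :
    IsCoordPoly b p.natDegree fun y ↦ p.eval (haversine x y) := by
  simpa using (isCoordPoly_haversine x b).eval p

variable {x} in
lemma integral_eval_haversine_mul_prod_mul_jacobiIntegral {β : ℝ}
    {b : OrthonormalBasis (Fin (d + 1)) ℝ (EuclideanSpace ℝ (Fin (d + 1)))} (hb : b 0 = x.1)
    {s : Fin d → ℕ} (hβ : ((d + ∑ i, s i : ℕ) : ℝ) = 2 * β) (hβ₀ : 0 < β) (p : ℝ[X]) :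
    (∫ y, p.eval (haversine x y) * ∏ i, ⟪b i.succ, y.1⟫ ^ s i ∂sphMeasure d) *
        jacobiIntegral (β - 1) (β - 1) 1 =
      (∫ y : Sph d, ∏ i, ⟪b i.succ, y.1⟫ ^ s i ∂sphMeasure d) *
        jacobiIntegral (β - 1) (β - 1) p := by
  have hcomp : (C (1 / 2 : ℝ) * (1 - X)).comp (1 - 2 * X) = X := by
    refine Polynomial.funext fun t ↦ ?_
    simp
  rw [← p.comp_X, ← hcomp, ← comp_assoc,
    ← integral_eval_inner_mul_prod_mul_jacobiIntegral b s hβ hβ₀, hb, comp_assoc, hcomp]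
  simp only [eval_comp, eval_X, eval_mul, eval_C, eval_sub, eval_one, one_div_mul_eq_div,
    haversine, ip]

lemma integral_eval_haversine (hd : 0 < d) (p : ℝ[X]) :
    (∫ y, p.eval (haversine x y) ∂sphMeasure d) *
        jacobiIntegral ((d : ℝ) / 2 - 1) ((d : ℝ) / 2 - 1) 1 =
      jacobiIntegral ((d : ℝ) / 2 - 1) ((d : ℝ) / 2 - 1) p := by
  obtain ⟨b, hb⟩ := exists_orthonormalBasis_zero_eq x
  have h := integral_eval_haversine_mul_prod_mul_jacobiIntegral hb (β := d / 2) (s := 0)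
    (by simp; ring) (by positivity) p
  simpa only [Pi.zero_apply, pow_zero, Finset.prod_const_one, mul_one, integral_const,
    probReal_univ, smul_eq_mul, one_mul] using h

end Haversine

section Reproducing

variable {d : ℕ}

lemma omegaS_div_omegaS_sub_one (hd : 0 < d) : omegaS d / omegaS (d - 1) =
    2 ^ ((d : ℝ) - 1) * jacobiIntegral ((d : ℝ) / 2 - 1) ((d : ℝ) / 2 - 1) 1 := by
  have hd' : (0 : ℝ) < d := Nat.cast_pos.2 hd
  have hdup := Gamma_mul_Gamma_add_half ((d : ℝ) / 2)
  have hπ : π ^ (((d : ℝ) + 1) / 2) = π ^ ((d : ℝ) / 2) * √π := by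
    rw [sqrt_eq_rpow, ← rpow_add pi_pos, add_div]
  rw [← add_div, mul_div_cancel₀ _ two_ne_zero, ← neg_sub, rpow_neg zero_le_two] at hdup
  have hd1 : ((d - 1 : ℕ) : ℝ) + 1 = d := by rw [← Nat.cast_add_one, Nat.sub_add_cancel hd]
  have := Gamma_pos_of_pos (by positivity : 0 < (d : ℝ) / 2)
  have := Gamma_pos_of_pos (by positivity : 0 < ((d : ℝ) + 1) / 2)
  have := Gamma_pos_of_pos hd'
  have : (0 : ℝ) < 2 ^ ((d : ℝ) - 1) := by positivity
  rw [omegaS, omegaS, hd1, jacobiIntegral_one (by linarith) (by linarith), sub_add_cancel,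
    show (d : ℝ) / 2 - 1 + (d / 2 - 1) + 2 = d by ring, hπ]
  field_simp
  field_simp at hdup
  linear_combination -hdup

/-- The reproducing kernel of the polynomials of degree at most `M` on `S^d`, as a polynomial in
the haversine of the two arguments. -/
def kernelPoly (d M : ℕ) : ℝ[X] :=
  C (jacobiIntegral ((d : ℝ) / 2 - 1) ((d : ℝ) / 2 - 1) 1 *
    ((d / 2 + M) / (Gamma (d / 2) * M !))) * shiftedJacobi (d / 2) (d / 2 - 1) M

lemma natDegree_kernelPoly_le (d M : ℕ) : (kernelPoly d M).natDegree ≤ M :=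
  (natDegree_C_mul_le _ _).trans (natDegree_shiftedJacobi_le _ _ _)

lemma sphK_succ_ip (hd : 2 ≤ d) (M : ℕ) (x y : Sph d) :
    sphK d (M + 1) (ip x y) = (kernelPoly d M).eval (haversine x y) := by
  have hd' : (2 : ℝ) ≤ d := by exact_mod_cast hd
  have := Gamma_pos_of_pos (by positivity : 0 < (d : ℝ) / 2 + M)
  rw [sphK, omegaS_div_omegaS_sub_one (by lia),
    jacobiK_succ (by linarith) (by linarith) (by linarith), kernelPoly, eval_mul, eval_C,
    sub_add_cancel, haversine, show (d : ℝ) / 2 - 1 + (d / 2 - 1) + 1 = d - 1 by ring,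
    show (M : ℝ) + (d / 2 - 1) + 2 = d / 2 + M + 1 by ring,
    show (M : ℝ) + (d / 2 - 1) + 1 = d / 2 + M by ring, Gamma_add_one (by positivity)]
  field_simp

lemma jacobiIntegral_kernelPoly_mul (hd : 0 < d) {M : ℕ} {q : ℝ[X]} (hq : q.natDegree ≤ M) :
    jacobiIntegral ((d : ℝ) / 2 - 1) ((d : ℝ) / 2 - 1) (kernelPoly d M * q) =
      jacobiIntegral ((d : ℝ) / 2 - 1) ((d : ℝ) / 2 - 1) 1 * q.eval 0 := by
  have hd' : (0 : ℝ) < d := Nat.cast_pos.2 hd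
  have := Gamma_pos_of_pos (by positivity : 0 < (d : ℝ) / 2)
  have := Gamma_pos_of_pos (by positivity : 0 < (d : ℝ) / 2 + M)
  rw [kernelPoly, mul_assoc, jacobiIntegral_C_mul,
    jacobiIntegral_sub_one_shiftedJacobi_mul (by positivity) (by linarith) hq,
    jacobiIntegral_sub_one_shiftedJacobi _ (by positivity) (by linarith),
    show (d : ℝ) / 2 - 1 + M + 1 = d / 2 + M by ring, Gamma_add_one (by positivity)]
  field_simp

lemma jacobiIntegral_X_mul_one_sub_X_pow_mul (a b : ℝ) (j : ℕ) (p : ℝ[X]) :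
    jacobiIntegral a b ((X * (1 - X)) ^ j * p) = jacobiIntegral (a + j) (b + j) p := by
  refine setIntegral_congr_fun measurableSet_Ioo fun u hu ↦ ?_
  simp only [eval_mul, eval_pow, eval_X, eval_sub, eval_one, rpow_add hu.1,
    rpow_add (sub_pos.2 hu.2), rpow_natCast, mul_pow]
  ring

variable {x : Sph d} {b : OrthonormalBasis (Fin (d + 1)) ℝ (EuclideanSpace ℝ (Fin (d + 1)))}

lemma integral_eval_kernelPoly_mul_pow_mul_prod_succ (hd : 0 < d) (hb : b 0 = x.1) {M k : ℕ}
    {s : Fin d → ℕ} (hs : k + ∑ i, s i ≤ M) :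
    ∫ y, (kernelPoly d M * (1 - 2 * X) ^ k).eval (haversine x y) *
      ∏ i, ⟪b i.succ, y.1⟫ ^ s i ∂sphMeasure d = 0 ^ ∑ i, s i := by
  by_cases hodd : ∃ i, Odd (s i)
  · obtain ⟨i, hi⟩ := hodd
    have hsum : 0 < ∑ i, s i := hi.pos.trans_le (Finset.single_le_sum_of_canonicallyOrdered
      (Finset.mem_univ i))
    have hβ : 0 < (d + ∑ i, s i : ℕ) / (2 : ℝ) := by positivity
    have h := integral_eval_haversine_mul_prod_mul_jacobiIntegral hb
      (mul_div_cancel₀ _ two_ne_zero).symm hβ (kernelPoly d M * (1 - 2 * X) ^ k)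
    rw [integral_prod_inner_succ_pow_of_odd b s hi, zero_mul, mul_eq_zero] at h
    rw [zero_pow hsum.ne', h.resolve_right (jacobiIntegral_sub_one_one_pos hβ).ne']
  · obtain ⟨j, hj⟩ : Even (∑ i, s i) :=
      Finset.even_sum _ fun i _ ↦ Nat.not_odd_iff_even.1 fun hi ↦ hodd ⟨i, hi⟩
    have hdeg : ((X * (1 - X)) ^ j * (1 - 2 * X) ^ k : ℝ[X]).natDegree ≤ M := by
      refine le_trans ?_ (hs : k + _ ≤ M)
      rw [hj]
      compute_degree
      lia
    have h := integral_eval_haversine_mul_prod_mul_jacobiIntegral hb (s := s) (β := d / 2 + j)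
      (by rw [hj]; push_cast; ring) (by positivity) (kernelPoly d M * (1 - 2 * X) ^ k)
    rw [show (d : ℝ) / 2 + j - 1 = d / 2 - 1 + j by ring,
      ← jacobiIntegral_X_mul_one_sub_X_pow_mul _ _ j (_ * _), mul_left_comm,
      jacobiIntegral_kernelPoly_mul hd hdeg] at h
    rcases j.eq_zero_or_pos with rfl | hj₀
    · have hs₀ : ∀ i, s i = 0 := by simpa using hj
      have hJ := jacobiIntegral_sub_one_one_pos (by positivity : 0 < (d : ℝ) / 2)
      simp only [hs₀, pow_zero, Finset.prod_const_one, mul_one, integral_const, probReal_univ,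
        smul_eq_mul, one_mul, CharP.cast_eq_zero, add_zero, eval_pow, eval_sub, eval_one,
        eval_mul, eval_ofNat, eval_X, mul_zero, sub_zero, one_pow, Finset.sum_const_zero] at h ⊢
      exact (mul_eq_right₀ hJ.ne').1 h
    · have hJ := jacobiIntegral_sub_one_one_pos (by positivity : 0 < (d : ℝ) / 2 + j)
      rw [show (d : ℝ) / 2 + j - 1 = d / 2 - 1 + j by ring] at hJ
      rw [eval_mul, eval_pow, eval_mul, eval_X, zero_mul, zero_pow hj₀.ne', zero_mul, mul_zero,
        mul_zero, mul_eq_zero] at h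
      rw [h.resolve_right hJ.ne', zero_pow (by lia)]

lemma integral_prod_inner_pow_mul_kernelPoly (hd : 0 < d) (hb : b 0 = x.1) {M : ℕ}
    {s : Fin (d + 1) → ℕ} (hs : ∑ i, s i ≤ M) :
    ∫ y, (∏ i, ⟪b i, y.1⟫ ^ s i) * (kernelPoly d M).eval (haversine x y) ∂sphMeasure d =
      ∏ i, ⟪b i, x.1⟫ ^ s i := by
  have hy (y : Sph d) : ⟪b 0, y.1⟫ = 1 - 2 * haversine x y := by
    rw [hb, haversine, ip]
    ring
  have hx (i : Fin d) : ⟪b i.succ, x.1⟫ = 0 := by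
    rw [← hb, b.inner_eq_zero i.succ_ne_zero]
  rw [Fin.sum_univ_succ] at hs
  have h := integral_eval_kernelPoly_mul_pow_mul_prod_succ hd hb hs
  simp only [Fin.prod_univ_succ, hx, hy, haversine_self, mul_zero, sub_zero, one_pow, one_mul,
    Finset.prod_pow_eq_pow_sum]
  rw [← h]
  congr 1 with y
  simp
  ring

lemma IsCoordPoly.integral_mul_sphK (hd : 2 ≤ d) {M : ℕ} {f : Sph d → ℝ}
    (hf : IsCoordPoly b M f) (x : Sph d) :
    ∫ y, f y * sphK d (M + 1) (ip x y) ∂sphMeasure d = f x := by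
  obtain ⟨b', hb'⟩ := exists_orthonormalBasis_zero_eq x
  obtain ⟨p, hp, hfp⟩ := (hf.change_basis b').exists_eq_sum_monomial
  have hcont : Continuous fun y : Sph d ↦ (kernelPoly d M).eval (haversine x y) :=
    (isCoordPoly_eval_haversine x b _).continuous
  simp only [sphK_succ_ip hd, hfp, Finset.sum_mul, mul_assoc]
  rw [integral_finsetSum _ fun s _ ↦ integrable_of_continuous (by fun_prop)]
  refine Finset.sum_congr rfl fun s hs ↦ ?_
  rw [integral_const_mul, integral_prod_inner_pow_mul_kernelPoly (by lia) hb' (hp s hs)]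

end Reproducing

/-! ### A polynomial majorant of a fractional power -/

section Majorant

/-- The polynomial with `sinSqPoly k (sin² θ) = sin² (k θ)`. Weighted sums over `k = 2 ^ i`
majorize the non-smooth function `sin^s θ`. -/
def sinSqPoly (k : ℕ) : ℝ[X] :=
  C (1 / 2) * (1 - (Chebyshev.T ℝ k).comp (1 - 2 * X))

lemma natDegree_sinSqPoly_le (k : ℕ) : (sinSqPoly k).natDegree ≤ k := by
  refine (natDegree_C_mul_le _ _).trans ((natDegree_sub_le _ _).trans (max_le (by simp) ?_))
  refine natDegree_comp_le.trans ?_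
  rw [Chebyshev.natDegree_T, Int.natAbs_natCast]
  exact (Nat.mul_le_mul_left k (by compute_degree)).trans (mul_one k).le

lemma eval_sinSqPoly_sin_sq (k : ℕ) (θ : ℝ) :
    (sinSqPoly k).eval (sin θ ^ 2) = sin (k * θ) ^ 2 := by
  have hcos : 1 - 2 * sin θ ^ 2 = cos (2 * θ) := by rw [cos_two_mul, cos_sq']; ring
  simp only [sinSqPoly, eval_mul, eval_C, eval_sub, eval_one, eval_comp, eval_ofNat, eval_X]
  rw [hcos, Chebyshev.T_real_cos, sin_sq_eq_half_sub, Int.cast_natCast]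
  ring_nf

lemma sin_two_pow_mul_sq_le (i : ℕ) (θ : ℝ) : sin (2 ^ i * θ) ^ 2 ≤ (2 ^ i * sin θ) ^ 2 := by
  induction i with
  | zero => simp
  | succ i ih =>
    calc sin (2 ^ (i + 1) * θ) ^ 2 = 4 * sin (2 ^ i * θ) ^ 2 * cos (2 ^ i * θ) ^ 2 := by
          rw [show (2 : ℝ) ^ (i + 1) * θ = 2 * (2 ^ i * θ) by ring, sin_two_mul]; ring
      _ ≤ 4 * (2 ^ i * sin θ) ^ 2 * 1 := by
          gcongr
          exact cos_sq_le_one _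
      _ = (2 ^ (i + 1) * sin θ) ^ 2 := by ring

lemma exists_two_pow_mul_mem_Ioc {a v : ℝ} (hv : 0 < v) (hva : v ≤ 2 * a) :
    ∃ m : ℕ, 2 ^ m * v ∈ Ioc a (2 * a) := by
  obtain ⟨m, hm, hm'⟩ := exists_nat_pow_near ((one_le_div hv).2 hva) (one_lt_two (α := ℝ))
  rw [le_div_iff₀ hv] at hm
  rw [div_lt_iff₀ hv, pow_succ] at hm'
  exact ⟨m, by linarith, hm⟩

variable {s : ℝ}

lemma two_rpow_pow_mul_rpow {v : ℝ} (hv : 0 ≤ v) (m : ℕ) :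
    ((2 : ℝ) ^ (-s)) ^ m * (2 ^ m * v) ^ s = v ^ s := by
  rw [mul_rpow (by positivity) hv, ← mul_assoc, ← rpow_pow_comm zero_le_two, ← mul_pow,
    ← rpow_add two_pos, neg_add_cancel, rpow_zero, one_pow, one_mul]

lemma sum_range_rpow_pow_mul_le_of_lt (hs1 : s < 1) {v : ℝ} {a : ℕ → ℝ}
    (hav : ∀ i, a i ≤ (2 ^ i * v) ^ 2) (m : ℕ) :
    ∑ i ∈ Finset.range m, ((2 : ℝ) ^ (-s)) ^ i * a i ≤
      (2 ^ m * v) ^ 2 * ((2 : ℝ) ^ (-s)) ^ m := by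
  set q : ℝ := 2 ^ (-s)
  have hq : 1 / 2 ≤ q := by
    rw [one_div, ← rpow_neg_one]
    exact rpow_le_rpow_of_exponent_le one_le_two (neg_le_neg hs1.le)
  have hfour (i : ℕ) : q ^ i * (2 ^ i * v) ^ 2 = (4 * q) ^ i * v ^ 2 := by
    rw [mul_pow, mul_pow, ← pow_mul, mul_comm i, pow_mul]; norm_num; ring
  calc ∑ i ∈ Finset.range m, q ^ i * a i
      ≤ ∑ i ∈ Finset.range m, (4 * q) ^ i * v ^ 2 := by
        refine Finset.sum_le_sum fun i _ ↦ ?_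
        rw [← hfour]
        gcongr
        exact hav i
    _ ≤ (4 * q) ^ m * v ^ 2 := by
        rw [← Finset.sum_mul]
        gcongr
        have := geom_sum_mul (4 * q) m
        have : 0 ≤ ∑ i ∈ Finset.range m, (4 * q) ^ i := Finset.sum_nonneg fun i _ ↦ by positivity
        nlinarith
    _ = (2 ^ m * v) ^ 2 * q ^ m := by rw [← hfour, mul_comm]

lemma sum_range_pow_add_mul_le {q : ℝ} (hq0 : 0 ≤ q) (hq1 : q < 1) {a : ℕ → ℝ}
    (ha1 : ∀ i, a i ≤ 1) (m N : ℕ) :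
    ∑ k ∈ Finset.range N, q ^ (m + k) * a (m + k) ≤ (1 - q)⁻¹ * q ^ m :=
  calc ∑ k ∈ Finset.range N, q ^ (m + k) * a (m + k)
      ≤ ∑ k ∈ Finset.range N, q ^ k * q ^ m := by
        refine Finset.sum_le_sum fun k _ ↦ ?_
        rw [pow_add, mul_comm (q ^ m)]
        exact mul_le_of_le_one_right (by positivity) (ha1 _)
    _ ≤ (1 - q)⁻¹ * q ^ m := by
        rw [← Finset.sum_mul, ← tsum_geometric_of_lt_one hq0 hq1]
        gcongr
        exact (summable_geometric_of_lt_one hq0 hq1).sum_le_tsum _ fun _ _ ↦ by positivity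

lemma sum_range_rpow_pow_mul_le (hs : 0 < s) (hs1 : s < 1) {v : ℝ} (hv : v ∈ Icc (0 : ℝ) 1)
    {a : ℕ → ℝ} (ha0 : ∀ i, 0 ≤ a i) (ha1 : ∀ i, a i ≤ 1) (hav : ∀ i, a i ≤ (2 ^ i * v) ^ 2)
    (N : ℕ) :
    ∑ i ∈ Finset.range N, ((2 : ℝ) ^ (-s)) ^ i * a i ≤
      (4 + (1 - (2 : ℝ) ^ (-s))⁻¹) * v ^ s := by
  have hlow := sum_range_rpow_pow_mul_le_of_lt hs1 hav
  set q : ℝ := 2 ^ (-s)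
  have hq1 : q < 1 := rpow_lt_one_of_one_lt_of_neg one_lt_two (neg_lt_zero.2 hs)
  rcases hv.1.eq_or_lt with rfl | hv0
  · rw [zero_rpow hs.ne', mul_zero]
    refine Finset.sum_nonpos fun i _ ↦ mul_nonpos_of_nonneg_of_nonpos (by positivity) ?_
    simpa using hav i
  obtain ⟨m, hm, hm'⟩ := exists_two_pow_mul_mem_Ioc (a := 1) hv0 (by linarith [hv.2])
  have hqm : q ^ m ≤ v ^ s := by
    rw [← two_rpow_pow_mul_rpow hv.1 m]
    exact le_mul_of_one_le_right (by positivity) (one_le_rpow hm.le hs.le)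
  calc ∑ i ∈ Finset.range N, q ^ i * a i
      ≤ ∑ i ∈ Finset.range (m + N), q ^ i * a i :=
        Finset.sum_le_sum_of_subset_of_nonneg (Finset.range_mono (by lia))
          fun i _ _ ↦ mul_nonneg (by positivity) (ha0 i)
    _ ≤ (2 ^ m * v) ^ 2 * q ^ m + (1 - q)⁻¹ * q ^ m := by
        rw [Finset.sum_range_add]
        exact add_le_add (hlow m) (sum_range_pow_add_mul_le (by positivity) hq1 ha1 m N)
    _ ≤ (2 * 1) ^ 2 * q ^ m + (1 - q)⁻¹ * q ^ m := by gcongr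
    _ = (4 + (1 - q)⁻¹) * q ^ m := by ring
    _ ≤ (4 + (1 - q)⁻¹) * v ^ s := by
        gcongr

lemma rpow_le_rpow_neg_mul_two (hs : 0 ≤ s) (hs1 : s ≤ 1) {a θ : ℝ} (ha : 0 < a) (hθ : 0 ≤ θ)
    (haθ : a * θ ≤ 2) : θ ^ s ≤ a ^ (-s) * 2 :=
  calc θ ^ s = a ^ (-s) * (a * θ) ^ s := by
        rw [mul_rpow ha.le hθ, ← mul_assoc, ← rpow_add ha, neg_add_cancel, rpow_zero, one_mul]
    _ ≤ a ^ (-s) * 2 := by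
        gcongr
        refine (rpow_le_rpow (mul_nonneg ha.le hθ) haθ hs).trans ?_
        simpa using rpow_le_rpow_of_exponent_le (one_le_two (α := ℝ)) hs1

lemma half_le_sin_sq {t : ℝ} (ht : t ∈ Icc (π / 4) (π / 2)) : 1 / 2 ≤ sin t ^ 2 := by
  rw [sin_sq_eq_half_sub]
  linarith [cos_nonpos_of_pi_div_two_le_of_le (x := 2 * t) (by linarith [ht.1])
    (by linarith [ht.2, pi_pos])]

lemma rpow_le_sum_sin_sq (hs : 0 < s) (hs1 : s < 1) {n : ℕ} (hn : 0 < n) {θ : ℝ}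
    (hθ : θ ∈ Icc 0 (π / 2)) :
    θ ^ s ≤ 4 * ((n : ℝ) ^ (-s) + ∑ i ∈ Finset.range (Nat.log 2 n + 1),
      ((2 : ℝ) ^ (-s)) ^ i * sin (2 ^ i * θ) ^ 2) := by
  set I := Nat.log 2 n
  have hn' : (0 : ℝ) < n := Nat.cast_pos.2 hn
  have hπ := pi_le_four
  have hterm (i : ℕ) : 0 ≤ ((2 : ℝ) ^ (-s)) ^ i * sin (2 ^ i * θ) ^ 2 := by positivity
  have hsum := Finset.sum_nonneg fun i (_ : i ∈ Finset.range (I + 1)) ↦ hterm i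
  rcases le_or_gt (2 ^ I * θ) (π / 4) with hI | hI
  · have hθn : n * θ ≤ 2 := by
      have hnI : (n : ℝ) ≤ 2 ^ (I + 1) := by
        exact_mod_cast (Nat.lt_pow_succ_log_self one_lt_two n).le
      calc n * θ ≤ 2 ^ (I + 1) * θ := by gcongr; exact hθ.1
        _ = 2 * (2 ^ I * θ) := by ring
        _ ≤ 2 := by linarith
    linarith [rpow_le_rpow_neg_mul_two hs.le hs1.le hn' hθ.1 hθn, rpow_nonneg hn'.le (-s)]
  · have hθ0 : 0 < θ :=
      pos_of_mul_pos_right (lt_trans (by positivity) hI) (by positivity)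
    obtain ⟨m, hm, hm'⟩ := exists_two_pow_mul_mem_Ioc (a := π / 4) hθ0 (by linarith [hθ.2])
    have hmI : m < I + 1 := by
      refine (pow_lt_pow_iff_right₀ (one_lt_two (α := ℝ))).1 (lt_of_mul_lt_mul_right ?_ hθ0.le)
      rw [pow_succ]
      linarith
    have hsin : 1 / 2 ≤ sin (2 ^ m * θ) ^ 2 := half_le_sin_sq ⟨hm.le, by linarith⟩
    calc θ ^ s ≤ ((2 : ℝ) ^ m) ^ (-s) * 2 :=
          rpow_le_rpow_neg_mul_two hs.le hs1.le (by positivity) hθ.1 (by linarith)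
      _ = ((2 : ℝ) ^ (-s)) ^ m * 2 := by rw [rpow_pow_comm zero_le_two]
      _ ≤ 4 * (((2 : ℝ) ^ (-s)) ^ m * sin (2 ^ m * θ) ^ 2) := by
          rw [mul_left_comm]
          gcongr
          linarith
      _ ≤ _ := by
          linarith [rpow_nonneg hn'.le (-s), Finset.single_le_sum (fun i _ ↦ hterm i)
            (Finset.mem_range.2 hmI)]

/-- A polynomial of degree `n` cannot resolve the singularity of `√u ^ s` below the scale
`√u = 1 / n`, whence the term `n ^ (-s)`. -/
lemma exists_polynomial_equiv_sqrt_rpow (hs : 0 ≤ s) (hs1 : s < 1) :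
    ∃ A : ℝ, 1 ≤ A ∧ ∀ n : ℕ, 0 < n → ∃ g : ℝ[X], g.natDegree ≤ n ∧ ∀ u ∈ Icc (0 : ℝ) 1,
      √u ^ s ≤ A * g.eval u ∧ 0 ≤ g.eval u ∧ g.eval u ≤ A * ((n : ℝ) ^ (-s) + √u ^ s) := by
  rcases hs.eq_or_lt with rfl | hs
  · exact ⟨1, le_rfl, fun n _ ↦ ⟨1, by simp, fun u _ ↦ by simp⟩⟩
  have hq : 0 < (1 - (2 : ℝ) ^ (-s))⁻¹ :=
    inv_pos.2 (sub_pos.2 (rpow_lt_one_of_one_lt_of_neg one_lt_two (neg_lt_zero.2 hs)))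
  refine ⟨4 + (1 - (2 : ℝ) ^ (-s))⁻¹, by linarith, fun n hn ↦ ⟨C ((n : ℝ) ^ (-s)) +
    ∑ i ∈ Finset.range (Nat.log 2 n + 1), C (((2 : ℝ) ^ (-s)) ^ i) * sinSqPoly (2 ^ i), ?_,
    fun u hu ↦ ?_⟩⟩
  · refine (natDegree_add_le _ _).trans (max_le (by simp)
      (natDegree_sum_le_of_forall_le _ _ fun i hi ↦ ?_))
    refine (natDegree_C_mul_le _ _).trans ((natDegree_sinSqPoly_le _).trans ?_)
    exact (Nat.pow_le_pow_right two_pos (Nat.lt_succ_iff.1 (Finset.mem_range.1 hi))).trans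
      (Nat.pow_log_le_self 2 hn.ne')
  · have hv : √u ∈ Icc (0 : ℝ) 1 := ⟨sqrt_nonneg u, sqrt_le_one.2 hu.2⟩
    set θ := arcsin √u
    have hsin : sin θ = √u := sin_arcsin (by linarith [hv.1]) hv.2
    have hθ : θ ∈ Icc 0 (π / 2) := ⟨arcsin_nonneg.2 hv.1, arcsin_le_pi_div_two _⟩
    have heval (i : ℕ) : (sinSqPoly (2 ^ i)).eval u = sin (2 ^ i * θ) ^ 2 := by
      rw [← sq_sqrt hu.1, ← hsin, eval_sinSqPoly_sin_sq, Nat.cast_pow, Nat.cast_ofNat]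
    have hlow := rpow_le_sum_sin_sq hs hs1 hn hθ
    have hup := sum_range_rpow_pow_mul_le hs hs1 hv (a := fun i ↦ sin (2 ^ i * θ) ^ 2)
      (fun i ↦ sq_nonneg _) (fun i ↦ sin_sq_le_one _)
      (fun i ↦ hsin ▸ sin_two_pow_mul_sq_le i θ) (Nat.log 2 n + 1)
    have hmono : √u ^ s ≤ θ ^ s := rpow_le_rpow hv.1 (hsin ▸ sin_le hθ.1) hs.le
    have hsum : 0 ≤ ∑ i ∈ Finset.range (Nat.log 2 n + 1),
        ((2 : ℝ) ^ (-s)) ^ i * sin (2 ^ i * θ) ^ 2 := Finset.sum_nonneg fun i _ ↦ by positivity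
    have hns : 0 ≤ (n : ℝ) ^ (-s) := by positivity
    simp only [eval_add, eval_C, eval_finsetSum, eval_mul]
    simp_rw [heval]
    refine ⟨hmono.trans (hlow.trans (mul_le_mul_of_nonneg_right (by linarith)
      (add_nonneg hns hsum))), add_nonneg hns hsum, ?_⟩
    rw [mul_add]
    exact add_le_add (le_mul_of_one_le_left hns (by linarith)) hup

end Majorant

/-! ### The localized moment of the kernel -/

section DampingPolynomial

variable {d n : ℕ} {r : ℝ}

lemma le_of_add_add_one_sq_le (hr : 0 < r) (h : ((d : ℝ) + r + 1) ^ 2 ≤ n * d) :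
    d ≤ n ∧ 4 * (r + 1) ≤ n := by
  have hd : (0 : ℝ) < d := d.cast_nonneg.lt_of_ne fun h0 ↦ by rw [← h0] at h; nlinarith
  constructor <;> by_contra! hc
  · have : (n : ℝ) < d := Nat.cast_lt.2 hc
    nlinarith
  · nlinarith [sq_nonneg ((d : ℝ) - (r + 1))]

/-- The Jacobi factor of `Φ̃_{d;n,r}` in the variable `u = (1 - t) / 2`, normalized to take the
value `1` at `u = 0`. -/
def dampingPoly (d n : ℕ) (r : ℝ) : ℝ[X] :=
  C ((shiftedJacobi (d / 2 + r) (d / 2 - 2) (d * n)).eval 0)⁻¹ *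
    shiftedJacobi (d / 2 + r) (d / 2 - 2) (d * n)

lemma natDegree_dampingPoly_le (d n : ℕ) (r : ℝ) : (dampingPoly d n r).natDegree ≤ d * n :=
  (natDegree_C_mul_le _ _).trans (natDegree_shiftedJacobi_le _ _ _)

lemma eval_zero_dampingPoly (hd : 3 ≤ d) (hr : 0 < r) (n : ℕ) :
    (dampingPoly d n r).eval 0 = 1 := by
  have hd' : (3 : ℝ) ≤ d := by exact_mod_cast hd
  rw [dampingPoly, eval_mul, eval_C,
    inv_mul_cancel₀ (eval_shiftedJacobi_zero_pos _ (by linarith) (by linarith)).ne']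

lemma PhiTilde_ip (hd : 3 ≤ d) (hr : 0 < r) {M : ℕ} (hM : M + 1 = (d + 2) * n) (x y : Sph d) :
    PhiTilde d n r (ip x y) = (kernelPoly d M * dampingPoly d n r).eval (haversine x y) := by
  have hd' : (3 : ℝ) ≤ d := by exact_mod_cast hd
  rw [PhiTilde, ← hM, sphK_succ_ip (by lia),
    jacobiP_div_jacobiP_one (by linarith) (by linarith) (by linarith), eval_mul, dampingPoly,
    eval_mul, eval_C, haversine, ← div_eq_inv_mul]

lemma jacobiIntegral_dampingPoly_sq (hd : 3 ≤ d) (hr : 0 < r) (n : ℕ) :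
    jacobiIntegral (d / 2 + r - 1) (d / 2 - 2) (dampingPoly d n r ^ 2) =
      Gamma (d / 2 + r) * Gamma (d / 2 + r + 1) *
        (Gamma (d * n + d / 2 - 1) / Gamma (d * n + d / 2 - 1 + (r + 2)) *
          (Gamma (d * n + 1) / Gamma (d * n + 1 + (d + r - 2)))) := by
  have hd' : (3 : ℝ) ≤ d := by exact_mod_cast hd
  have hJ := eval_shiftedJacobi_zero_pos (α := (d : ℝ) / 2 + r) (β := d / 2 - 2) (d * n)
    (by linarith) (by linarith)
  rw [dampingPoly, mul_pow, ← C_pow, jacobiIntegral_C_mul,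
    jacobiIntegral_sub_one_shiftedJacobi_sq _ (by linarith) (by linarith), ← mul_assoc, inv_pow,
    sq, mul_inv, mul_assoc _ _ (eval _ _), inv_mul_cancel₀ hJ.ne', mul_one,
    eval_shiftedJacobi_zero, ← Gamma_nat_eq_factorial]
  push_cast
  rw [show (d : ℝ) / 2 - 2 + d * n + 1 = d * n + d / 2 - 1 by ring,
    show (d : ℝ) / 2 + r + d * n + 1 = d * n + d / 2 - 1 + (r + 2) by ring,
    show (d : ℝ) / 2 + r + (d / 2 - 2) + d * n + 1 = d * n + 1 + (d + r - 2) by ring]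
  field_simp

lemma Gamma_div_Gamma_add_le {x : ℝ} (hx : 1 < x) (hr : 0 < r) :
    Gamma x / Gamma (x + r) ≤ ((x - 1) ^ r)⁻¹ := by
  have : 0 < x - 1 := sub_pos.2 hx
  rw [div_le_iff₀ (Gamma_pos_of_pos (by positivity)), inv_mul_eq_div, le_div_iff₀' (by positivity)]
  exact rpow_mul_Gamma_le_Gamma_add hx hr

lemma jacobiIntegral_dampingPoly_sq_le (hd : 3 ≤ d) (hr : 0 < r) (hn : 0 < n) :
    jacobiIntegral (d / 2 + r - 1) (d / 2 - 2) (dampingPoly d n r ^ 2) ≤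
      Gamma (d / 2 + r) * Gamma (d / 2 + r + 1) *
        (((d * n / 2 : ℝ) ^ (r + 2))⁻¹ * ((d * n : ℝ) ^ (d + r - 2))⁻¹) := by
  have hd' : (3 : ℝ) ≤ d := by exact_mod_cast hd
  have hn' : (1 : ℝ) ≤ n := by exact_mod_cast hn
  have hdn : (3 : ℝ) ≤ d * n := by nlinarith
  rw [jacobiIntegral_dampingPoly_sq hd hr]
  have hΓ : 0 < Gamma ((d : ℝ) * n + 1) / Gamma (d * n + 1 + (d + r - 2)) :=
    div_pos (Gamma_pos_of_pos (by linarith)) (Gamma_pos_of_pos (by linarith))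
  have : 0 < Gamma ((d : ℝ) / 2 + r) * Gamma (d / 2 + r + 1) :=
    mul_pos (Gamma_pos_of_pos (by positivity)) (Gamma_pos_of_pos (by positivity))
  gcongr
  · calc _ ≤ (((d : ℝ) * n + d / 2 - 1 - 1) ^ (r + 2))⁻¹ :=
          Gamma_div_Gamma_add_le (by linarith) (by linarith)
      _ ≤ _ := by gcongr; linarith
  · simpa using Gamma_div_Gamma_add_le (x := (d : ℝ) * n + 1) (r := d + r - 2) (by linarith)
      (by linarith)

lemma eval_zero_kernelPoly_le (hd : 2 ≤ d) (M : ℕ) :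
    (kernelPoly d M).eval 0 ≤ jacobiIntegral (d / 2 - 1) (d / 2 - 1) 1 *
      ((d + M) ^ (d : ℝ) / (Gamma (d / 2) * Gamma (d / 2 + 1))) := by
  have hd' : (2 : ℝ) ≤ d := by exact_mod_cast hd
  have : (0 : ℝ) ≤ M := M.cast_nonneg
  have := Gamma_pos_of_pos (by positivity : 0 < (d : ℝ) / 2)
  have := Gamma_pos_of_pos (by positivity : 0 < (d : ℝ) / 2 + 1)
  have hI := jacobiIntegral_sub_one_one_pos (by positivity : 0 < (d : ℝ) / 2)
  have hratio : Gamma (d + M) ≤ (d + M) ^ ((d : ℝ) - 1) * M ! := by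
    have := Gamma_add_le_rpow_mul_Gamma (x := M + 1) (r := d - 1) (by positivity) (by linarith)
    rwa [Gamma_nat_eq_factorial, show (M : ℝ) + 1 + (d - 1) = d + M by ring] at this
  calc (kernelPoly d M).eval 0
      = jacobiIntegral (d / 2 - 1) (d / 2 - 1) 1 *
          ((d / 2 + M) * Gamma (d + M) / M ! / (Gamma (d / 2) * Gamma (d / 2 + 1))) := by
        rw [kernelPoly, eval_mul, eval_C, eval_shiftedJacobi_zero,
          show (d : ℝ) / 2 + (d / 2 - 1) + M + 1 = d + M by ring]
        field_simp
    _ ≤ _ := by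
        gcongr
        rw [div_le_iff₀ (by positivity)]
        calc ((d : ℝ) / 2 + M) * Gamma (d + M)
            ≤ (d + M) * ((d + M) ^ ((d : ℝ) - 1) * M !) := by
              gcongr
              linarith
          _ = (d + M) ^ (d : ℝ) * M ! := by rw [rpow_sub_one (by positivity)]; field_simp

lemma add_div_mul_rpow_le_exp_three (hd : 0 < d) (hdn : d ≤ n) {M : ℕ}
    (hM : M + 1 = (d + 2) * n) : (((d : ℝ) + M) / (d * n)) ^ (d : ℝ) ≤ exp 3 := by
  have hd' : (0 : ℝ) < d := Nat.cast_pos.2 hd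
  have hdn' : (d : ℝ) ≤ n := Nat.cast_le.2 hdn
  have hMn : (M : ℝ) + 1 = (d + 2) * n := by exact_mod_cast hM
  calc (((d : ℝ) + M) / (d * n)) ^ (d : ℝ) ≤ exp (3 / d) ^ (d : ℝ) := by
        gcongr
        refine le_trans ?_ (add_one_le_exp _)
        rw [div_le_iff₀ (mul_pos hd' (hd'.trans_le hdn')), add_mul, div_mul_eq_mul_div,
          mul_left_comm, mul_div_cancel_left₀ _ hd'.ne']
        linarith
    _ = exp 3 := by rw [← exp_mul, div_mul_cancel₀ _ hd'.ne']

lemma half_add_div_mul_rpow_le (hr : 0 < r) (hd : 0 < d) (hn : 0 < n) :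
    (((d : ℝ) / 2 + r + 1) / (d * n)) ^ (2 * r) ≤ (r + 2) ^ (2 * r) * ((n : ℝ) ^ (-r)) ^ 2 := by
  have hd' : (1 : ℝ) ≤ d := by exact_mod_cast hd
  have hn' : (0 : ℝ) < n := Nat.cast_pos.2 hn
  calc (((d : ℝ) / 2 + r + 1) / (d * n)) ^ (2 * r) ≤ ((r + 2) / n) ^ (2 * r) := by
        gcongr ?_ ^ _
        rw [← div_div]
        gcongr
        rw [div_le_iff₀ (by positivity)]
        nlinarith
    _ = (r + 2) ^ (2 * r) * ((n : ℝ) ^ (-r)) ^ 2 := by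
        rw [div_rpow (by positivity) hn'.le, div_eq_mul_inv, ← rpow_neg hn'.le,
          ← rpow_mul_natCast hn'.le]
        ring_nf

lemma rpow_mul_rpow_mul_inv_rpow_le (hr : 0 < r) (hd : 0 < d) (hdn : d ≤ n) {M : ℕ}
    (hM : M + 1 = (d + 2) * n) :
    ((d : ℝ) + M) ^ (d : ℝ) * (((d : ℝ) / 2 + r + 1) ^ r * ((d : ℝ) / 2 + r + 1) ^ r *
        (((d * n / 2 : ℝ) ^ (r + 2))⁻¹ * ((d * n : ℝ) ^ (d + r - 2))⁻¹)) ≤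
      2 ^ (r + 2) * exp 3 * (r + 2) ^ (2 * r) * ((n : ℝ) ^ (-r)) ^ 2 := by
  have hn : 0 < n := hd.trans_le hdn
  have hm : (0 : ℝ) < d * n := by positivity
  calc _ = 2 ^ (r + 2) * (((d : ℝ) + M) / (d * n)) ^ (d : ℝ) *
          (((d : ℝ) / 2 + r + 1) / (d * n)) ^ (2 * r) := by
        have hpow : ((d : ℝ) * n) ^ (r + 2) * ((d : ℝ) * n) ^ (d + r - 2) =
            ((d : ℝ) * n) ^ (d : ℝ) * ((d : ℝ) * n) ^ (2 * r) := by
          rw [← rpow_add hm, ← rpow_add hm]; ring_nf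
        rw [div_rpow hm.le zero_le_two, div_rpow (by positivity) hm.le,
          div_rpow (by positivity) hm.le, two_mul r, rpow_add (x := (d : ℝ) / 2 + r + 1)
          (by positivity), ← two_mul r, inv_div, div_mul_eq_mul_div, ← div_eq_mul_inv, div_div,
          mul_comm (_ ^ (d + r - 2)), hpow]
        ring
    _ ≤ 2 ^ (r + 2) * exp 3 * ((r + 2) ^ (2 * r) * ((n : ℝ) ^ (-r)) ^ 2) := by
        gcongr
        · exact add_div_mul_rpow_le_exp_three hd hdn hM
        · exact half_add_div_mul_rpow_le hr hd hn
    _ = _ := by ring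

lemma eval_zero_kernelPoly_mul_jacobiIntegral_dampingPoly_sq_le (hd : 3 ≤ d) (hr : 0 < r)
    (hdn : d ≤ n) {M : ℕ} (hM : M + 1 = (d + 2) * n) :
    (kernelPoly d M).eval 0 * jacobiIntegral (d / 2 + r - 1) (d / 2 - 2) (dampingPoly d n r ^ 2) ≤
      2 ^ (r + 2) * exp 3 * (r + 2) ^ (2 * r) * ((n : ℝ) ^ (-r)) ^ 2 *
        jacobiIntegral (d / 2 - 1) (d / 2 - 1) 1 := by
  have : (3 : ℝ) ≤ d := by exact_mod_cast hd
  have hI := jacobiIntegral_sub_one_one_pos (by positivity : 0 < (d : ℝ) / 2)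
  have := Gamma_pos_of_pos (by positivity : 0 < (d : ℝ) / 2)
  have := Gamma_pos_of_pos (by positivity : 0 < (d : ℝ) / 2 + 1)
  set R : ℝ := ((d * n / 2 : ℝ) ^ (r + 2))⁻¹ * ((d * n : ℝ) ^ (d + r - 2))⁻¹
  have hdamp : jacobiIntegral (d / 2 + r - 1) (d / 2 - 2) (dampingPoly d n r ^ 2) ≤
      ((d : ℝ) / 2 + r + 1) ^ r * Gamma (d / 2) *
        (((d : ℝ) / 2 + r + 1) ^ r * Gamma (d / 2 + 1)) * R := by
    refine (jacobiIntegral_dampingPoly_sq_le hd hr (by lia)).trans ?_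
    gcongr
    · calc Gamma ((d : ℝ) / 2 + r) ≤ (d / 2 + r) ^ r * Gamma (d / 2) :=
            Gamma_add_le_rpow_mul_Gamma (by positivity) hr
        _ ≤ _ := by gcongr ?_ ^ _ * _; linarith
    · simpa only [add_right_comm] using
        Gamma_add_le_rpow_mul_Gamma (x := (d : ℝ) / 2 + 1) (by positivity) hr
  calc _ ≤ jacobiIntegral (d / 2 - 1) (d / 2 - 1) 1 *
          ((d + M) ^ (d : ℝ) / (Gamma (d / 2) * Gamma (d / 2 + 1))) *
          (((d : ℝ) / 2 + r + 1) ^ r * Gamma (d / 2) *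
            (((d : ℝ) / 2 + r + 1) ^ r * Gamma (d / 2 + 1)) * R) := by
        refine mul_le_mul (eval_zero_kernelPoly_le (by lia) M) hdamp ?_ (by positivity)
        exact jacobiIntegral_nonneg fun u _ ↦ by rw [eval_pow]; exact sq_nonneg _
    _ = ((d : ℝ) + M) ^ (d : ℝ) * (((d : ℝ) / 2 + r + 1) ^ r * ((d : ℝ) / 2 + r + 1) ^ r * R) *
          jacobiIntegral (d / 2 - 1) (d / 2 - 1) 1 := by
        field_simp
    _ ≤ _ := by
        gcongr ?_ * _
        exact rpow_mul_rpow_mul_inv_rpow_le hr (by lia) hdn hM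

lemma jacobiIntegral_sub_two_dampingPoly_sq_le (hd : 3 ≤ d) (hr : 0 < r)
    (h : ((d : ℝ) + r + 1) ^ 2 ≤ n * d) :
    jacobiIntegral (d / 2 + r - 2) (d / 2 - 2) (dampingPoly d n r ^ 2) ≤
      54 * n ^ 2 * jacobiIntegral (d / 2 + r - 1) (d / 2 - 2) (dampingPoly d n r ^ 2) := by
  have hd' : (3 : ℝ) ≤ d := by exact_mod_cast hd
  obtain ⟨-, hn⟩ := le_of_add_add_one_sq_le hr h
  have hn' : (4 : ℝ) ≤ n := by linarith
  have hdn : d + r + 1 ≤ n * d := by nlinarith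
  have hnonneg : 0 ≤ jacobiIntegral (d / 2 + r - 1) (d / 2 - 2)
      (shiftedJacobi (d / 2 + r) (d / 2 - 2) (d * n) ^ 2) :=
    jacobiIntegral_nonneg fun u _ ↦ by rw [eval_pow]; exact sq_nonneg _
  have hmain : 2 * ((d * n : ℕ) : ℝ) * (d / 2 + r + (d / 2 - 2) + (d * n : ℕ) + 1) /
      ((d / 2 + r - 1) * (d / 2 + r + 1)) ≤ 48 * n ^ 2 := by
    have hden : (d : ℝ) ^ 2 / 12 ≤ (d / 2 + r - 1) * (d / 2 + r + 1) := by nlinarith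
    rw [div_le_iff₀ (by nlinarith)]
    push_cast
    calc 2 * ((d : ℝ) * n) * (d / 2 + r + (d / 2 - 2) + d * n + 1)
        ≤ 2 * (d * n) * (2 * (d * n)) := by gcongr; linarith
      _ = 48 * (n : ℝ) ^ 2 * (d ^ 2 / 12) := by ring
      _ ≤ _ := by gcongr
  have hrest : ((d : ℝ) / 2 + r + (d / 2 - 2)) / (d / 2 + r - 1) ≤ 6 * n ^ 2 := by
    rw [div_le_iff₀ (by linarith)]
    calc (d : ℝ) / 2 + r + (d / 2 - 2) ≤ n * d := by linarith
      _ ≤ (n * n) * d := by gcongr; nlinarith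
      _ = 6 * (n : ℝ) ^ 2 * (d / 6) := by ring
      _ ≤ _ := by gcongr; linarith
  rw [dampingPoly, mul_pow, ← C_pow, jacobiIntegral_C_mul, jacobiIntegral_C_mul,
    jacobiIntegral_sub_two_shiftedJacobi_sq _ (by linarith) (by linarith) (by linarith),
    mul_left_comm (54 * (n : ℝ) ^ 2)]
  gcongr
  linarith

end DampingPolynomial

lemma rpow_neg_sq_le_rpow_mul {n u s : ℝ} (hn : 0 < n) (hu : 0 < u) (hs : 0 ≤ s) (hs1 : s ≤ 1) :
    (n ^ (-s)) ^ 2 ≤ u ^ s * (1 + (n ^ 2)⁻¹ * u⁻¹) := by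
  have hnu : 0 < n ^ 2 * u := by positivity
  have hsplit : (n ^ (-s)) ^ 2 = u ^ s * (n ^ 2 * u) ^ (-s) := by
    rw [mul_rpow (by positivity) hu.le, mul_left_comm, ← rpow_add hu, add_neg_cancel, rpow_zero,
      mul_one, ← rpow_natCast, ← rpow_natCast, ← rpow_mul hn.le, ← rpow_mul hn.le, mul_comm]
  rw [hsplit, ← mul_inv]
  gcongr
  obtain h | h := le_total 1 (n ^ 2 * u)
  · linarith [rpow_le_one_of_one_le_of_nonpos h (neg_nonpos.2 hs), inv_pos.2 hnu]
  · linarith [rpow_le_rpow_of_exponent_ge hnu h (neg_le_neg hs1), rpow_neg_one (n ^ 2 * u)]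

lemma sq_le_of_le_mul_rpow_neg_add {A g n u s : ℝ} (hn : 0 < n) (hu : 0 < u) (hs : 0 ≤ s)
    (hs1 : s ≤ 1) (hg : 0 ≤ g) (hgA : g ≤ A * (n ^ (-s) + √u ^ s)) :
    g ^ 2 ≤ 2 * A ^ 2 * (u ^ s * (2 + (n ^ 2)⁻¹ * u⁻¹)) := by
  have hsqrt : (√u ^ s) ^ 2 = u ^ s := by
    rw [← rpow_natCast, ← rpow_mul (sqrt_nonneg u), mul_comm, rpow_mul (sqrt_nonneg u),
      rpow_natCast, sq_sqrt hu.le]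
  calc g ^ 2 ≤ (A * (n ^ (-s) + √u ^ s)) ^ 2 := by gcongr
    _ = A ^ 2 * (n ^ (-s) + √u ^ s) ^ 2 := mul_pow _ _ 2
    _ ≤ A ^ 2 * (2 * ((n ^ (-s)) ^ 2 + (√u ^ s) ^ 2)) := by gcongr; exact add_sq_le
    _ ≤ A ^ 2 * (2 * (u ^ s * (1 + (n ^ 2)⁻¹ * u⁻¹) + u ^ s)) := by
        rw [hsqrt]
        gcongr
        exact rpow_neg_sq_le_rpow_mul hn hu hs hs1
    _ = 2 * A ^ 2 * (u ^ s * (2 + (n ^ 2)⁻¹ * u⁻¹)) := by ring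

lemma jacobiIntegral_X_pow_mul_mul_sq_le {a b s A n : ℝ} (j : ℕ) {g : ℝ[X]} (q : ℝ[X])
    (ha : 0 < a) (hb : 0 < b) (hn : 0 < n) (hs : 0 ≤ s) (hs1 : s ≤ 1)
    (hg : ∀ u ∈ Icc (0 : ℝ) 1, 0 ≤ g.eval u ∧ g.eval u ≤ A * (n ^ (-s) + √u ^ s)) :
    jacobiIntegral a b (X ^ j * (g * q) ^ 2) ≤
      2 * A ^ 2 * (2 * jacobiIntegral (a + (j + s)) (b - 1) (q ^ 2) +
        (n ^ 2)⁻¹ * jacobiIntegral (a + (j + s) - 1) (b - 1) (q ^ 2)) := by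
  have : (0 : ℝ) ≤ j := j.cast_nonneg
  have h1 := integrableOn_eval_mul_jacobiWeight (a := a + (j + s)) (b := b - 1) (by linarith)
    (by linarith) (q ^ 2)
  have h2 := integrableOn_eval_mul_jacobiWeight (a := a + (j + s) - 1) (b := b - 1) (by linarith)
    (by linarith) (q ^ 2)
  simp only [jacobiIntegral]
  rw [← integral_const_mul, ← integral_const_mul, ← integral_add (h1.const_mul 2) (h2.const_mul _),
    ← integral_const_mul]
  refine setIntegral_mono_on
    (integrableOn_eval_mul_jacobiWeight (by linarith) (by linarith) _)
    (((h1.const_mul 2).add (h2.const_mul _)).const_mul _) measurableSet_Ioo fun u hu ↦ ?_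
  have hu1 : 0 < 1 - u := sub_pos.2 hu.2
  obtain ⟨hg0, hgA⟩ := hg u (Ioo_subset_Icc_self hu)
  have hgq := sq_le_of_le_mul_rpow_neg_add hn hu.1 hs hs1 hg0 hgA
  have hweight : (1 - u) ^ b ≤ (1 - u) ^ (b - 1) :=
    rpow_le_rpow_of_exponent_ge hu1 (by linarith [hu.1]) (by linarith)
  simp only [eval_mul, eval_pow, eval_X]
  calc u ^ j * (g.eval u * q.eval u) ^ 2 * (u ^ a * (1 - u) ^ b)
      = u ^ j * g.eval u ^ 2 * q.eval u ^ 2 * u ^ a * (1 - u) ^ b := by ring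
    _ ≤ u ^ j * (2 * A ^ 2 * (u ^ s * (2 + (n ^ 2)⁻¹ * u⁻¹))) * q.eval u ^ 2 * u ^ a *
          (1 - u) ^ (b - 1) := by
        have := hu.1.le
        gcongr
    _ = _ := by
        rw [rpow_sub_one hu.1.ne', rpow_add hu.1, rpow_add hu.1, rpow_natCast]
        ring

section KernelNorms

variable {d n : ℕ} {r : ℝ}

lemma jacobiIntegral_X_pow_mul_mul_dampingPoly_sq_le {s A : ℝ} {j : ℕ} {g : ℝ[X]} (hd : 3 ≤ d)
    (hr : 0 < r) (hrj : r = j + s) (hs : 0 ≤ s) (hs1 : s ≤ 1)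
    (h : ((d : ℝ) + r + 1) ^ 2 ≤ n * d)
    (hg : ∀ u ∈ Icc (0 : ℝ) 1, 0 ≤ g.eval u ∧ g.eval u ≤ A * ((n : ℝ) ^ (-s) + √u ^ s)) :
    jacobiIntegral (d / 2 - 1) (d / 2 - 1) (X ^ j * (g * dampingPoly d n r) ^ 2) ≤
      112 * A ^ 2 * jacobiIntegral (d / 2 + r - 1) (d / 2 - 2) (dampingPoly d n r ^ 2) := by
  have hd' : (3 : ℝ) ≤ d := by exact_mod_cast hd
  have hn : (0 : ℝ) < n := by linarith [(le_of_add_add_one_sq_le hr h).2]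
  have hJ := jacobiIntegral_X_pow_mul_mul_sq_le (a := (d : ℝ) / 2 - 1) (b := (d : ℝ) / 2 - 1) j
    (dampingPoly d n r) (by linarith) (by linarith) hn hs hs1 hg
  rw [← hrj, show (d : ℝ) / 2 - 1 + r = d / 2 + r - 1 by ring, sub_sub _ _ (1 : ℝ),
    sub_sub _ _ (1 : ℝ), one_add_one_eq_two] at hJ
  calc _ ≤ _ := hJ
    _ ≤ 2 * A ^ 2 * (2 * jacobiIntegral (d / 2 + r - 1) (d / 2 - 2) (dampingPoly d n r ^ 2) +
          ((n : ℝ) ^ 2)⁻¹ * (54 * n ^ 2 *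
            jacobiIntegral (d / 2 + r - 1) (d / 2 - 2) (dampingPoly d n r ^ 2))) := by
        gcongr
        exact jacobiIntegral_sub_two_dampingPoly_sq_le hd hr h
    _ = _ := by
        field_simp
        ring

lemma integral_sphK_sq (hd : 2 ≤ d) (M : ℕ) (x : Sph d) :
    ∫ y, sphK d (M + 1) (ip x y) ^ 2 ∂sphMeasure d = (kernelPoly d M).eval 0 := by
  have hK := (isCoordPoly_eval_haversine x (EuclideanSpace.basisFun _ ℝ) (kernelPoly d M)).mono
    (natDegree_kernelPoly_le d M)
  simpa only [sq, sphK_succ_ip hd, haversine_self] using hK.integral_mul_sphK hd x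

lemma integral_sphK_sq_mul_integral_le {s A : ℝ} {j M : ℕ} {g : ℝ[X]} (hd : 3 ≤ d) (hr : 0 < r)
    (hrj : r = j + s) (hs : 0 ≤ s) (hs1 : s ≤ 1) (h : ((d : ℝ) + r + 1) ^ 2 ≤ n * d)
    (hM : M + 1 = (d + 2) * n)
    (hg : ∀ u ∈ Icc (0 : ℝ) 1, 0 ≤ g.eval u ∧ g.eval u ≤ A * ((n : ℝ) ^ (-s) + √u ^ s))
    (x : Sph d) :
    (∫ y, sphK d (M + 1) (ip x y) ^ 2 ∂sphMeasure d) *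
        ∫ y, haversine x y ^ j * ((g * dampingPoly d n r).eval (haversine x y)) ^ 2 ∂sphMeasure d ≤
      112 * A ^ 2 * (2 ^ (r + 2) * exp 3 * (r + 2) ^ (2 * r)) * ((n : ℝ) ^ (-r)) ^ 2 := by
  have hI : 0 < jacobiIntegral ((d : ℝ) / 2 - 1) (d / 2 - 1) 1 :=
    jacobiIntegral_sub_one_one_pos (by positivity)
  have hzonal := integral_eval_haversine x (by lia) (X ^ j * (g * dampingPoly d n r) ^ 2)
  simp only [eval_mul (p := X ^ j), eval_pow, eval_X] at hzonal
  have hK : 0 ≤ (kernelPoly d M).eval 0 :=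
    integral_sphK_sq (by lia : 2 ≤ d) M x ▸ integral_nonneg fun _ ↦ sq_nonneg _
  rw [integral_sphK_sq (by lia), ← mul_le_mul_iff_left₀ hI, mul_assoc, hzonal]
  calc (kernelPoly d M).eval 0 *
        jacobiIntegral (d / 2 - 1) (d / 2 - 1) (X ^ j * (g * dampingPoly d n r) ^ 2)
      ≤ (kernelPoly d M).eval 0 * (112 * A ^ 2 *
          jacobiIntegral (d / 2 + r - 1) (d / 2 - 2) (dampingPoly d n r ^ 2)) := by
        gcongr
        exact jacobiIntegral_X_pow_mul_mul_dampingPoly_sq_le hd hr hrj hs hs1 h hg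
    _ = 112 * A ^ 2 * ((kernelPoly d M).eval 0 *
          jacobiIntegral (d / 2 + r - 1) (d / 2 - 2) (dampingPoly d n r ^ 2)) := by ring
    _ ≤ 112 * A ^ 2 * (2 ^ (r + 2) * exp 3 * (r + 2) ^ (2 * r) * ((n : ℝ) ^ (-r)) ^ 2 *
          jacobiIntegral (d / 2 - 1) (d / 2 - 1) 1) := by
        refine mul_le_mul_of_nonneg_left ?_ (by positivity)
        exact eval_zero_kernelPoly_mul_jacobiIntegral_dampingPoly_sq_le hd hr
          (le_of_add_add_one_sq_le hr h).1 hM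
    _ = _ := by ring

end KernelNorms

lemma haversine_eq_sum_sq {d : ℕ} (x y : Sph d)
    (b : OrthonormalBasis (Fin (d + 1)) ℝ (EuclideanSpace ℝ (Fin (d + 1)))) :
    haversine x y = ∑ i, (1 / 2 * ⟪b i, x.1 - y.1⟫) ^ 2 := by
  simp only [mul_pow, ← Finset.mul_sum]
  rw [b.sum_sq_inner_right, ← dist_eq_norm, ← Subtype.dist_eq, dist_sq_eq_four_mul_haversine]
  ring

namespace IsMZ

variable {d : ℕ} {ν : SignedMeasure (Sph d)} {c N : ℝ}

lemma nonneg (h : IsMZ d N ν c) (hN : 0 < N) : 0 ≤ c := by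
  have hone : IsSphPoly d (N / 2) fun _ ↦ 1 :=
    (IsCoordPoly.const (EuclideanSpace.basisFun _ ℝ) 1).isSphPoly (by simpa using hN)
  have h1 := h _ hone
  simp only [one_pow, integral_const, probReal_univ, smul_eq_mul, mul_one] at h1
  exact measureReal_nonneg.trans h1

variable {k : ℕ} {q : Sph d → ℝ}
  {b : OrthonormalBasis (Fin (d + 1)) ℝ (EuclideanSpace ℝ (Fin (d + 1)))}

lemma integral_sq_le (h : IsMZ d N ν c) (hq : IsCoordPoly b k q) (hk : (k : ℝ) < N / 2) :
    ∫ y, q y ^ 2 ∂ν.totalVariation ≤ c * ∫ y, q y ^ 2 ∂sphMeasure d :=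
  h q (hq.isSphPoly hk)

lemma integral_haversine_mul_sq_le (h : IsMZ d N ν c) (hq : IsCoordPoly b k q)
    (hk : ((k + 1 : ℕ) : ℝ) < N / 2) (x : Sph d) :
    ∫ y, haversine x y * q y ^ 2 ∂ν.totalVariation ≤
      c * ∫ y, haversine x y * q y ^ 2 ∂sphMeasure d := by
  have hpoly (i) : IsCoordPoly b (k + 1) fun y ↦ q y * (1 / 2 * ⟪b i, x.1 - y.1⟫) := by
    refine hq.mul ?_
    convert ((IsCoordPoly.const b (1 / 2 * ⟪b i, x.1⟫)).mono zero_le_one).add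
      ((IsCoordPoly.inner_left b (b i)).const_mul (-1 / 2)) using 2 with y
    rw [inner_sub_right]
    ring
  have hint (i) (μ : Measure (Sph d)) [IsFiniteMeasure μ] :
      Integrable (fun y ↦ (q y * (1 / 2 * ⟪b i, x.1 - y.1⟫)) ^ 2) μ :=
    integrable_of_continuous ((hpoly i).continuous.pow 2)
  have hsum (y) : haversine x y * q y ^ 2 = ∑ i, (q y * (1 / 2 * ⟪b i, x.1 - y.1⟫)) ^ 2 := by
    simp only [haversine_eq_sum_sq x y b, mul_pow (q y), ← Finset.mul_sum, mul_comm]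
  simp only [hsum]
  rw [integral_finsetSum _ fun i _ ↦ hint i _, integral_finsetSum _ fun i _ ↦ hint i _,
    Finset.mul_sum]
  exact Finset.sum_le_sum fun i _ ↦ h.integral_sq_le (hpoly i) hk

lemma integral_haversine_pow_mul_sq_le (h : IsMZ d N ν c) (hq : IsCoordPoly b k q) {j : ℕ}
    (hk : ((k + j / 2 + 1 : ℕ) : ℝ) < N / 2) (x : Sph d) :
    ∫ y, haversine x y ^ j * q y ^ 2 ∂ν.totalVariation ≤
      c * ∫ y, haversine x y ^ j * q y ^ 2 ∂sphMeasure d := by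
  have hpoly (i : ℕ) : IsCoordPoly b (k + i) fun y ↦ q y * haversine x y ^ i := by
    simpa using hq.mul ((isCoordPoly_haversine x b).pow i)
  obtain ⟨i, rfl | rfl⟩ := j.even_or_odd'
  · have hsq (y) : haversine x y ^ (2 * i) * q y ^ 2 = (q y * haversine x y ^ i) ^ 2 := by ring
    simp only [hsq]
    exact h.integral_sq_le (hpoly i) ((Nat.cast_le.2 (by lia)).trans_lt hk)
  · have hsq (y) : haversine x y ^ (2 * i + 1) * q y ^ 2 =
        haversine x y * (q y * haversine x y ^ i) ^ 2 := by ring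
    simp only [hsq]
    exact h.integral_haversine_mul_sq_le (hpoly i) ((Nat.cast_le.2 (by lia)).trans_lt hk) x

end IsMZ

lemma integral_abs_mul_abs_le_sqrt_mul_sqrt {α : Type*} [TopologicalSpace α] [CompactSpace α]
    [MeasurableSpace α] [OpensMeasurableSpace α] {μ : Measure α} [IsFiniteMeasure μ] {f g : α → ℝ}
    (hf : Continuous f) (hg : Continuous g) :
    ∫ a, |f a| * |g a| ∂μ ≤ √(∫ a, f a ^ 2 ∂μ) * √(∫ a, g a ^ 2 ∂μ) := by
  have hLp {u : α → ℝ} (hu : Continuous u) : MemLp (fun a ↦ |u a|) (ENNReal.ofReal 2) μ := by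
    rw [ENNReal.ofReal_ofNat]
    exact ((memLp_two_iff_integrable_sq
      (integrable_of_continuous hu).aestronglyMeasurable).2
        (integrable_of_continuous (hu.pow 2))).abs
  have h := integral_mul_le_Lp_mul_Lq_of_nonneg HolderConjugate.two_two
    (.of_forall fun a ↦ abs_nonneg (f a)) (.of_forall fun a ↦ abs_nonneg (g a)) (hLp hf) (hLp hg)
  simpa only [rpow_two, sq_abs, ← sqrt_eq_rpow] using h

lemma IsMZ.integral_abs_mul_abs_le {d : ℕ} {ν : SignedMeasure (Sph d)} {c N : ℝ}
    {b : OrthonormalBasis (Fin (d + 1)) ℝ (EuclideanSpace ℝ (Fin (d + 1)))} {k l j : ℕ}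
    {p q : Sph d → ℝ} (h : IsMZ d N ν c) (hp : IsCoordPoly b k p) (hq : IsCoordPoly b l q)
    (hk : (k : ℝ) < N / 2) (hl : ((l + j / 2 + 1 : ℕ) : ℝ) < N / 2) (x : Sph d) :
    ∫ y, |p y| * |√(haversine x y) ^ j * q y| ∂ν.totalVariation ≤
      c * √((∫ y, p y ^ 2 ∂sphMeasure d) * ∫ y, haversine x y ^ j * q y ^ 2 ∂sphMeasure d) := by
  have hc : 0 ≤ c := h.nonneg (by linarith [(k.cast_nonneg : (0 : ℝ) ≤ k)])
  have hcont : Continuous (haversine x) := (isCoordPoly_haversine x b).continuous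
  have hsq (y) : (√(haversine x y) ^ j * q y) ^ 2 = haversine x y ^ j * q y ^ 2 := by
    rw [mul_pow, ← pow_mul, mul_comm j, pow_mul, sq_sqrt (haversine_mem_Icc x y).1]
  calc _ ≤ √(∫ y, p y ^ 2 ∂ν.totalVariation) *
          √(∫ y, haversine x y ^ j * q y ^ 2 ∂ν.totalVariation) := by
        simp only [← hsq]
        exact integral_abs_mul_abs_le_sqrt_mul_sqrt hp.continuous
          ((hcont.sqrt.pow j).mul hq.continuous)
    _ ≤ √(c * ∫ y, p y ^ 2 ∂sphMeasure d) *
          √(c * ∫ y, haversine x y ^ j * q y ^ 2 ∂sphMeasure d) := by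
        gcongr
        · exact h.integral_sq_le hp hk
        · exact h.integral_haversine_pow_mul_sq_le hq hl x
    _ = _ := by
        rw [← sqrt_mul (mul_nonneg hc (integral_nonneg fun y ↦ sq_nonneg _)), mul_mul_mul_comm,
          sqrt_mul (mul_self_nonneg c), sqrt_mul_self hc]

section LocalizedMoment

variable {d n j : ℕ} {r s A : ℝ} {g : ℝ[X]} {ν : SignedMeasure (Sph d)} {c : ℝ}

lemma sqrt_haversine_rpow_mul_abs_PhiTilde_le {M : ℕ} (hd : 3 ≤ d) (hr : 0 < r)
    (hrj : r = j + s) (hs : 0 ≤ s) (hM : M + 1 = (d + 2) * n)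
    (hg : ∀ u ∈ Icc (0 : ℝ) 1, 0 ≤ g.eval u ∧ √u ^ s ≤ A * g.eval u) (x y : Sph d) :
    √(haversine x y) ^ r * |PhiTilde d n r (ip x y)| ≤
      A * (|sphK d (M + 1) (ip x y)| *
        |√(haversine x y) ^ j * (g * dampingPoly d n r).eval (haversine x y)|) := by
  obtain ⟨hg0, hgA⟩ := hg _ (haversine_mem_Icc x y)
  rw [PhiTilde_ip hd hr hM, sphK_succ_ip (by lia), eval_mul, eval_mul,
    show √(haversine x y) ^ r = √(haversine x y) ^ j * √(haversine x y) ^ s by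
      rw [hrj, rpow_add_of_nonneg (sqrt_nonneg _) j.cast_nonneg hs, rpow_natCast]]
  simp only [abs_mul, abs_of_nonneg hg0, abs_of_nonneg (pow_nonneg (sqrt_nonneg _) j)]
  calc √(haversine x y) ^ j * √(haversine x y) ^ s *
        (|(kernelPoly d M).eval (haversine x y)| * |(dampingPoly d n r).eval (haversine x y)|)
      ≤ √(haversine x y) ^ j * (A * g.eval (haversine x y)) *
        (|(kernelPoly d M).eval (haversine x y)| * |(dampingPoly d n r).eval (haversine x y)|) := by
        gcongr
    _ = _ := by ring

lemma integral_sqrt_haversine_rpow_mul_abs_PhiTilde_le (hd : 3 ≤ d) (hr : 0 < r)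
    (hrj : r = j + s) (hs : 0 ≤ s) (hs1 : s ≤ 1) (h : ((d : ℝ) + r + 1) ^ 2 ≤ n * d)
    (hA : 0 ≤ A) (hgn : g.natDegree ≤ n)
    (hg : ∀ u ∈ Icc (0 : ℝ) 1, √u ^ s ≤ A * g.eval u ∧ 0 ≤ g.eval u ∧
      g.eval u ≤ A * ((n : ℝ) ^ (-s) + √u ^ s))
    (hν : IsMZ d ((2 * (d + 2) * n : ℕ) : ℝ) ν c) (x : Sph d) :
    ∫ y, √(haversine x y) ^ r * |PhiTilde d n r (ip x y)| ∂ν.totalVariation ≤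
      A * √(112 * A ^ 2 * (2 ^ (r + 2) * exp 3 * (r + 2) ^ (2 * r))) * c * (n : ℝ) ^ (-r) := by
  have hnr := (le_of_add_add_one_sq_le hr h).2
  have hn : 0 < n := Nat.cast_pos.1 (by linarith : (0 : ℝ) < n)
  have hjn : j + 4 ≤ n := by
    have : ((j + 4 : ℕ) : ℝ) ≤ n := by push_cast; linarith
    exact_mod_cast this
  obtain ⟨M, hM⟩ : ∃ M, M + 1 = (d + 2) * n := ⟨_, Nat.sub_add_cancel (Nat.mul_pos (by lia) hn)⟩
  have hN : ((2 * (d + 2) * n : ℕ) : ℝ) / 2 = ((M + 1 : ℕ) : ℝ) := by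
    rw [hM]; push_cast; ring
  have hc : 0 ≤ c := hν.nonneg (by positivity)
  let b := EuclideanSpace.basisFun (Fin (d + 1)) ℝ
  have hK : IsCoordPoly b M fun y ↦ sphK d (M + 1) (ip x y) := by
    simpa only [sphK_succ_ip (by lia : 2 ≤ d)] using
      (isCoordPoly_eval_haversine x b _).mono (natDegree_kernelPoly_le d M)
  have hq : IsCoordPoly b (n + d * n) fun y ↦ (g * dampingPoly d n r).eval (haversine x y) :=
    (isCoordPoly_eval_haversine x b _).mono
      (natDegree_mul_le_of_le hgn (natDegree_dampingPoly_le d n r))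
  have hMZ := hν.integral_abs_mul_abs_le hK hq (j := j) (by rw [hN]; push_cast; linarith)
    (by rw [hN, hM, Nat.cast_lt, add_mul]; lia) x
  have hcont : Continuous (haversine x) := (isCoordPoly_haversine x b).continuous
  calc _ ≤ ∫ y, A * (|sphK d (M + 1) (ip x y)| *
          |√(haversine x y) ^ j * (g * dampingPoly d n r).eval (haversine x y)|)
          ∂ν.totalVariation :=
        integral_mono_of_nonneg (.of_forall fun y ↦ by positivity)
          (integrable_of_continuous (continuous_const.mul (hK.continuous.abs.mul
            ((hcont.sqrt.pow j).mul hq.continuous).abs)))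
          (.of_forall (sqrt_haversine_rpow_mul_abs_PhiTilde_le hd hr hrj hs hM
            (fun u hu ↦ ⟨(hg u hu).2.1, (hg u hu).1⟩) x))
    _ ≤ A * (c * √(112 * A ^ 2 * (2 ^ (r + 2) * exp 3 * (r + 2) ^ (2 * r)) *
          ((n : ℝ) ^ (-r)) ^ 2)) := by
        rw [integral_const_mul]
        exact mul_le_mul_of_nonneg_left (hMZ.trans (mul_le_mul_of_nonneg_left (sqrt_le_sqrt
          (integral_sphK_sq_mul_integral_le hd hr hrj hs hs1 h hM (fun u hu ↦ (hg u hu).2) x))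
          hc)) hA
    _ = _ := by
        rw [sqrt_mul (by positivity), sqrt_sq (by positivity)]
        ring

lemma exists_integral_dist_rpow_mul_abs_PhiTilde_le (hr : 0 < r) :
    ∃ C, 0 < C ∧ ∀ (d n : ℕ) (x : Sph d) (ν : SignedMeasure (Sph d)) (c : ℝ), 3 ≤ d →
      ((d : ℝ) + r + 1) ^ 2 ≤ n * d → IsMZ d ((2 * (d + 2) * n : ℕ) : ℝ) ν c →
        ∫ y, dist x y ^ r * |PhiTilde d n r (ip x y)| ∂ν.totalVariation ≤
          C * c * (n : ℝ) ^ (-r) := by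
  have hs : 0 ≤ r - ⌊r⌋₊ := sub_nonneg.2 (Nat.floor_le hr.le)
  have hs1 : r - ⌊r⌋₊ < 1 := by linarith [Nat.lt_floor_add_one r]
  obtain ⟨A, hA, hmaj⟩ := exists_polynomial_equiv_sqrt_rpow hs hs1
  refine ⟨2 ^ r * (A * √(112 * A ^ 2 * (2 ^ (r + 2) * exp 3 * (r + 2) ^ (2 * r)))),
    by positivity, fun d n x ν c hd h hν ↦ ?_⟩
  have hn : 0 < n := Nat.cast_pos.1 (by linarith [(le_of_add_add_one_sq_le hr h).2] : (0 : ℝ) < n)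
  obtain ⟨g, hgn, hg⟩ := hmaj n hn
  simp only [dist_eq_two_mul_sqrt_haversine, mul_rpow zero_le_two (sqrt_nonneg _), mul_assoc,
    integral_const_mul]
  have := integral_sqrt_haversine_rpow_mul_abs_PhiTilde_le hd hr (by ring) hs hs1.le h
    (by linarith) hgn hg hν x
  gcongr
  simpa only [mul_assoc] using this

end LocalizedMoment

/-! ### Growth of spherical polynomials off a cap -/

lemma exists_abs_coeff_le (D : ℕ) : ∃ C, 0 < C ∧ ∀ (Q : ℝ[X]) (M : ℝ), Q.natDegree ≤ D →
    (∀ t ∈ Icc (0 : ℝ) 1, |Q.eval t| ≤ M) → ∀ m ≤ D, |Q.coeff m| ≤ C * M := by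
  let nodes : Finset ℕ := Finset.range (D + 1)
  let v : ℕ → ℝ := fun i ↦ i / (D + 1)
  have hD : (0 : ℝ) < D + 1 := by positivity
  have hv : InjOn v nodes := fun i _ j _ hij ↦
    Nat.cast_injective ((div_left_inj' hD.ne').1 hij)
  let S : ℕ → ℝ := fun m ↦ ∑ i ∈ nodes, |(Lagrange.basis nodes v i).coeff m|
  refine ⟨1 + ∑ m ∈ Finset.range (D + 1), S m, by positivity, fun Q M hQ h m hm ↦ ?_⟩
  have hM : 0 ≤ M := (abs_nonneg _).trans (h 0 ⟨le_rfl, zero_le_one⟩)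
  have hcoeff : Q.coeff m = ∑ i ∈ nodes, Q.eval (v i) * (Lagrange.basis nodes v i).coeff m := by
    have hdeg : Q.degree < nodes.card := by
      rw [Finset.card_range]
      exact degree_le_natDegree.trans_lt (by exact_mod_cast Nat.lt_succ_of_le hQ)
    conv_lhs => rw [Lagrange.eq_interpolate hv hdeg, Lagrange.interpolate_apply]
    simp only [finsetSum_coeff, coeff_C_mul]
  calc |Q.coeff m| ≤ ∑ i ∈ nodes, M * |(Lagrange.basis nodes v i).coeff m| := by
        rw [hcoeff]
        refine (Finset.abs_sum_le_sum_abs _ _).trans (Finset.sum_le_sum fun i hi ↦ ?_)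
        rw [abs_mul]
        gcongr
        refine h _ ⟨by positivity, (div_le_one hD).2 ?_⟩
        exact_mod_cast (Finset.mem_range.1 hi).le
    _ = S m * M := by rw [← Finset.mul_sum, mul_comm]
    _ ≤ _ := by
        gcongr
        linarith [Finset.single_le_sum (f := S) (fun i _ ↦ by positivity)
          (Finset.mem_range.2 (Nat.lt_succ_of_le hm))]

lemma exists_abs_coeff_mul_pow_le (D : ℕ) : ∃ C, 0 < C ∧ ∀ (Q : ℝ[X]) (M τ : ℝ),
    Q.natDegree ≤ D → 0 ≤ τ → (∀ t ∈ Icc 0 τ, |Q.eval t| ≤ M) →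
      ∀ m ≤ D, |Q.coeff m| * τ ^ m ≤ C * M := by
  obtain ⟨C, hC, h⟩ := exists_abs_coeff_le D
  refine ⟨C, hC, fun Q M τ hQ hτ hQM m hm ↦ ?_⟩
  have hdeg : (Q.comp (.C τ * X)).natDegree ≤ D :=
    natDegree_comp_le.trans ((Nat.mul_le_mul hQ
      ((natDegree_C_mul_le τ X).trans natDegree_X_le)).trans_eq (mul_one D))
  have := h (Q.comp (.C τ * X)) M hdeg (fun t ht ↦ by
    simpa using hQM (τ * t) ⟨mul_nonneg hτ ht.1, mul_le_of_le_one_right hτ ht.2⟩) m hm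
  rwa [comp_C_mul_X_coeff, abs_mul, abs_of_nonneg (pow_nonneg hτ m)] at this

lemma exists_abs_cos_pow_mul_eval_tan_le (D : ℕ) : ∃ C, 0 < C ∧ ∀ (Q : ℝ[X]) (M τ θ : ℝ),
    Q.natDegree ≤ D → 0 < τ → τ ≤ 1 → (∀ t ∈ Icc 0 τ, |Q.eval t| ≤ M) → cos θ ≠ 0 →
      |cos θ ^ D * Q.eval (tan θ)| ≤ C * M * (τ ^ D)⁻¹ := by
  obtain ⟨C, hC, h⟩ := exists_abs_coeff_mul_pow_le D
  refine ⟨(D + 1) * C, by positivity, fun Q M τ θ hQ hτ hτ1 hQM hθ ↦ ?_⟩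
  have hterm (m : ℕ) (hm : m ∈ Finset.range (D + 1)) :
      |cos θ ^ D * (Q.coeff m * tan θ ^ m)| ≤ C * M * (τ ^ D)⁻¹ := by
    have hmD : m ≤ D := Nat.lt_succ_iff.1 (Finset.mem_range.1 hm)
    have htrig : |cos θ ^ D * tan θ ^ m| ≤ 1 := by
      rw [← Nat.sub_add_cancel hmD, pow_add, mul_assoc, ← mul_pow, mul_comm (cos θ),
        tan_mul_cos hθ, abs_mul, abs_pow, abs_pow]
      exact mul_le_one₀ (pow_le_one₀ (abs_nonneg _) (abs_cos_le_one θ))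
        (by positivity) (pow_le_one₀ (abs_nonneg _) (abs_sin_le_one θ))
    calc _ = |Q.coeff m| * |cos θ ^ D * tan θ ^ m| := by rw [mul_left_comm, abs_mul]
      _ ≤ |Q.coeff m| := mul_le_of_le_one_right (abs_nonneg _) htrig
      _ ≤ C * M * (τ ^ D)⁻¹ := by
        rw [← div_eq_mul_inv, le_div_iff₀ (by positivity)]
        exact (mul_le_mul_of_nonneg_left (pow_le_pow_of_le_one hτ.le hτ1 hmD)
          (abs_nonneg _)).trans (h Q M τ hQ hτ.le hQM m hmD)
  rw [eval_eq_sum_range' (Nat.lt_succ_of_le hQ), Finset.mul_sum]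
  refine (Finset.abs_sum_le_sum_abs _ _).trans ((Finset.sum_le_card_nsmul _ _ _ hterm).trans_eq ?_)
  rw [Finset.card_range, nsmul_eq_mul]
  push_cast
  ring

lemma eval_smul_of_isHomogeneous {σ R : Type*} [CommSemiring R] {p : MvPolynomial σ R} {k : ℕ}
    (hp : p.IsHomogeneous k) (c : R) (w : σ → R) :
    MvPolynomial.eval (c • w) p = c ^ k * MvPolynomial.eval w p := by
  simp only [MvPolynomial.eval_eq, Finset.mul_sum]
  refine Finset.sum_congr rfl fun s hs ↦ ?_
  have hdeg := hp (MvPolynomial.mem_support_iff.1 hs)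
  rw [Finsupp.weight_apply] at hdeg
  simp only [Pi.smul_apply, smul_eq_mul, mul_pow, Finset.prod_mul_distrib,
    Finset.prod_pow_eq_pow_sum, ← hdeg, Finsupp.sum, Pi.one_apply, mul_one]
  ring

lemma exists_eval_cos_two_mul_add_sin_two_mul {σ : Type*} {p : MvPolynomial σ ℝ} {k : ℕ}
    (hp : p.totalDegree ≤ k) (x v : σ → ℝ) : ∃ Q : ℝ[X], Q.natDegree ≤ 2 * k ∧ ∀ θ, cos θ ≠ 0 →
      MvPolynomial.eval (cos (2 * θ) • x + sin (2 * θ) • v) p =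
        cos θ ^ (2 * k) * Q.eval (tan θ) := by
  let w (i : σ) : ℝ[X] := C (x i) * (1 - X ^ 2) + C (v i) * (2 * X)
  let comp (i : ℕ) : MvPolynomial σ ℝ := MvPolynomial.homogeneousComponent i p
  have hle {i : ℕ} (hi : i ∈ Finset.range (p.totalDegree + 1)) : i ≤ k :=
    (Nat.lt_succ_iff.1 (Finset.mem_range.1 hi)).trans hp
  refine ⟨∑ i ∈ Finset.range (p.totalDegree + 1), (1 + X ^ 2) ^ (k - i) *
    MvPolynomial.aeval w (comp i), natDegree_sum_le_of_forall_le _ _ fun i hi ↦ ?_, fun θ hθ ↦ ?_⟩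
  · have hw : (MvPolynomial.aeval w (comp i)).natDegree ≤ i * 2 :=
      MvPolynomial.aeval_natDegree_le _
        (MvPolynomial.homogeneousComponent_isHomogeneous i p).totalDegree_le _ fun _ ↦ by
          simp only [w]; compute_degree
    have hpow : ((1 + X ^ 2 : ℝ[X]) ^ (k - i)).natDegree ≤ (k - i) * 2 :=
      natDegree_pow_le_of_le _ (by compute_degree)
    have := hle hi
    exact (natDegree_mul_le_of_le hpow hw).trans (by lia)
  · have hcos : cos θ ^ 2 * (1 + tan θ ^ 2) = 1 := by
      rw [← inv_one_add_tan_sq hθ, inv_mul_cancel₀ (by positivity)]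
    have harc : cos (2 * θ) • x + sin (2 * θ) • v = cos θ ^ 2 • fun i ↦ (w i).eval (tan θ) := by
      ext i
      simp only [w, Pi.add_apply, Pi.smul_apply, smul_eq_mul, eval_add, eval_mul, eval_C,
        eval_sub, eval_one, eval_pow, eval_X, eval_ofNat, cos_two_mul', sin_two_mul,
        tan_eq_sin_div_cos]
      field_simp
    have hw (i : ℕ) : (MvPolynomial.aeval w (comp i)).eval (tan θ) =
        MvPolynomial.eval (fun j ↦ (w j).eval (tan θ)) (comp i) := by
      simpa only [coe_aeval_eq_eval, MvPolynomial.aeval_eq_eval] using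
        MvPolynomial.comp_aeval_apply w (aeval (tan θ)) (comp i)
    rw [harc, eval_finsetSum, Finset.mul_sum]
    conv_lhs => rw [← MvPolynomial.sum_homogeneousComponent p, map_sum]
    refine Finset.sum_congr rfl fun i hi ↦ ?_
    rw [eval_smul_of_isHomogeneous (MvPolynomial.homogeneousComponent_isHomogeneous i p)]
    simp only [eval_mul, eval_pow, eval_add, eval_one, eval_X, hw]
    rw [← mul_assoc, show cos θ ^ (2 * k) * (1 + tan θ ^ 2) ^ (k - i) = (cos θ ^ 2) ^ i by
      rw [pow_mul, ← Nat.add_sub_of_le (hle hi), pow_add, Nat.add_sub_cancel_left, mul_assoc,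
        ← mul_pow, hcos, one_pow, mul_one]]

lemma exists_abs_le_of_eq_cos_pow_mul_eval_tan (D : ℕ) : ∃ C, 0 < C ∧
    ∀ (F : ℝ → ℝ) (Q : ℝ[X]) (M τ : ℝ), Continuous F → Q.natDegree ≤ D →
      (∀ θ, cos θ ≠ 0 → F θ = cos θ ^ D * Q.eval (tan θ)) → 0 < τ → τ ≤ 1 →
      (∀ θ, |sin θ| ≤ τ → |F θ| ≤ M) →
        ∀ θ ∈ Icc (-(π / 2)) (π / 2), |F θ| ≤ C * M * (τ ^ D)⁻¹ := by
  obtain ⟨C, hC, h⟩ := exists_abs_cos_pow_mul_eval_tan_le D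
  refine ⟨C * 2 ^ D, by positivity, fun F Q M τ hF hQ hFQ hτ hτ1 hM ↦ ?_⟩
  have : 0 ≤ M := (abs_nonneg _).trans (hM 0 (by simpa using hτ.le))
  have hQM (t : ℝ) (ht : t ∈ Icc 0 τ) : |Q.eval t| ≤ 2 ^ D * M := by
    have hcos : 0 < cos (arctan t) := cos_arctan_pos t
    have hcos2 : 1 ≤ 2 * cos (arctan t) := by
      have : cos (arctan t) ^ 2 * (1 + t ^ 2) = 1 := by
        rw [cos_sq_arctan, one_div_mul_cancel (by positivity)]
      have := mul_le_of_le_one_right (sq_nonneg (cos (arctan t)))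
        (pow_le_one₀ ht.1 (ht.2.trans hτ1) : t ^ 2 ≤ 1)
      exact (one_le_sq_iff₀ (by positivity)).1 (by linarith)
    have hsin : |sin (arctan t)| ≤ τ := by
      rw [← tan_mul_cos hcos.ne', tan_arctan, abs_mul, abs_of_nonneg ht.1]
      exact (mul_le_of_le_one_right ht.1 (abs_cos_le_one _)).trans ht.2
    calc |Q.eval t| ≤ (2 * cos (arctan t)) ^ D * |Q.eval t| :=
          le_mul_of_one_le_left (abs_nonneg _) (one_le_pow₀ hcos2)
      _ = 2 ^ D * |F (arctan t)| := by
          rw [hFQ _ hcos.ne', tan_arctan, abs_mul, abs_of_pos (pow_pos hcos D), mul_pow, mul_assoc]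
      _ ≤ 2 ^ D * M := by gcongr; exact hM _ hsin
  rw [← closure_Ioo (by linarith [pi_pos])]
  refine fun θ hθ ↦ le_on_closure (fun θ hθ ↦ ?_) hF.abs.continuousOn continuousOn_const hθ
  have hcos := (cos_pos_of_mem_Ioo hθ).ne'
  rw [hFQ θ hcos, mul_assoc C]
  exact h Q _ τ θ hQ hτ hτ1 hQM hcos

lemma norm_sq_smul_add_smul {E : Type*} [NormedAddCommGroup E] [InnerProductSpace ℝ E] {x v : E}
    (hx : ‖x‖ = 1) (hv : ‖v‖ = 1) (hxv : ⟪x, v⟫ = 0) (a b : ℝ) :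
    ‖a • x + b • v‖ ^ 2 = a ^ 2 + b ^ 2 := by
  simp [norm_add_sq_real, norm_smul, inner_smul_left, inner_smul_right, hx, hv, hxv]

lemma norm_cos_two_mul_smul_add_sin_two_mul_smul_sub {E : Type*} [NormedAddCommGroup E]
    [InnerProductSpace ℝ E] {x v : E} (hx : ‖x‖ = 1) (hv : ‖v‖ = 1) (hxv : ⟪x, v⟫ = 0) (θ : ℝ) :
    ‖cos (2 * θ) • x + sin (2 * θ) • v - x‖ = 2 * |sin θ| := by
  rw [← sq_eq_sq₀ (norm_nonneg _) (by positivity), mul_pow, sq_abs, sin_sq_eq_half_sub,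
    show cos (2 * θ) • x + sin (2 * θ) • v - x = (cos (2 * θ) - 1) • x + sin (2 * θ) • v by module,
    norm_sq_smul_add_smul hx hv hxv, sin_sq]
  ring

lemma exists_eq_cos_smul_add_sin_smul {d : ℕ} (hd : 0 < d) (x z : Sph d) :
    ∃ (v : EuclideanSpace ℝ (Fin (d + 1))) (θ : ℝ), ‖v‖ = 1 ∧ ⟪x.1, v⟫ = 0 ∧
      θ ∈ Icc (-(π / 2)) (π / 2) ∧ z.1 = cos (2 * θ) • x.1 + sin (2 * θ) • v := by
  have hx : ‖x.1‖ = 1 := norm_eq_of_mem_sphere x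
  have hz : ‖z.1‖ = 1 := norm_eq_of_mem_sphere z
  let w : EuclideanSpace ℝ (Fin (d + 1)) := z.1 - ip x z • x.1
  have hxw : ⟪x.1, w⟫ = 0 := by
    simp [w, ip, inner_sub_right, inner_smul_right, hx]
  have hw : ‖w‖ = √(1 - ip x z ^ 2) := by
    rw [← sqrt_sq (norm_nonneg w)]
    congr 1
    simp only [w, ip, norm_sub_sq_real, norm_smul, inner_smul_right, real_inner_comm x.1 z.1,
      hx, hz, mul_one, norm_eq_abs, sq_abs]
    ring
  obtain ⟨v, hv, hxv, hwv⟩ : ∃ v, ‖v‖ = 1 ∧ ⟪x.1, v⟫ = 0 ∧ w = ‖w‖ • v := by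
    by_cases hw0 : w = 0
    · obtain ⟨b, hb⟩ := exists_orthonormalBasis_zero_eq x
      refine ⟨b (Fin.last d), b.norm_eq_one _, ?_, by simp [hw0]⟩
      rw [← hb, b.inner_eq_zero]
      simpa [Fin.ext_iff] using hd.ne
    · have hw1 : ‖w‖ ≠ 0 := norm_ne_zero_iff.2 hw0
      exact ⟨‖w‖⁻¹ • w, by simp [norm_smul, hw1], by simp [inner_smul_right, hxw],
        by rw [smul_inv_smul₀ hw1]⟩
  have hip := haversine_mem_Icc x z
  rw [haversine, mem_Icc] at hip
  refine ⟨v, arccos (ip x z) / 2, hv, hxv, ⟨?_, ?_⟩, ?_⟩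
  · linarith [arccos_nonneg (ip x z), pi_pos]
  · linarith [arccos_le_pi (ip x z)]
  · rw [mul_div_cancel₀ _ two_ne_zero, cos_arccos (by linarith) (by linarith), sin_arccos, ← hw,
      ← hwv, add_sub_cancel]

lemma exists_abs_le_of_forall_closedBall_abs_le {r : ℝ} (hr : 0 ≤ r) : ∃ C, 0 < C ∧
    ∀ (d : ℕ) (P : Sph d → ℝ) (x : Sph d) (a M : ℝ), 0 < d → IsSphPoly d r P → 0 < a → a ≤ 1 →
      (∀ y ∈ Metric.closedBall x a, |P y| ≤ M) → ∀ y, |P y| ≤ C * M * a ^ (-(2 * r)) := by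
  obtain ⟨C, hC, h⟩ := exists_abs_le_of_eq_cos_pow_mul_eval_tan (2 * ⌊r⌋₊)
  refine ⟨C * 2 ^ (2 * ⌊r⌋₊), by positivity, fun d P x a M hd ⟨p, hp, hPp⟩ ha ha1 hPM y ↦ ?_⟩
  obtain ⟨v, θ, hv, hxv, hθ, hy⟩ := exists_eq_cos_smul_add_sin_smul hd x y
  obtain ⟨Q, hQ, hpQ⟩ := exists_eval_cos_two_mul_add_sin_two_mul (Nat.le_floor hp.le) x.1 v
  have hx : ‖x.1‖ = 1 := norm_eq_of_mem_sphere x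
  let arc (θ : ℝ) : Sph d := ⟨cos (2 * θ) • x.1 + sin (2 * θ) • v, by
    rw [mem_sphere_zero_iff_norm, ← sq_eq_sq₀ (norm_nonneg _) zero_le_one,
      norm_sq_smul_add_smul hx hv hxv, cos_sq_add_sin_sq, one_pow]⟩
  have hM : 0 ≤ M := (abs_nonneg _).trans (hPM x (Metric.mem_closedBall_self ha.le))
  obtain ⟨_, _, hP⟩ := exists_isCoordPoly_of_isSphPoly ⟨p, hp, hPp⟩
  have harc : Continuous arc := by fun_prop
  have hbound : |P (arc θ)| ≤ C * M * ((a / 2) ^ (2 * ⌊r⌋₊))⁻¹ := by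
    refine h (fun θ ↦ P (arc θ)) Q M (a / 2) (hP.continuous.comp harc) hQ (fun θ hθ ↦ ?_)
      (by positivity) (by linarith) (fun θ hθ ↦ hPM _ ?_) θ hθ
    · rw [hPp, ← hpQ θ hθ]
      rfl
    · rw [Metric.mem_closedBall, Subtype.dist_eq, dist_eq_norm,
        norm_cos_two_mul_smul_add_sin_two_mul_smul_sub hx hv hxv]
      linarith
  calc |P y| = |P (arc θ)| := by rw [show y = arc θ from Subtype.ext hy]
    _ ≤ C * 2 ^ (2 * ⌊r⌋₊) * M * a ^ (-((2 * ⌊r⌋₊ : ℕ) : ℝ)) := by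
        refine hbound.trans_eq ?_
        rw [rpow_neg ha.le, rpow_natCast, div_pow, inv_div]
        ring
    _ ≤ _ := by
        refine mul_le_mul_of_nonneg_left (rpow_le_rpow_of_exponent_ge ha ha1 ?_) (by positivity)
        push_cast
        linarith [Nat.floor_le hr]

/-! ### The dimension of the space of spherical polynomials -/

lemma dimPi_succ_succ (e m : ℕ) : dimPi (e + 1) (m + 1) =
    (2 * m + e + 1) * (m + e)! / (m ! * (e + 1)!) := by
  rw [dimPi, Gamma_nat_eq_factorial, show ((m + 1 : ℕ) : ℝ) + (e + 1 : ℕ) - 1 = (m + e : ℕ) + 1 by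
    push_cast; ring, Gamma_nat_eq_factorial, Nat.cast_add_one m, Gamma_nat_eq_factorial]
  push_cast
  ring

lemma pow_self_le_three_pow_mul_factorial (k : ℕ) : (k : ℝ) ^ k ≤ 3 ^ k * k ! := by
  have h := pow_div_factorial_le_exp (k : ℝ) k.cast_nonneg k
  rw [div_le_iff₀ (by positivity), ← exp_one_pow] at h
  exact h.trans (by gcongr; exact exp_one_lt_three.le)

lemma dimPi_succ_succ_le (e m : ℕ) :
    dimPi (e + 1) (m + 1) ≤ (3 * (2 * m + e + 1) / (e + 1)) ^ (e + 1) := by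
  have hasc : ((m + e)! : ℝ) ≤ m ! * (2 * m + e + 1) ^ e := by
    have : (m + e)! ≤ m ! * (2 * m + e + 1) ^ e := by
      rw [← Nat.factorial_mul_ascFactorial]
      gcongr
      exact (Nat.ascFactorial_le_pow_add m e).trans (Nat.pow_le_pow_left (by lia) e)
    exact_mod_cast this
  have hfact := pow_self_le_three_pow_mul_factorial (e + 1)
  push_cast at hfact
  rw [dimPi_succ_succ, div_pow, div_le_div_iff₀ (by positivity) (by positivity), mul_pow]
  calc (2 * m + e + 1 : ℝ) * (m + e)! * (e + 1) ^ (e + 1)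
      ≤ (2 * m + e + 1) * (m ! * (2 * m + e + 1) ^ e) * (3 ^ (e + 1) * (e + 1)!) := by gcongr
    _ = _ := by ring

lemma dimPi_pos {d N : ℕ} (hd : 0 < d) (hN : 0 < N) : 0 < dimPi d N := by
  obtain ⟨e, rfl⟩ := Nat.exists_eq_add_one.2 hd
  obtain ⟨m, rfl⟩ := Nat.exists_eq_add_one.2 hN
  rw [dimPi_succ_succ]
  positivity

lemma dimPi_two_mul_add_two_mul_le {d n : ℕ} (hd : 3 ≤ d) (hn : 0 < n) :
    dimPi d (2 * (d + 2) * n) ≤ (24 * (n : ℝ)) ^ d := by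
  obtain ⟨e, rfl⟩ := Nat.exists_eq_add_one.2 (Nat.zero_lt_of_lt hd)
  obtain ⟨m, hm⟩ : ∃ m, m + 1 = 2 * (e + 1 + 2) * n := Nat.exists_add_one_eq.2 (by positivity)
  have hle : (2 * m + e + 1 : ℝ) ≤ 8 * n * (e + 1) := by
    have : 2 * m + e + 1 ≤ 8 * n * (e + 1) := by nlinarith
    exact_mod_cast this
  rw [← hm]
  refine (dimPi_succ_succ_le e m).trans (pow_le_pow_left₀ (by positivity) ?_ _)
  rw [div_le_iff₀ (by positivity)]
  linarith

lemma rpow_neg_le_dimPi_rpow {d n : ℕ} {r : ℝ} (hd : 3 ≤ d) (hn : 0 < n) (hr : 0 ≤ r) :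
    (n : ℝ) ^ (-r) ≤ 24 ^ r * dimPi d (2 * (d + 2) * n) ^ (-(r / d)) := by
  have hd0 : (d : ℝ) ≠ 0 := by positivity
  calc (n : ℝ) ^ (-r) = 24 ^ r * ((24 * n : ℝ) ^ d) ^ (-(r / d)) := by
        rw [← rpow_natCast, ← rpow_mul (by positivity), mul_neg, mul_div_cancel₀ r hd0,
          mul_rpow (by positivity) n.cast_nonneg, ← mul_assoc, ← rpow_add (by positivity),
          add_neg_cancel, rpow_zero, one_mul]
    _ ≤ _ := by
        have hdim : 0 < dimPi d (2 * (d + 2) * n) := dimPi_pos (by lia) (by positivity)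
        refine mul_le_mul_of_nonneg_left (rpow_le_rpow_of_nonpos hdim
          (dimPi_two_mul_add_two_mul_le hd hn) (neg_nonpos.2 (by positivity))) (by positivity)

/-! ### The approximation error -/

lemma abs_sIntOn_le {X : Type*} [MeasurableSpace X] {ν : SignedMeasure X} {s : Set X} {f g : X → ℝ}
    (hs : MeasurableSet s) (hg : Integrable g ν.totalVariation) (hfg : ∀ y ∈ s, |f y| ≤ g y) :
    |sIntOn ν s f| ≤ ∫ y in s, g y ∂ν.totalVariation := by
  rw [SignedMeasure.totalVariation] at hg ⊢
  obtain ⟨hpos, hneg⟩ := integrable_add_measure.1 hg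
  have hfg' (μ : Measure X) : ∀ᵐ y ∂μ.restrict s, ‖f y‖ ≤ g y := ae_restrict_of_forall_mem hs hfg
  rw [Measure.restrict_add, integral_add_measure hpos.integrableOn hneg.integrableOn, sIntOn]
  exact (abs_sub _ _).trans (add_le_add
    (norm_integral_le_of_norm_le hpos.integrableOn (hfg' _))
    (norm_integral_le_of_norm_le hneg.integrableOn (hfg' _)))

lemma abs_sInt_mul_sub_sIntOn_mul_le {X : Type*} [TopologicalSpace X] [CompactSpace X]
    [MeasurableSpace X] [BorelSpace X] {ν : SignedMeasure X} {s : Set X} {f P Ψ g : X → ℝ}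
    (hs : MeasurableSet s) (hf : Continuous f) (hP : Continuous P) (hΨ : Continuous Ψ)
    (hg : Continuous g) (hin : ∀ y ∈ s, |(P y - f y) * Ψ y| ≤ g y)
    (hout : ∀ y ∉ s, |P y * Ψ y| ≤ g y) :
    |sInt ν (fun y ↦ P y * Ψ y) - sIntOn ν s (fun y ↦ f y * Ψ y)| ≤
      ∫ y, g y ∂ν.totalVariation := by
  have hsplit (μ : Measure X) [IsFiniteMeasure μ] :
      ∫ y, P y * Ψ y ∂μ - ∫ y in s, f y * Ψ y ∂μ =
        ∫ y in s, (P y - f y) * Ψ y ∂μ + ∫ y in sᶜ, P y * Ψ y ∂μ := by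
    have hPΨ : Integrable (fun y ↦ P y * Ψ y) μ := integrable_of_continuous (hP.mul hΨ)
    have hfΨ : Integrable (fun y ↦ f y * Ψ y) μ := integrable_of_continuous (hf.mul hΨ)
    simp_rw [sub_mul]
    rw [← integral_add_compl hs hPΨ, integral_sub hPΨ.integrableOn hfΨ.integrableOn]
    ring
  have hg' : Integrable g ν.totalVariation := integrable_of_continuous hg
  calc |sInt ν (fun y ↦ P y * Ψ y) - sIntOn ν s (fun y ↦ f y * Ψ y)|
      = |sIntOn ν s (fun y ↦ (P y - f y) * Ψ y) + sIntOn ν sᶜ (fun y ↦ P y * Ψ y)| := by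
        rw [sInt, sIntOn, sub_sub_sub_comm, hsplit, hsplit, sIntOn, sIntOn]
        ring_nf
    _ ≤ ∫ y in s, g y ∂ν.totalVariation + ∫ y in sᶜ, g y ∂ν.totalVariation :=
        (abs_add_le _ _).trans
          (add_le_add (abs_sIntOn_le hs hg' hin) (abs_sIntOn_le hs.compl hg' hout))
    _ = ∫ y, g y ∂ν.totalVariation := integral_add_compl hs hg'

lemma abs_le_supNorm {X : Type*} [TopologicalSpace X] [CompactSpace X] {f : X → ℝ}
    (hf : Continuous f) (y : X) : |f y| ≤ supNorm f :=
  le_csSup (isCompact_range hf.abs).bddAbove (mem_range_self y)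

section Approximation

variable {d n : ℕ} {r : ℝ}

lemma one_add_ip_div_two (x y : Sph d) : (1 + ip x y) / 2 = 1 - haversine x y := by
  rw [haversine]
  ring

lemma continuous_eval_haversine (p : ℝ[X]) (x : Sph d) :
    Continuous fun y ↦ p.eval (haversine x y) :=
  (isCoordPoly_eval_haversine x (EuclideanSpace.basisFun (Fin (d + 1)) ℝ) p).continuous

lemma continuous_PhiTilde_ip (hd : 3 ≤ d) (hr : 0 < r) (hn : 0 < n) (x : Sph d) :
    Continuous fun y ↦ PhiTilde d n r (ip x y) := by
  obtain ⟨M, hM⟩ : ∃ M, M + 1 = (d + 2) * n := Nat.exists_add_one_eq.2 (by positivity)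
  simp only [PhiTilde_ip hd hr hM]
  exact continuous_eval_haversine _ x

lemma continuous_Phi_ip (hd : 3 ≤ d) (hr : 0 < r) (hn : 0 < n) (x : Sph d) :
    Continuous fun y ↦ Phi d n r (ip x y) := by
  have hpow := continuous_eval_haversine ((1 - X : ℝ[X]) ^ n) x
  simp only [Phi, one_add_ip_div_two]
  simp only [eval_pow, eval_sub, eval_one, eval_X] at hpow
  exact (continuous_PhiTilde_ip hd hr hn x).mul hpow

lemma abs_Phi_ip (x y : Sph d) :
    |Phi d n r (ip x y)| = |PhiTilde d n r (ip x y)| * (1 - haversine x y) ^ n := by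
  rw [Phi, one_add_ip_div_two, abs_mul,
    abs_of_nonneg (pow_nonneg (sub_nonneg.2 (haversine_mem_Icc x y).2) n)]

lemma IsQuadrature.sInt_mul_Phi {ν : SignedMeasure (Sph d)} {P : Sph d → ℝ}
    (hQ : IsQuadrature d ((2 * (d + 2) * n : ℕ) : ℝ) ν) (hP : IsSphPoly d r P) (hd : 3 ≤ d)
    (hr : 0 < r) (hrn : r ≤ n) (x : Sph d) :
    sInt ν (fun y ↦ P y * Phi d n r (ip x y)) = P x := by
  have hn : 0 < n := Nat.cast_pos.1 (hr.trans_le hrn)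
  obtain ⟨M, hM⟩ : ∃ M, M + 1 = (d + 2) * n := Nat.exists_add_one_eq.2 (by positivity)
  obtain ⟨k, hk, hPk⟩ := exists_isCoordPoly_of_isSphPoly hP
  have hkn : k < n := Nat.cast_lt.1 (hk.trans_le hrn)
  let q : ℝ[X] := dampingPoly d n r * (1 - X) ^ n
  have hq : q.natDegree ≤ d * n + n := by
    refine natDegree_mul_le.trans (add_le_add (natDegree_dampingPoly_le d n r) ?_)
    compute_degree
  have hPq : IsCoordPoly (EuclideanSpace.basisFun (Fin (d + 1)) ℝ) M
      fun y ↦ P y * q.eval (haversine x y) :=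
    (hPk.mul (isCoordPoly_eval_haversine x _ q)).mono (by lia)
  have hPhi : (fun y ↦ P y * Phi d n r (ip x y)) =
      fun y ↦ P y * q.eval (haversine x y) * sphK d (M + 1) (ip x y) := by
    ext y
    rw [Phi, one_add_ip_div_two, PhiTilde_ip hd hr hM, sphK_succ_ip (by lia)]
    simp only [q, eval_mul, eval_pow, eval_sub, eval_one, eval_X]
    ring
  have hPhiPoly : IsSphPoly d ((2 * (d + 2) * n : ℕ) : ℝ)
      fun y ↦ P y * Phi d n r (ip x y) := by
    have hK := (isCoordPoly_eval_haversine x (EuclideanSpace.basisFun (Fin (d + 1)) ℝ)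
      (kernelPoly d M)).mono (natDegree_kernelPoly_le d M)
    simp only [← sphK_succ_ip (by lia : 2 ≤ d)] at hK
    rw [hPhi]
    exact (hPq.mul hK).isSphPoly (Nat.cast_lt.2 (by linarith))
  rw [hQ _ hPhiPoly, hPhi, hPq.integral_mul_sphK (by lia), haversine_self]
  simp [q, eval_zero_dampingPoly hd hr n]

/-- The radius `δ_n = √(16 r log n / n)` of the cap. -/
def capRadius (r : ℝ) (n : ℕ) : ℝ := √(16 * r * log n / n)

lemma one_sub_pow_le_rpow_neg {s u : ℝ} (hn : 0 < n) (hu : u ≤ 1) (h : s * log n ≤ n * u) :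
    (1 - u) ^ n ≤ (n : ℝ) ^ (-s) :=
  calc (1 - u) ^ n ≤ exp (-u) ^ n :=
        pow_le_pow_left₀ (sub_nonneg.2 hu) (one_sub_le_exp_neg u) n
    _ = exp (-(n * u)) := by rw [← exp_nat_mul, mul_neg]
    _ ≤ exp (log n * -s) := exp_le_exp.2 (by linarith)
    _ = (n : ℝ) ^ (-s) := (rpow_def_of_pos (Nat.cast_pos.2 hn) _).symm

lemma one_sub_haversine_pow_le {x y : Sph d} (hn : 0 < n) (hy : capRadius r n ≤ dist x y) :
    (1 - haversine x y) ^ n ≤ (n : ℝ) ^ (-(4 * r)) := by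
  have hsq := (sqrt_le_left dist_nonneg).1 hy
  rw [dist_sq_eq_four_mul_haversine, div_le_iff₀ (Nat.cast_pos.2 hn)] at hsq
  exact one_sub_pow_le_rpow_neg hn (haversine_mem_Icc x y).2 (by linarith)

lemma sqrt_div_le_capRadius {ρ : ℝ} (hn : 3 ≤ n) (hρ : ρ ≤ 16 * r) (hr : 0 ≤ r) :
    √(ρ / n) ≤ capRadius r n := by
  have hn3 : (3 : ℝ) ≤ n := by exact_mod_cast hn
  have hlog : 1 ≤ log n :=
    (le_log_iff_exp_le (by positivity)).2 (exp_one_lt_three.le.trans hn3)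
  refine sqrt_le_sqrt (div_le_div_of_nonneg_right (hρ.trans ?_) n.cast_nonneg)
  exact le_mul_of_one_le_right (by positivity) hlog

lemma sqrt_div_rpow_mul_rpow_le {ρ : ℝ} (hρ : 0 < ρ) (hn : 0 < n) (hr : 0 ≤ r) :
    √(ρ / n) ^ (-(3 * r)) * (n : ℝ) ^ (-(4 * r)) ≤ ρ ^ (-(3 * r / 2)) := by
  have hn1 : (1 : ℝ) ≤ n := by exact_mod_cast hn
  have hle : (n : ℝ) ^ (3 * r / 2) * (n : ℝ) ^ (-(4 * r)) ≤ 1 := by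
    rw [← rpow_add (by positivity)]
    exact rpow_le_one_of_one_le_of_nonpos hn1 (by linarith)
  calc √(ρ / n) ^ (-(3 * r)) * (n : ℝ) ^ (-(4 * r))
      = ρ ^ (-(3 * r / 2)) * ((n : ℝ) ^ (3 * r / 2) * (n : ℝ) ^ (-(4 * r))) := by
        rw [sqrt_eq_rpow, ← rpow_mul (by positivity), div_rpow hρ.le n.cast_nonneg,
          show 1 / 2 * -(3 * r) = -(3 * r / 2) by ring, rpow_neg n.cast_nonneg, div_inv_eq_mul,
          mul_assoc]
    _ ≤ ρ ^ (-(3 * r / 2)) := mul_le_of_le_one_right (by positivity) hle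

lemma exists_abs_mul_one_sub_haversine_pow_le (hr : 0 < r) :
    ∃ C, 0 < C ∧ ∀ (d n : ℕ) (x : Sph d) (P : Sph d → ℝ) (M : ℝ), 0 < d → 3 ≤ n →
      IsSphPoly d r P → (∀ y ∈ Metric.closedBall x (capRadius r n), |P y| ≤ M) →
        ∀ y ∉ Metric.closedBall x (capRadius r n),
          |P y| * (1 - haversine x y) ^ n ≤ C * M * dist x y ^ r := by
  obtain ⟨C, hC, hgrowth⟩ := exists_abs_le_of_forall_closedBall_abs_le hr.le
  set ρ := min (16 * r) 1
  have hρ : 0 < ρ := lt_min (by positivity) one_pos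
  refine ⟨C * ρ ^ (-(3 * r / 2)), by positivity, fun d n x P M hd hn hP hPM y hy ↦ ?_⟩
  have hn0 : (0 : ℝ) < n := by positivity
  rw [Metric.mem_closedBall', not_le] at hy
  set a := √(ρ / n)
  have ha : 0 < a := by positivity
  have ha_cap : a ≤ capRadius r n := sqrt_div_le_capRadius hn (min_le_left _ _) hr.le
  have ha_one : a ≤ 1 := by
    have hn1 : (1 : ℝ) ≤ n := by exact_mod_cast (by lia : 1 ≤ n)
    exact sqrt_le_one.2 ((div_le_one hn0).2 ((min_le_right _ _).trans hn1))
  have hM : 0 ≤ M :=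
    (abs_nonneg _).trans (hPM x (Metric.mem_closedBall_self (ha.le.trans ha_cap)))
  have hPy : |P y| ≤ C * M * a ^ (-(2 * r)) :=
    hgrowth d P x a M hd hP ha ha_one
      (fun z hz ↦ hPM z (Metric.closedBall_subset_closedBall ha_cap hz)) y
  have hdist : 1 ≤ a ^ (-r) * dist x y ^ r := by
    rw [rpow_neg ha.le, ← div_eq_inv_mul, one_le_div (by positivity)]
    exact rpow_le_rpow ha.le (ha_cap.trans hy.le) hr.le
  have hdamp := one_sub_haversine_pow_le (by lia) hy.le
  calc |P y| * (1 - haversine x y) ^ n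
      ≤ C * M * a ^ (-(2 * r)) * n ^ (-(4 * r)) :=
        mul_le_mul hPy hdamp (pow_nonneg (sub_nonneg.2 (haversine_mem_Icc x y).2) n)
          (by positivity)
    _ ≤ C * M * a ^ (-(2 * r)) * n ^ (-(4 * r)) * (a ^ (-r) * dist x y ^ r) :=
        le_mul_of_one_le_right (by positivity) hdist
    _ = C * M * dist x y ^ r * (a ^ (-(3 * r)) * n ^ (-(4 * r))) := by
        rw [show -(3 * r) = -(2 * r) + -r by ring, rpow_add ha]
        ring
    _ ≤ C * M * dist x y ^ r * ρ ^ (-(3 * r / 2)) :=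
        mul_le_mul_of_nonneg_left (sqrt_div_rpow_mul_rpow_le hρ (by lia) hr.le) (by positivity)
    _ = C * ρ ^ (-(3 * r / 2)) * M * dist x y ^ r := by ring

lemma dist_rpow_le_two_rpow (x y : Sph d) (hr : 0 ≤ r) : dist x y ^ r ≤ 2 ^ r := by
  refine rpow_le_rpow dist_nonneg ?_ hr
  rw [dist_eq_two_mul_sqrt_haversine]
  linarith [sqrt_le_one.2 (haversine_mem_Icc x y).2]

lemma abs_le_two_rpow_mul_supNorm_add {f P : Sph d → ℝ} {L : ℝ} {x y : Sph d}
    (hr : 0 ≤ r) (hf : Continuous f) (hL : 0 ≤ L) (hfP : |f y - P y| ≤ L * dist x y ^ r) :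
    |P y| ≤ 2 ^ r * (supNorm f + L) := by
  have hy := abs_le_supNorm hf y
  calc |P y| = |f y - (f y - P y)| := by rw [sub_sub_cancel]
    _ ≤ |f y| + |f y - P y| := abs_sub _ _
    _ ≤ 2 ^ r * supNorm f + L * 2 ^ r := by
        refine add_le_add (hy.trans ?_) (hfP.trans ?_)
        · exact le_mul_of_one_le_left ((abs_nonneg _).trans hy) (one_le_rpow one_le_two hr)
        · exact mul_le_mul_of_nonneg_left (dist_rpow_le_two_rpow x y hr) hL
    _ = 2 ^ r * (supNorm f + L) := by ring

lemma abs_sub_mul_Phi_le {f P : Sph d → ℝ} {L : ℝ} {x y : Sph d}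
    (hfP : |f y - P y| ≤ L * dist x y ^ r) :
    |(P y - f y) * Phi d n r (ip x y)| ≤ L * dist x y ^ r * |PhiTilde d n r (ip x y)| := by
  have hu := haversine_mem_Icc x y
  have hpow : (1 - haversine x y) ^ n ≤ 1 :=
    pow_le_one₀ (sub_nonneg.2 hu.2) (sub_le_self _ hu.1)
  rw [abs_mul, abs_sub_comm]
  refine mul_le_mul hfP ?_ (abs_nonneg _) ((abs_nonneg _).trans hfP)
  exact (abs_Phi_ip x y).trans_le (mul_le_of_le_one_right (abs_nonneg _) hpow)

lemma exists_abs_sub_sIntOn_le_mul_integral (hr : 0 < r) :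
    ∃ C, 0 < C ∧ ∀ (d n : ℕ) (x : Sph d) (f P : Sph d → ℝ) (L : ℝ) (ν : SignedMeasure (Sph d)),
      3 ≤ d → 3 ≤ n → r ≤ n → Continuous f → 0 ≤ L → IsSphPoly d r P →
      (∀ y ∈ Metric.closedBall x (capRadius r n), |f y - P y| ≤ L * dist x y ^ r) →
      IsQuadrature d ((2 * (d + 2) * n : ℕ) : ℝ) ν →
        |f x - sIntOn ν (Metric.closedBall x (capRadius r n)) (fun y ↦ f y * Phi d n r (ip x y))| ≤
          C * (supNorm f + L) *
            ∫ y, dist x y ^ r * |PhiTilde d n r (ip x y)| ∂ν.totalVariation := by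
  obtain ⟨C, hC, hout⟩ := exists_abs_mul_one_sub_haversine_pow_le hr
  refine ⟨1 + C * 2 ^ r, by positivity, fun d n x f P L ν hd hn hrn hf hL hP hfP hQ ↦ ?_⟩
  have hsup : 0 ≤ supNorm f := (abs_nonneg _).trans (abs_le_supNorm hf x)
  have hfx : f x = P x := by
    have := hfP x (Metric.mem_closedBall_self (sqrt_nonneg _))
    rw [dist_self, zero_rpow hr.ne', mul_zero] at this
    exact sub_eq_zero.1 (abs_nonpos_iff.1 this)
  have hPc : Continuous P := (exists_isCoordPoly_of_isSphPoly hP).choose_spec.2.continuous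
  have hPhiTilde := continuous_PhiTilde_ip hd hr (by lia : 0 < n) x
  have hdist : Continuous fun y ↦ dist x y ^ r :=
    (continuous_const.dist continuous_id).rpow_const fun _ ↦ Or.inr hr.le
  rw [hfx, ← hQ.sInt_mul_Phi hP hd hr hrn, ← integral_const_mul]
  refine abs_sInt_mul_sub_sIntOn_mul_le Metric.isClosed_closedBall.measurableSet hf hPc
    (continuous_Phi_ip hd hr (by lia) x) (by fun_prop) (fun y hy ↦ ?_) (fun y hy ↦ ?_)
  · refine (abs_sub_mul_Phi_le (hfP y hy)).trans ?_
    rw [mul_assoc]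
    refine mul_le_mul_of_nonneg_right ?_ (by positivity)
    nlinarith [mul_nonneg (mul_nonneg hC.le (rpow_nonneg zero_le_two r)) (add_nonneg hsup hL)]
  · have hPM (z) (hz : z ∈ Metric.closedBall x (capRadius r n)) :=
      abs_le_two_rpow_mul_supNorm_add hr.le hf hL (hfP z hz)
    have hbound := hout d n x P _ (by lia) hn hP hPM y hy
    rw [abs_mul, abs_Phi_ip, mul_left_comm, mul_comm |PhiTilde _ _ _ _|, ← mul_assoc]
    refine mul_le_mul_of_nonneg_right (hbound.trans ?_) (abs_nonneg _)
    refine mul_le_mul_of_nonneg_right ?_ (by positivity)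
    nlinarith [add_nonneg hsup hL]

end Approximation

theorem local_smooth_approx_cap_general :
    ∀ r : ℝ, 0 < r → ∃ C : ℝ, 0 < C ∧
      ∀ (d : ℕ) (x : Sph d) (δ : ℝ) (f : Sph d → ℝ) (L : ℝ) (n : ℕ)
        (ν : SignedMeasure (Sph d)) (c : ℝ),
        3 ≤ d → Continuous f → 0 ≤ L →
        (∃ P, IsSphPoly d r P ∧
          ∀ y ∈ Metric.closedBall x δ, |f y - P y| ≤ L * dist x y ^ r) →
        ((d : ℝ) + r + 1) ^ 2 ≤ (n : ℝ) * d →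
        Real.sqrt (16 * r * Real.log n / n) ≤ δ →
        IsQuadrature d ((2 * (d + 2) * n : ℕ) : ℝ) ν →
        IsMZ d ((2 * (d + 2) * n : ℕ) : ℝ) ν c →
        |f x - sIntOn ν (Metric.closedBall x (Real.sqrt (16 * r * Real.log n / n)))
              (fun y => f y * Phi d n r (ip x y))| ≤
          C * dimPi d (2 * (d + 2) * n) ^ (-(r / (d : ℝ))) * (supNorm f + L) * c := by
  intro r hr
  obtain ⟨A, hA, hmoment⟩ := exists_integral_dist_rpow_mul_abs_PhiTilde_le hr
  obtain ⟨B, hB, herror⟩ := exists_abs_sub_sIntOn_le_mul_integral hr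
  refine ⟨A * B * 24 ^ r, by positivity, ?_⟩
  rintro d x δ f L n ν c hd hf hL ⟨P, hP, hfP⟩ h hδ hQ hMZ
  obtain ⟨hdn, hrn⟩ := le_of_add_add_one_sq_le hr h
  have hn : 0 < n := by lia
  have hc : 0 ≤ c := hMZ.nonneg (Nat.cast_pos.2 (by positivity))
  have hsup : 0 ≤ supNorm f := (abs_nonneg _).trans (abs_le_supNorm hf x)
  calc _ ≤ B * (supNorm f + L) *
          ∫ y, dist x y ^ r * |PhiTilde d n r (ip x y)| ∂ν.totalVariation :=
        herror d n x f P L ν hd (hd.trans hdn) (by linarith) hf hL hP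
          (fun y hy ↦ hfP y (Metric.closedBall_subset_closedBall hδ hy)) hQ
    _ ≤ B * (supNorm f + L) * (A * c * (n : ℝ) ^ (-r)) :=
        mul_le_mul_of_nonneg_left (hmoment d n x ν c hd h hMZ) (by positivity)
    _ ≤ B * (supNorm f + L) * (A * c * (24 ^ r * dimPi d (2 * (d + 2) * n) ^ (-(r / d)))) := by
        gcongr
        exact rpow_neg_le_dimPi_rpow hd hn hr.le
    _ = _ := by ring

/-- Local approximation using only values of `f` on the cap `B(x, δ_n)` with
`δ_n = √(16 r log n / n)`: constant depending only on `r`. -/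
theorem local_smooth_approx_cap :
    ∀ r : ℝ, 0 < r → ∃ C : ℝ, 0 < C ∧
      ∀ (d : ℕ) (x : Sph d) (δ : ℝ) (f : Sph d → ℝ) (L : ℝ) (n : ℕ)
        (ν : SignedMeasure (Sph d)) (c : ℝ),
        3 ≤ d → 0 < δ → Continuous f → 0 ≤ L →
        (∃ P, IsSphPoly d r P ∧
          ∀ y ∈ Metric.closedBall x δ, |f y - P y| ≤ L * dist x y ^ r) →
        ((d : ℝ) + r + 1) ^ 2 ≤ (n : ℝ) * d →
        Real.sqrt (16 * r * Real.log n / n) ≤ δ →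
        IsQuadrature d ((2 * (d + 2) * n : ℕ) : ℝ) ν →
        IsMZ d ((2 * (d + 2) * n : ℕ) : ℝ) ν c →
        |f x - sIntOn ν (Metric.closedBall x (Real.sqrt (16 * r * Real.log n / n)))
              (fun y => f y * Phi d n r (ip x y))| ≤
          C * (d : ℝ) ^ ((1 : ℝ)/6) * dimPi d (2 * (d + 2) * n) ^ (-(r / (d : ℝ))) *
            (supNorm f + L) * c := by
  intro r hr
  obtain ⟨C, hC, hbound⟩ := local_smooth_approx_cap_general r hr
  refine ⟨C, hC, fun d x δ f L n ν c hd _ hf hL hP h hδn hQ hMZ ↦ ?_⟩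
  have herror := hbound d x δ f L n ν c hd hf hL hP h hδn hQ hMZ
  have hd_one : (1 : ℝ) ≤ (d : ℝ) ^ ((1 : ℝ) / 6) :=
    one_le_rpow (by exact_mod_cast (by lia : 1 ≤ d)) (by norm_num)
  calc _ ≤ C * dimPi d (2 * (d + 2) * n) ^ (-(r / (d : ℝ))) * (supNorm f + L) * c *
          (d : ℝ) ^ ((1 : ℝ) / 6) :=
        herror.trans (le_mul_of_one_le_right ((abs_nonneg _).trans herror) hd_one)
    _ = _ := by ring

end
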